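/- (Gravitational lensing with shear) Let N ≥ 2 be an even integer and set γ₀ = (2 − √2)/(2 + √2). Then for every real γ with γ₀ < γ < 1 there exist positive real numbers ε₁, …, ε_N and distinct points z₁, …, z_N ∈ ℂ such that the equation conj(z) = −γ·z + Σ_{j=1}^N ε_j/(z − z_j) has exactly 5N − 1 solutions z ∈ ℂ ∖ {z₁, …, z_N}. -/

import Mathlib

/-- The set of solutions `w ∈ ℂ ∖ {z₁, …, z_N}` of the gravitational lensing equation
`conj w = −γ·w + Σ_j ε_j/(w − z_j)`. -/
def lensSolutions (N : ℕ) (γ : ℝ) (ε : Fin N → ℝ) (z : Fin N → ℂ) : Set ℂ :=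
  {w | (∀ j, w ≠ z j) ∧
    (starRingEnd ℂ) w = -(γ : ℂ) * w + ∑ j, (ε j : ℂ) / (w - z j)}

section
open Filter Topology

noncomputable def rr {N : ℕ} (γ c : ℝ) (ε w : Fin N → ℝ) (z : ℂ) : ℂ :=
  γ * z + c + ∑ j, (ε j : ℂ) / (z - w j)

noncomputable def rd {N : ℕ} (γ : ℝ) (ε w : Fin N → ℝ) (z : ℂ) : ℂ :=
  γ - ∑ j, (ε j : ℂ) / (z - w j) ^ 2

lemma rr_hasStrictDerivAt {N : ℕ} (γ c : ℝ) (ε w : Fin N → ℝ) (z : ℂ) (hz : ∀ j, z ≠ w j) :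
    HasStrictDerivAt (rr γ c ε w) (rd γ ε w z) z := by
  have h1 : HasStrictDerivAt (fun z : ℂ => ∑ j, (ε j : ℂ) / (z - w j))
      (∑ j, -((ε j : ℂ) / (z - w j) ^ 2)) z := by
    refine HasStrictDerivAt.fun_sum fun j _ => ?_
    have hz' : z - w j ≠ 0 := sub_ne_zero.2 (hz j)
    have h2 : HasStrictDerivAt (fun z : ℂ => z - w j) 1 z :=
      (hasStrictDerivAt_id z).sub_const _
    have h3 := (hasStrictDerivAt_const z (ε j : ℂ)).div h2 hz'
    refine h3.congr_deriv ?_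
    simp [neg_div]
  have h4 : HasStrictDerivAt (fun z : ℂ => (γ : ℂ) * z + c) γ z := by
    simpa using ((hasStrictDerivAt_id z).const_mul (γ : ℂ)).add_const (c : ℂ)
  have h5 := h4.add h1
  refine h5.congr_deriv ?_
  simp [rd, sub_eq_add_neg]

lemma rr_conj {N : ℕ} (γ c : ℝ) (ε w : Fin N → ℝ) (z : ℂ) :
    rr γ c ε w (starRingEnd ℂ z) = starRingEnd ℂ (rr γ c ε w z) := by
  simp [rr, map_sum]

lemma rd_conj {N : ℕ} (γ : ℝ) (ε w : Fin N → ℝ) (z : ℂ) :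
    rd γ ε w (starRingEnd ℂ z) = starRingEnd ℂ (rd γ ε w z) := by
  simp [rd, map_sum]

lemma rr_iter_conj {N : ℕ} (γ c : ℝ) (ε w : Fin N → ℝ) (k : ℕ) (z : ℂ) :
    (rr γ c ε w)^[k] (starRingEnd ℂ z) = starRingEnd ℂ ((rr γ c ε w)^[k] z) := by
  induction k generalizing z with
  | zero => simp
  | succ k ih => rw [Function.iterate_succ_apply, Function.iterate_succ_apply, rr_conj, ih]

lemma rr_iter_real {N : ℕ} (γ c : ℝ) (ε w : Fin N → ℝ) (k : ℕ) (z : ℂ) (hz : z.im = 0) :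
    ((rr γ c ε w)^[k] z).im = 0 := by
  have h := rr_iter_conj γ c ε w k z
  rw [Complex.conj_eq_iff_im.2 hz] at h
  exact Complex.conj_eq_iff_im.1 h.symm

lemma rr_real {N : ℕ} (γ c : ℝ) (ε w : Fin N → ℝ) (z : ℂ) (hz : z.im = 0) :
    (rr γ c ε w z).im = 0 := rr_iter_real γ c ε w 1 z hz

lemma ne_node_of_im {N : ℕ} (w : Fin N → ℝ) (z : ℂ) (hz : z.im ≠ 0) (j : Fin N) : z ≠ w j := by
  rintro rfl; simp at hz

lemma rr_large {N : ℕ} (γ c : ℝ) (ε w : Fin N → ℝ) (hγ : 0 < γ) :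
    Tendsto (rr γ c ε w) (Bornology.cobounded ℂ) (Bornology.cobounded ℂ) := by
  have h1 : Tendsto (fun z : ℂ => (γ : ℂ) * z) (Bornology.cobounded ℂ) (Bornology.cobounded ℂ) :=
    Filter.tendsto_mul_left_cobounded (by exact_mod_cast hγ.ne')
  have h2 : Tendsto (fun z : ℂ => (c : ℂ) + ∑ j, (ε j : ℂ) / (z - w j))
      (Bornology.cobounded ℂ) (𝓝 (c + ∑ j : Fin N, (0:ℂ))) := by
    refine tendsto_const_nhds.add (tendsto_finsetSum _ fun j _ => ?_)
    have h3 : Tendsto (fun z : ℂ => z - w j) (Bornology.cobounded ℂ) (Bornology.cobounded ℂ) := by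
      simp [sub_eq_add_neg]
    have := (tendsto_inv₀_cobounded.comp h3).const_mul (ε j : ℂ)
    simpa [div_eq_mul_inv] using this
  rw [← tendsto_norm_atTop_iff_cobounded] at h1 ⊢
  have h4 := h2.norm
  refine tendsto_atTop_mono (fun z => ?_) (h1.atTop_add h4.neg)
  have : rr γ c ε w z - ((c : ℂ) + ∑ j, (ε j : ℂ) / (z - w j)) = γ * z := by simp [rr]
  rw [← this]
  have := norm_sub_le (rr γ c ε w z) ((c : ℂ) + ∑ j, (ε j : ℂ) / (z - w j))
  linarith
end

section
open Filter Topology Polynomial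

noncomputable def Pn {N : ℕ} (w : Fin N → ℝ) : ℂ[X] := ∏ j, (X - C (w j : ℂ))
noncomputable def Rn {N : ℕ} (ε w : Fin N → ℝ) : ℂ[X] :=
  ∑ j, C (ε j : ℂ) * ∏ i ∈ Finset.univ.erase j, (X - C (w i : ℂ))

lemma Pn_eval {N : ℕ} (w : Fin N → ℝ) (z : ℂ) : (Pn w).eval z = ∏ j, (z - w j) := by
  simp [Pn, eval_prod]

lemma Pn_ne {N : ℕ} (w : Fin N → ℝ) (z : ℂ) (hz : ∀ j, z ≠ w j) : (Pn w).eval z ≠ 0 := by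
  rw [Pn_eval]
  exact Finset.prod_ne_zero_iff.2 fun j _ => sub_ne_zero.2 (hz j)

lemma Pn_node {N : ℕ} (w : Fin N → ℝ) (j : Fin N) : (Pn w).eval (w j : ℂ) = 0 := by
  rw [Pn_eval]
  exact Finset.prod_eq_zero (Finset.mem_univ j) (by simp)

lemma Rn_eval {N : ℕ} (ε w : Fin N → ℝ) (z : ℂ) :
    (Rn ε w).eval z = ∑ j, (ε j : ℂ) * ∏ i ∈ Finset.univ.erase j, (z - w i) := by
  simp [Rn, eval_finsetSum, eval_prod]

lemma Rn_node {N : ℕ} (ε w : Fin N → ℝ) (hε : ∀ j, 0 < ε j) (hw : Function.Injective w)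
    (j : Fin N) : (Rn ε w).eval (w j : ℂ) ≠ 0 := by
  rw [Rn_eval, Finset.sum_eq_single j]
  · refine mul_ne_zero (by exact_mod_cast (hε j).ne') (Finset.prod_ne_zero_iff.2 fun i hi => ?_)
    rw [sub_ne_zero]
    intro h
    exact (Finset.ne_of_mem_erase hi) (hw (by exact_mod_cast h)).symm
  · intro b _ hb
    rw [Finset.prod_eq_zero (i := j) (by simp [hb.symm]) (by simp), mul_zero]
  · simp

lemma sum_mul_prod {N : ℕ} (ε : Fin N → ℂ) (y : Fin N → ℂ) (hy : ∀ j, y j ≠ 0) :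
    (∑ j, ε j / y j) * ∏ j, y j = ∑ j, ε j * ∏ i ∈ Finset.univ.erase j, y i := by
  rw [Finset.sum_mul]
  refine Finset.sum_congr rfl fun j _ => ?_
  rw [← Finset.mul_prod_erase Finset.univ y (Finset.mem_univ j)]
  field_simp [hy j]

noncomputable def Qn {N : ℕ} (γ c : ℝ) (ε w : Fin N → ℝ) : ℂ[X] :=
  (C (γ : ℂ) * X + C (c : ℂ)) * Pn w + Rn ε w

lemma Qn_eval {N : ℕ} (γ c : ℝ) (ε w : Fin N → ℝ) (z : ℂ) (hz : ∀ j, z ≠ w j) :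
    (Qn γ c ε w).eval z = rr γ c ε w z * (Pn w).eval z := by
  have := sum_mul_prod (fun j => (ε j : ℂ)) (fun j => z - w j) (fun j => sub_ne_zero.2 (hz j))
  simp only [Qn, eval_add, eval_mul, eval_C, eval_X, Rn_eval, ← this, Pn_eval, rr]
  ring

lemma Qn_node {N : ℕ} (γ c : ℝ) (ε w : Fin N → ℝ) (hε : ∀ j, 0 < ε j)
    (hw : Function.Injective w) (j : Fin N) : (Qn γ c ε w).eval (w j : ℂ) ≠ 0 := by
  simp only [Qn, eval_add, eval_mul, Pn_node, mul_zero, zero_add]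
  exact Rn_node ε w hε hw j

lemma fiber_finite {N : ℕ} (hN : 0 < N) (γ c : ℝ) (ε w : Fin N → ℝ) (hε : ∀ j, 0 < ε j)
    (hw : Function.Injective w) (t : ℂ) :
    {z : ℂ | (∀ j, z ≠ w j) ∧ rr γ c ε w z = t}.Finite := by
  set G : ℂ[X] := Qn γ c ε w - C t * Pn w
  have hG : G ≠ 0 := by
    intro h
    have := congrArg (eval (w ⟨0, hN⟩ : ℂ)) h
    simp only [G, eval_sub, eval_mul, Pn_node, mul_zero, sub_zero, eval_zero] at this
    exact Qn_node γ c ε w hε hw _ this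
  refine (G.roots.toFinset.finite_toSet).subset ?_
  rintro z ⟨hz, hr⟩
  simp only [Finset.mem_coe, Multiset.mem_toFinset, mem_roots hG, IsRoot.def, G, eval_sub,
    eval_mul, eval_C, Qn_eval γ c ε w z hz, hr, sub_self]

lemma cycle_finite {N : ℕ} (hN : 0 < N) (γ c : ℝ) (hγ : 0 < γ) (ε w : Fin N → ℝ)
    (hε : ∀ j, 0 < ε j) (hw : Function.Injective w) :
    {z : ℂ | z.im ≠ 0 ∧ rr γ c ε w z = starRingEnd ℂ z}.Finite := by
  set P := Pn w
  set Q := Qn γ c ε w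
  set G : ℂ[X] := (C (γ : ℂ) * Q + (C (c : ℂ) - X) * P) * (∏ j, (Q - C (w j : ℂ) * P)) +
    P ^ 2 * ∑ j, C (ε j : ℂ) * ∏ i ∈ Finset.univ.erase j, (Q - C (w i : ℂ) * P)
  have hG : G ≠ 0 := by
    intro h
    have := congrArg (eval (w ⟨0, hN⟩ : ℂ)) h
    have hq : eval (w ⟨0, hN⟩ : ℂ) Q ≠ 0 := Qn_node γ c ε w hε hw _
    have hp : eval (w ⟨0, hN⟩ : ℂ) P = 0 := Pn_node w _
    simp [G, eval_prod, hp, hq, hγ.ne'] at this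
  refine (G.roots.toFinset.finite_toSet).subset ?_
  rintro z ⟨hz, hr⟩
  have hzn := ne_node_of_im w z hz
  have hzc : ∀ j, starRingEnd ℂ z ≠ w j := ne_node_of_im w _ (by simpa using hz)
  have hQ : eval z Q = starRingEnd ℂ z * eval z P := by rw [← hr]; exact Qn_eval γ c ε w z hzn
  have hP : eval z P ≠ 0 := Pn_ne w z hzn
  have h2 : rr γ c ε w (starRingEnd ℂ z) = z := by rw [rr_conj, hr, Complex.conj_conj]
  simp only [Finset.mem_coe, Multiset.mem_toFinset, mem_roots hG, IsRoot.def]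
  have e1 : ∀ j, starRingEnd ℂ z * eval z P - w j * eval z P = (starRingEnd ℂ z - w j) * eval z P :=
    fun j => by ring
  simp only [G, eval_add, eval_mul, eval_prod, eval_finsetSum, eval_C, eval_X, eval_sub,
    eval_pow, hQ]
  have h3 := sum_mul_prod (fun j => (ε j : ℂ) )
    (fun j => starRingEnd ℂ z * eval z P - w j * eval z P) (fun j => by
      rw [e1]; exact mul_ne_zero (sub_ne_zero.2 (hzc j)) hP)
  rw [← h3]
  have h4 : (∑ j, (ε j : ℂ) / (starRingEnd ℂ z * eval z P - w j * eval z P)) * eval z P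
     = ∑ j, (ε j : ℂ) / (starRingEnd ℂ z - w j) := by
    rw [Finset.sum_mul]
    refine Finset.sum_congr rfl fun j _ => ?_
    rw [e1]
    have := sub_ne_zero.2 (hzc j)
    field_simp
  have h5 : ∑ j, (ε j : ℂ) / (starRingEnd ℂ z - w j) = z - γ * starRingEnd ℂ z - c := by
    have : γ * starRingEnd ℂ z + c + ∑ j, (ε j : ℂ) / (starRingEnd ℂ z - w j) = z := h2
    linear_combination this
  linear_combination (eval z P * ∏ j, (starRingEnd ℂ z * eval z P - w j * eval z P)) *
    (h4.trans h5)
end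

section
open Filter Topology Polynomial

lemma preim_compact {N : ℕ} (γ c : ℝ) (hγ : 0 < γ) (ε w : Fin N → ℝ)
    (hε : ∀ j, 0 < ε j) (hw : Function.Injective w) (K : Set ℂ) (hK : IsCompact K)
    (hKr : ∀ t ∈ K, t.im ≠ 0) : IsCompact {z : ℂ | rr γ c ε w z ∈ K} := by
  have heq : {z : ℂ | rr γ c ε w z ∈ K} =
      Prod.snd '' {p : K × ℂ | (Qn γ c ε w).eval p.2 = (p.1 : ℂ) * (Pn w).eval p.2} := by
    ext z
    simp only [Set.mem_ofPred_eq, Set.mem_image, Prod.exists, exists_eq_right]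
    constructor
    · intro h
      have hz : z.im ≠ 0 := fun h0 => hKr _ h (rr_real γ c ε w z h0)
      exact ⟨⟨_, h⟩, Qn_eval γ c ε w z (ne_node_of_im w z hz)⟩
    · rintro ⟨t, h1⟩
      have hz : ∀ j, z ≠ w j := by
        rintro j rfl
        rw [Pn_node, mul_zero] at h1
        exact Qn_node γ c ε w hε hw j h1
      rw [Qn_eval γ c ε w z hz] at h1
      rw [mul_right_cancel₀ (Pn_ne w z hz) h1]
      exact t.2
  have hcl : IsClosed {z : ℂ | rr γ c ε w z ∈ K} := by
    rw [heq]
    have : CompactSpace K := isCompact_iff_compactSpace.1 hK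
    refine isClosedMap_snd_of_compactSpace _ ?_
    refine isClosed_eq ?_ ?_
    · exact (Qn γ c ε w).continuous.comp continuous_snd
    · exact (continuous_subtype_val.comp continuous_fst).mul
        ((Pn w).continuous.comp continuous_snd)
  refine Metric.isCompact_of_isClosed_isBounded hcl ?_
  have hb := (rr_large γ c ε w hγ) (Bornology.IsBounded.compl hK.isBounded)
  rw [← Bornology.isCobounded_compl_iff]
  exact hb

lemma rr_localHomeo {N : ℕ} (γ c : ℝ) (ε w : Fin N → ℝ) :
    IsLocalHomeomorphOn (rr γ c ε w) {z | (∀ j, z ≠ w j) ∧ rd γ ε w z ≠ 0} := by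
  rintro z ⟨hz, hd⟩
  exact ⟨_, ((rr_hasStrictDerivAt γ c ε w z hz).hasStrictFDerivAt_equiv
      hd).mem_toOpenPartialHomeomorph_source, by simp⟩

lemma lift_exists {N : ℕ} (hN : 0 < N) (γ c : ℝ) (hγ : 0 < γ) (ε w : Fin N → ℝ)
    (hε : ∀ j, 0 < ε j) (hw : Function.Injective w) (a : ℂ) (δ : ℝ) (hδ : 0 < δ)
    (ψ : ℂ → ℂ) (hψ : DifferentiableOn ℂ ψ (Metric.ball a δ))
    (him : ∀ u ∈ Metric.ball a δ, (ψ u).im ≠ 0)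
    (hcr : ∀ u ∈ Metric.ball a δ, ∀ z, rr γ c ε w z = ψ u → rd γ ε w z ≠ 0)
    (e : ℂ) (he : rr γ c ε w e = ψ a) :
    ∃ χ : ℂ → ℂ, DifferentiableOn ℂ χ (Metric.ball a δ) ∧ χ a = e ∧
      ∀ u ∈ Metric.ball a δ, rr γ c ε w (χ u) = ψ u := by
  set r := rr γ c ε w with hr
  let E := {z : ℂ // (r z).im ≠ 0}
  let Y := {t : ℂ // t.im ≠ 0}
  have hEn : ∀ z : E, ∀ j, (z : ℂ) ≠ w j := fun z =>
    ne_node_of_im w z fun h0 => z.2 (rr_real γ c ε w z h0)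
  have hc : ∀ z : E, ContinuousAt r z := fun z =>
    (rr_hasStrictDerivAt γ c ε w z (hEn z)).hasDerivAt.continuousAt
  let f : E → Y := fun z => ⟨r z, z.2⟩
  have hfc : Continuous f := by
    refine Continuous.subtype_mk ?_ _
    rw [continuous_iff_continuousAt]
    exact fun z => (hc z).comp continuous_subtype_val.continuousAt
  have hYo : IsOpen {t : ℂ | t.im ≠ 0} := isOpen_ne_fun Complex.continuous_im continuous_const
  have hEo : IsOpen {z : ℂ | (r z).im ≠ 0} := by
    rw [isOpen_iff_mem_nhds]
    intro z hz
    exact (hc ⟨z, hz⟩).preimage_mem_nhds (hYo.mem_nhds hz)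
  have : LocallyCompactSpace Y := hYo.locallyCompactSpace
  have hcl : IsClosedMap f := by
    refine IsProperMap.isClosedMap ?_
    rw [isProperMap_iff_isCompact_preimage]
    refine ⟨hfc, fun K hK => ?_⟩
    have h1 := preim_compact γ c hγ ε w hε hw (Subtype.val '' K) (hK.image continuous_subtype_val)
      (by rintro _ ⟨t, _, rfl⟩; exact t.2)
    rw [Subtype.isCompact_iff]
    convert h1 using 1
    ext z
    constructor
    · rintro ⟨z, hz, rfl⟩
      exact ⟨_, hz, rfl⟩
    · rintro ⟨t, ht, h⟩
      have hz : (r z).im ≠ 0 := by rw [hr, ← h]; exact t.2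
      refine ⟨⟨z, hz⟩, ?_, rfl⟩
      have : f ⟨z, hz⟩ = t := Subtype.ext h.symm
      simpa [this] using ht
  let s : Set Y := {t | ∀ z, r z = t → rd γ ε w z ≠ 0}
  have hcov : IsCoveringMapOn f s := by
    refine hcl.isCoveringMapOn_of_isLocalHomeomorphOn (fun t _ => ?_) ?_
    · refine Set.Finite.of_finite_image (f := Subtype.val) ?_ Subtype.val_injective.injOn
      refine (fiber_finite hN γ c ε w hε hw t).subset ?_
      rintro _ ⟨z, hz, rfl⟩
      exact ⟨hEn z, congrArg Subtype.val hz⟩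
    · have h1 : IsLocalHomeomorphOn (Subtype.val : Y → ℂ) (f '' (f ⁻¹' s)) :=
        (hYo.isOpenEmbedding_subtypeVal.isLocalHomeomorph).isLocalHomeomorphOn
      refine IsLocalHomeomorphOn.of_comp_left (g := (Subtype.val : Y → ℂ)) ?_ h1
        (fun x _ => hfc.continuousAt)
      have h2 : IsLocalHomeomorphOn (Subtype.val : E → ℂ) (f ⁻¹' s) :=
        (hEo.isOpenEmbedding_subtypeVal.isLocalHomeomorph).isLocalHomeomorphOn
      refine IsLocalHomeomorphOn.comp (g := r) (rr_localHomeo γ c ε w) h2 ?_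
      intro z hz
      exact ⟨hEn z, hz z rfl⟩
  have : ContractibleSpace (Metric.ball a δ) :=
    (convex_ball a δ).contractibleSpace ⟨a, Metric.mem_ball_self hδ⟩
  have : LocallyPathConnectedSpace (Metric.ball a δ) := Metric.isOpen_ball.locallyPathConnectedSpace
  have : SimplyConnectedSpace (Metric.ball a δ) := SimplyConnectedSpace.ofContractible _
  let g : C(Metric.ball a δ, Y) := ⟨fun u => ⟨ψ u, him u u.2⟩, by
    refine Continuous.subtype_mk ?_ _
    exact continuousOn_iff_continuous_domRestrict.1 hψ.continuousOn⟩
  have hain : a ∈ Metric.ball a δ := Metric.mem_ball_self hδ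
  obtain ⟨F, ⟨hF1, hF2⟩, -⟩ := hcov.existsUnique_continuousMap_lifts g (a₀ := ⟨a, hain⟩)
    (e₀ := ⟨e, by rw [he]; exact him a hain⟩) (Subtype.ext he)
    (fun u z hz => hcr u u.2 z hz)
  classical
  let χ : ℂ → ℂ := fun u => if h : u ∈ Metric.ball a δ then (F ⟨u, h⟩ : ℂ) else 0
  have hχ : ∀ u (h : u ∈ Metric.ball a δ), χ u = F ⟨u, h⟩ := fun u h => dif_pos h
  have hχr : ∀ u ∈ Metric.ball a δ, r (χ u) = ψ u := by
    intro u h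
    rw [hχ u h]
    exact congrArg Subtype.val (congrFun hF2 ⟨u, h⟩)
  refine ⟨χ, ?_, ?_, hχr⟩
  · have hcont : ContinuousOn χ (Metric.ball a δ) := by
      rw [continuousOn_iff_continuous_domRestrict]
      convert continuous_subtype_val.comp F.continuous using 1
      ext u
      simp [hχ u u.2]
    intro u hu
    have hχn : ∀ j, χ u ≠ w j := by rw [hχ u hu]; exact hEn _
    have hsd := rr_hasStrictDerivAt γ c ε w (χ u) hχn
    have hne := hcr u hu (χ u) (hχr u hu)
    have h1 := hsd.to_localInverse hne
    have h2 := (hsd.hasStrictFDerivAt_equiv hne).eventually_left_inverse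
    have hca : ContinuousAt χ u := hcont.continuousAt (Metric.isOpen_ball.mem_nhds hu)
    have h3 := hca.eventually h2
    have h4 : DifferentiableAt ℂ (hsd.localInverse _ _ _ hne) (ψ u) := by
      rw [← hχr u hu]; exact h1.hasDerivAt.differentiableAt
    have h5 : DifferentiableAt ℂ ψ u := hψ.differentiableAt (Metric.isOpen_ball.mem_nhds hu)
    have h6 := h4.comp u h5
    refine (h6.congr_of_eventuallyEq ?_).differentiableWithinAt
    filter_upwards [h3, Metric.isOpen_ball.mem_nhds hu] with v hv hvb
    rw [← hv]
    simp only [Function.comp_apply, ← hχr v hvb]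
    rfl
  · rw [hχ a hain, hF1]
end

section
open Filter Topology Polynomial

lemma basin_crit {N : ℕ} (hN : 0 < N) (γ c : ℝ) (hγ : 0 < γ) (ε w : Fin N → ℝ)
    (hε : ∀ j, 0 < ε j) (hw : Function.Injective w) (a : ℂ) (δ : ℝ) (hδ : 0 < δ)
    (ha : rr γ c ε w a = starRingEnd ℂ a) (hd : ‖rd γ ε w a‖ < 1)
    (hD : ∀ z ∈ Metric.ball a δ, 0 < z.im)
    (hmap : ∀ z ∈ Metric.ball a δ, starRingEnd ℂ (rr γ c ε w z) ∈ Metric.ball a δ) :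
    ∃ z : ℂ, rd γ ε w z = 0 ∧ 0 < z.im ∧ ∃ k, (rr γ c ε w)^[k] z ∈ Metric.ball a δ ∨
      starRingEnd ℂ ((rr γ c ε w)^[k] z) ∈ Metric.ball a δ := by
  set r := rr γ c ε w with hr
  set D := Metric.ball a δ with hDdef
  have hain : a ∈ D := Metric.mem_ball_self hδ
  have hDd : ∀ z ∈ D, starRingEnd ℂ z ∉ D := by
    intro z hz h
    have := hD _ hz
    have := hD _ h
    simp at this; linarith
  suffices h : ∃ z : ℂ, rd γ ε w z = 0 ∧ ∃ k, r^[k] z ∈ D ∨ starRingEnd ℂ (r^[k] z) ∈ D by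
    obtain ⟨z, hz, k, hk⟩ := h
    rcases lt_trichotomy z.im 0 with h0 | h0 | h0
    · refine ⟨starRingEnd ℂ z, by rw [rd_conj, hz, map_zero], by simpa using h0, k, ?_⟩
      rw [hr, rr_iter_conj, Complex.conj_conj, ← hr]
      exact hk.symm
    · exfalso
      have h1 := rr_iter_real γ c ε w k z h0
      rcases hk with hk | hk
      · have := hD _ hk; rw [← hr] at h1; linarith
      · have := hD _ hk; rw [← hr] at h1; simp [h1] at this
    · exact ⟨z, hz, h0, k, hk⟩
  by_contra hno
  push Not at hno
  -- forward invariance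
  have hinv : ∀ k, ∀ z, z ∈ D → r^[2 * k] z ∈ D := by
    intro k
    induction k with
    | zero => intro z hz; simpa using hz
    | succ k ih =>
      intro z hz
      rw [show 2 * (k + 1) = 2 * k + 1 + 1 by ring, Function.iterate_succ_apply,
        Function.iterate_succ_apply]
      refine ih _ ?_
      have h1 := hmap _ (hmap z hz)
      rw [hr, rr_conj, Complex.conj_conj] at h1
      exact h1
  have hlam : rd γ ε w a ≠ 0 := fun h => (hno a h 0).1 (by simpa using hain)
  have key : ∀ k, ∃ ψ : ℂ → ℂ, DifferentiableOn ℂ ψ D ∧ (∀ u ∈ D, r^[k] (ψ u) = u) ∧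
      (ψ a = if Even k then a else starRingEnd ℂ a) ∧
      ‖deriv ψ a‖ * ‖rd γ ε w a‖ ^ k = 1 := by
    intro k
    induction k with
    | zero => exact ⟨id, differentiableOn_id, by simp, by simp, by simp⟩
    | succ k ih =>
      obtain ⟨ψ, h1, h2, h3, h4⟩ := ih
      obtain ⟨χ, g1, g2, g3⟩ := lift_exists hN γ c hγ ε w hε hw a δ hδ ψ h1
        (by
          intro u hu h0
          have := rr_iter_real γ c ε w k _ h0
          rw [← hr, h2 u hu] at this
          exact (hD u hu).ne' this)
        (by
          intro u hu z hz h0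
          refine (hno z h0 (k + 1)).1 ?_
          rw [Function.iterate_succ_apply, hr, hz, ← hr, h2 u hu]
          exact hu) (if Even (k + 1) then a else starRingEnd ℂ a)
        (by
          rw [h3]
          by_cases hk : Even k
          · have : ¬ Even (k + 1) := by simpa [Nat.even_add_one] using hk
            simp only [hk, this, if_true, if_false]
            rw [rr_conj, ← hr, ha, Complex.conj_conj]
          · have : Even (k + 1) := by simpa [Nat.even_add_one] using hk
            simp only [hk, this, if_true, if_false]
            exact ha)
      refine ⟨χ, g1, ?_, g2, ?_⟩
      · intro u hu
        rw [Function.iterate_succ_apply, hr, g3 u hu, ← hr, h2 u hu]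
      · have hD' : D ∈ 𝓝 a := Metric.isOpen_ball.mem_nhds hain
        have e1 : HasDerivAt χ (deriv χ a) a := (g1.differentiableAt hD').hasDerivAt
        have him : (χ a).im ≠ 0 := by
          have := hD a hain
          rw [g2]; split_ifs <;> simp [this.ne']
        have e2 := (rr_hasStrictDerivAt γ c ε w (χ a) (ne_node_of_im w _ him)).hasDerivAt
        have e3 := e2.comp a e1
        have e4 : deriv ψ a = rd γ ε w (χ a) * deriv χ a := by
          rw [← e3.deriv]
          refine Filter.EventuallyEq.deriv_eq ?_
          filter_upwards [hD'] with u hu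
          exact (g3 u hu).symm
        have e5 : ‖rd γ ε w (χ a)‖ = ‖rd γ ε w a‖ := by
          rw [g2]; split_ifs
          · rfl
          · rw [rd_conj, Complex.norm_conj]
        rw [e4, norm_mul, e5] at h4
        rw [← h4]; ring
  -- Cauchy bound
  set b := starRingEnd ℂ a with hb
  have hab : a - b ≠ 0 := by
    intro h
    have h1 := hD a hain
    have h2 := congrArg Complex.im h
    simp [hb] at h2; linarith
  have bound : ∀ k, ‖deriv (Classical.choose (key (2 * k))) a‖ ≤ ‖a - b‖ ^ 2 * ((1 / δ) / (δ / 2)) := by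
    intro k
    obtain ⟨h1, h2, h3, h4⟩ := Classical.choose_spec (key (2 * k))
    set ψ := Classical.choose (key (2 * k))
    have hfar : ∀ u ∈ D, δ ≤ ‖ψ u - b‖ := by
      intro u hu
      by_contra hlt
      push Not at hlt
      have h5 : starRingEnd ℂ (ψ u) ∈ D := by
        rw [hDdef, mem_ball_iff_norm, ← Complex.norm_conj]
        simpa [hb] using hlt
      have h6 := hinv k _ h5
      rw [hr, rr_iter_conj, ← hr, h2 u hu] at h6
      exact hDd u hu h6
    have hne : ∀ u ∈ D, ψ u - b ≠ 0 := fun u hu => norm_pos_iff.1 (hδ.trans_le (hfar u hu))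
    have hgd : DifferentiableOn ℂ (fun u => (ψ u - b)⁻¹) D := (h1.sub_const b).inv hne
    have hsub : Metric.closedBall a (δ / 2) ⊆ D := Metric.closedBall_subset_ball (by linarith)
    have hc := Complex.norm_deriv_le_of_forall_mem_sphere_norm_le (f := fun u => (ψ u - b)⁻¹)
      (c := a) (R := δ / 2) (C := 1 / δ) (by positivity)
      (by
        refine DifferentiableOn.diffContOnCl ?_
        refine hgd.mono ?_
        rw [closure_ball _ (by positivity)]
        exact hsub)
      (by
        intro z hz
        have hzD : z ∈ D := hsub (Metric.sphere_subset_closedBall hz)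
        rw [norm_inv, inv_eq_one_div]
        exact one_div_le_one_div_of_le hδ (hfar z hzD))
    have hψd : HasDerivAt ψ (deriv ψ a) a :=
      (h1.differentiableAt (Metric.isOpen_ball.mem_nhds hain)).hasDerivAt
    have hgd' := (hψd.sub_const b).fun_inv (hne a hain)
    rw [hgd'.deriv, h3] at hc
    simp only [even_two, Even.mul_right, if_true, norm_div, norm_neg, norm_pow] at hc
    have : 0 < ‖a - b‖ := norm_pos_iff.2 hab
    rw [div_le_iff₀ (by positivity)] at hc
    linarith
  have hlp : 0 < ‖rd γ ε w a‖ := norm_pos_iff.2 hlam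
  set B := ‖a - b‖ ^ 2 * ((1 / δ) / (δ / 2)) with hB
  have hlim : Tendsto (fun k : ℕ => B * (‖rd γ ε w a‖ ^ 2) ^ k) atTop (𝓝 (B * 0)) :=
    (tendsto_pow_atTop_nhds_zero_of_lt_one (by positivity) (by nlinarith)).const_mul B
  rw [mul_zero] at hlim
  obtain ⟨k, hk⟩ := (hlim.eventually (gt_mem_nhds one_pos)).exists
  have h4 := (Classical.choose_spec (key (2 * k))).2.2.2
  have h5 := bound k
  rw [← pow_mul] at hk
  have : 0 ≤ ‖rd γ ε w a‖ ^ (2 * k) := by positivity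
  nlinarith
end

section
open Filter Topology Polynomial

noncomputable def Kn {N : ℕ} (γ : ℝ) (ε w : Fin N → ℝ) : ℝ[X] :=
  C γ * (∏ j, (X - C (w j))) ^ 2 - ∑ j, C (ε j) * (∏ i ∈ Finset.univ.erase j, (X - C (w i))) ^ 2

lemma Kn_degree {N : ℕ} (γ : ℝ) (ε w : Fin N → ℝ) : (Kn γ ε w).natDegree ≤ 2 * N := by
  have hp : ∀ s : Finset (Fin N), (∏ j ∈ s, (X - C (w j))).natDegree ≤ N := by
    intro s
    refine (natDegree_prod_le _ _).trans ?_
    simp only [natDegree_X_sub_C, Finset.sum_const, smul_eq_mul, mul_one]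
    exact (Finset.card_le_univ s).trans (by simp)
  have hp2 : ∀ (b : ℝ) (s : Finset (Fin N)), (C b * (∏ j ∈ s, (X - C (w j))) ^ 2).natDegree ≤ 2 * N := by
    intro b s
    refine (natDegree_C_mul_le _ _).trans (natDegree_pow_le.trans ?_)
    have := hp s
    omega
  refine (natDegree_sub_le _ _).trans (max_le (hp2 _ _) ?_)
  exact natDegree_sum_le_of_forall_le _ _ fun j _ => hp2 _ _

lemma Kn_eval {N : ℕ} (γ : ℝ) (ε w : Fin N → ℝ) (x : ℝ) : (Kn γ ε w).eval x =
    γ * (∏ j, (x - w j)) ^ 2 - ∑ j, ε j * (∏ i ∈ Finset.univ.erase j, (x - w i)) ^ 2 := by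
  simp [Kn, eval_prod, eval_finsetSum]

lemma Kn_aeval {N : ℕ} (γ : ℝ) (ε w : Fin N → ℝ) (z : ℂ) (hz : ∀ j, z ≠ w j) :
    aeval z (Kn γ ε w) = rd γ ε w z * (∏ j, (z - w j)) ^ 2 := by
  have h := sum_mul_prod (fun j => (ε j : ℂ)) (fun j => (z - w j) ^ 2)
    (fun j => pow_ne_zero _ (sub_ne_zero.2 (hz j)))
  simp only [Finset.prod_pow] at h
  simp only [Kn, rd, map_sub, map_mul, map_pow, map_prod, map_sum, aeval_X, aeval_C,
    Complex.coe_algebraMap]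
  rw [sub_mul, h]

lemma Kn_node {N : ℕ} (γ : ℝ) (ε w : Fin N → ℝ) (hε : ∀ j, 0 < ε j)
    (hw : Function.Injective w) (j : Fin N) : (Kn γ ε w).eval (w j) < 0 := by
  rw [Kn_eval, Finset.prod_eq_zero (Finset.mem_univ j) (by simp)]
  have : 0 < ∑ j', ε j' * (∏ i ∈ Finset.univ.erase j', (w j - w i)) ^ 2 := by
    refine Finset.sum_pos' (fun i _ => mul_nonneg (hε i).le (sq_nonneg _)) ⟨j, Finset.mem_univ _, ?_⟩
    refine mul_pos (hε j) (sq_pos_of_ne_zero (Finset.prod_ne_zero_iff.2 fun i hi => ?_))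
    rw [sub_ne_zero]
    exact fun h => (Finset.ne_of_mem_erase hi) (hw h).symm
  simp; linarith

lemma rd_real_limit {N : ℕ} (γ : ℝ) (ε w : Fin N → ℝ) (l : Filter ℝ)
    (hl : Tendsto (fun x : ℝ => x) l (Bornology.cobounded ℝ)) :
    Tendsto (fun x : ℝ => γ - ∑ j, ε j / (x - w j) ^ 2) l (𝓝 (γ - ∑ j : Fin N, 0)) := by
  refine tendsto_const_nhds.sub (tendsto_finsetSum _ fun j _ => ?_)
  have h3 : Tendsto (fun z : ℝ => z - w j) l (Bornology.cobounded ℝ) := by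
    have : Tendsto (fun z : ℝ => z - w j) (Bornology.cobounded ℝ) (Bornology.cobounded ℝ) := by
      simpa only [sub_eq_add_neg] using _root_.tendsto_add_const_cobounded (-(w j))
    exact this.comp hl
  have := ((tendsto_inv₀_cobounded.comp h3).pow 2).const_mul (ε j)
  simpa [div_eq_mul_inv] using this

lemma Kn_pos_of {N : ℕ} (γ : ℝ) (ε w : Fin N → ℝ) (x : ℝ) (hx : ∀ j, x ≠ w j)
    (h : 0 < γ - ∑ j, ε j / (x - w j) ^ 2) : 0 < (Kn γ ε w).eval x := by
  have h1 := Kn_aeval γ ε w x (fun j => by exact_mod_cast hx j)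
  have h2 : (((Kn γ ε w).eval x : ℝ) : ℂ) =
      (((γ - ∑ j, ε j / (x - w j) ^ 2) * (∏ j, (x - w j)) ^ 2 : ℝ) : ℂ) := by
    rw [show (((Kn γ ε w).eval x : ℝ) : ℂ) = aeval (x : ℂ) (Kn γ ε w) by
      simpa using (aeval_algebraMap_apply ℂ x (Kn γ ε w)).symm, h1]
    simp [rd]
  have h3 := Complex.ofReal_injective h2
  rw [h3]
  exact mul_pos h (sq_pos_of_ne_zero (Finset.prod_ne_zero_iff.2 fun j _ => sub_ne_zero.2 (hx j)))

lemma crit_card {N : ℕ} (hN : 0 < N) (γ : ℝ) (hγ : 0 < γ) (ε w : Fin N → ℝ)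
    (hε : ∀ j, 0 < ε j) (hw : Function.Injective w) (A : Finset ℂ)
    (hA : ∀ z ∈ A, rd γ ε w z = 0 ∧ 0 < z.im) : A.card ≤ N - 1 := by
  classical
  have hne : (Finset.univ : Finset (Fin N)).Nonempty := ⟨⟨0, hN⟩, Finset.mem_univ _⟩
  obtain ⟨jM, -, hM⟩ := Finset.exists_max_image Finset.univ w hne
  obtain ⟨jm, -, hm⟩ := Finset.exists_min_image Finset.univ w hne
  have lim0 : (0:ℝ) < γ - ∑ j : Fin N, 0 := by simpa using hγ
  obtain ⟨x1, hx1, hx1'⟩ : ∃ x, w jM < x ∧ 0 < γ - ∑ j, ε j / (x - w j) ^ 2 :=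
    ((eventually_gt_atTop (w jM)).and ((rd_real_limit γ ε w atTop
      (Filter.tendsto_id'.2 (by rw [IsOrderBornology.cobounded_eq]; exact le_sup_right))).eventually (lt_mem_nhds lim0))).exists
  obtain ⟨x2, hx2, hx2'⟩ : ∃ x, x < w jm ∧ 0 < γ - ∑ j, ε j / (x - w j) ^ 2 :=
    ((eventually_lt_atBot (w jm)).and ((rd_real_limit γ ε w atBot
      (Filter.tendsto_id'.2 (by rw [IsOrderBornology.cobounded_eq]; exact le_sup_left))).eventually (lt_mem_nhds lim0))).exists
  have k1 := Kn_pos_of γ ε w x1 (fun j => ((hM j (Finset.mem_univ _)).trans_lt hx1).ne') hx1'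
  have k2 := Kn_pos_of γ ε w x2 (fun j => (hx2.trans_le (hm j (Finset.mem_univ _))).ne) hx2'
  have n1 := Kn_node γ ε w hε hw jM
  have n2 := Kn_node γ ε w hε hw jm
  obtain ⟨y1, hy1, hy1'⟩ := intermediate_value_Ioo hx1.le (Kn γ ε w).continuous.continuousOn ⟨n1, k1⟩
  obtain ⟨y2, hy2, hy2'⟩ := intermediate_value_Ioo' hx2.le (Kn γ ε w).continuous.continuousOn ⟨n2, k2⟩
  have hy : y2 < y1 := hy2.2.trans_le ((hm jM (Finset.mem_univ _)).trans hy1.1.le)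
  set K := (Kn γ ε w).map (algebraMap ℝ ℂ) with hK
  have hK0 : K ≠ 0 := by
    rw [hK, Polynomial.map_ne_zero_iff (algebraMap ℝ ℂ).injective]
    intro h; rw [h] at n1; simp at n1
  have hroot : ∀ z : ℂ, z ∈ K.roots.toFinset ↔ aeval z (Kn γ ε w) = 0 := by
    intro z
    rw [Multiset.mem_toFinset, mem_roots hK0, IsRoot.def, hK, eval_map_algebraMap]
  have hreal : ∀ y : ℝ, (Kn γ ε w).eval y = 0 → (y : ℂ) ∈ K.roots.toFinset := by
    intro y hy
    rw [hroot]
    have := aeval_algebraMap_apply ℂ y (Kn γ ε w)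
    simp [hy] at this
    simpa using this
  have hAr : ∀ z, z.im ≠ 0 → rd γ ε w z = 0 → z ∈ K.roots.toFinset := by
    intro z hz h
    rw [hroot, Kn_aeval γ ε w z (ne_node_of_im w z hz), h, zero_mul]
  set A' := A.image (starRingEnd ℂ)
  have hcA' : A'.card = A.card := Finset.card_image_of_injective _ (starRingEnd ℂ).injective
  set R : Finset ℂ := {(y1 : ℂ), (y2 : ℂ)}
  have hcR : R.card = 2 := Finset.card_pair (by exact_mod_cast hy.ne')
  have hA'im : ∀ z ∈ A', z.im < 0 := by
    intro z hz
    obtain ⟨u, hu, rfl⟩ := Finset.mem_image.1 hz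
    simpa using (hA u hu).2
  have hRim : ∀ z ∈ R, z.im = 0 := by
    intro z hz
    simp only [R, Finset.mem_insert, Finset.mem_singleton] at hz
    rcases hz with rfl | rfl <;> simp
  have d1 : Disjoint A A' := Finset.disjoint_left.2 fun z h1 h2 => by
    have := (hA z h1).2; have := hA'im z h2; linarith
  have d2 : Disjoint (A ∪ A') R := Finset.disjoint_left.2 fun z h1 h2 => by
    have h0 := hRim z h2
    rcases Finset.mem_union.1 h1 with h | h
    · exact (hA z h).2.ne' h0
    · exact (hA'im z h).ne h0
  have hsub : (A ∪ A') ∪ R ⊆ K.roots.toFinset := by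
    intro z hz
    rcases Finset.mem_union.1 hz with h | h
    · rcases Finset.mem_union.1 h with h | h
      · exact hAr z (hA z h).2.ne' (hA z h).1
      · refine hAr z (hA'im z h).ne ?_
        obtain ⟨u, hu, rfl⟩ := Finset.mem_image.1 h
        rw [rd_conj, (hA u hu).1, map_zero]
    · simp only [R, Finset.mem_insert, Finset.mem_singleton] at h
      rcases h with rfl | rfl
      · exact hreal _ hy1'
      · exact hreal _ hy2'
  have h1 := Finset.card_le_card hsub
  rw [Finset.card_union_of_disjoint d2, Finset.card_union_of_disjoint d1, hcA', hcR] at h1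
  have h2 : K.roots.toFinset.card ≤ 2 * N :=
    (Multiset.toFinset_card_le _).trans ((card_roots' K).trans
      (natDegree_map_le.trans (Kn_degree γ ε w)))
  omega

lemma good_disc {N : ℕ} (γ c : ℝ) (ε w : Fin N → ℝ) (a : ℂ) (ha0 : 0 < a.im)
    (ha : rr γ c ε w a = starRingEnd ℂ a) (hd : ‖rd γ ε w a‖ < 1) :
    ∀ᶠ δ in 𝓝[>] (0:ℝ), (∀ z ∈ Metric.ball a δ, 0 < z.im) ∧
      ∀ z ∈ Metric.ball a δ, starRingEnd ℂ (rr γ c ε w z) ∈ Metric.ball a δ := by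
  have h1 := (rr_hasStrictDerivAt γ c ε w a (ne_node_of_im w a ha0.ne')).hasDerivAt
  have h2 := (hasDerivAt_iff_isLittleO.1 h1).def (sub_pos.2 hd)
  have h3 : ∀ᶠ z : ℂ in 𝓝 a, 0 < z.im :=
    Complex.continuous_im.continuousAt.eventually (lt_mem_nhds ha0)
  obtain ⟨δ0, hδ0, hb⟩ := Metric.eventually_nhds_iff_ball.1 (h2.and h3)
  filter_upwards [Ioo_mem_nhdsGT hδ0] with δ hδ
  have hsub := Metric.ball_subset_ball (x := a) hδ.2.le
  refine ⟨fun z hz => (hb z (hsub hz)).2, fun z hz => ?_⟩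
  have h4 := (hb z (hsub hz)).1
  rw [mem_ball_iff_norm] at hz ⊢
  rw [ha] at h4
  have h5 : ‖rr γ c ε w z - starRingEnd ℂ a‖ ≤ ‖z - a‖ := by
    have : rr γ c ε w z - starRingEnd ℂ a =
      (rr γ c ε w z - starRingEnd ℂ a - (z - a) • rd γ ε w a) + (z - a) • rd γ ε w a := by ring
    rw [this]
    refine (norm_add_le _ _).trans ?_
    rw [norm_smul]
    nlinarith
  rw [← Complex.norm_conj]
  simp only [map_sub, Complex.conj_conj]
  linarith

theorem fatou_bound {N : ℕ} (hN : 0 < N) (γ c : ℝ) (hγ : 0 < γ) (ε w : Fin N → ℝ)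
    (hε : ∀ j, 0 < ε j) (hw : Function.Injective w) (A : Finset ℂ)
    (hA : ∀ a ∈ A, 0 < a.im ∧ rr γ c ε w a = starRingEnd ℂ a ∧ ‖rd γ ε w a‖ < 1) :
    A.card ≤ N - 1 := by
  classical
  have e1 : ∀ᶠ δ in 𝓝[>] (0:ℝ), ∀ a ∈ A, (∀ z ∈ Metric.ball a δ, 0 < z.im) ∧
      ∀ z ∈ Metric.ball a δ, starRingEnd ℂ (rr γ c ε w z) ∈ Metric.ball a δ := by
    rw [Filter.eventually_all_finset]
    exact fun a ha => good_disc γ c ε w a (hA a ha).1 (hA a ha).2.1 (hA a ha).2.2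
  have e2 : ∀ᶠ δ in 𝓝[>] (0:ℝ), ∀ a ∈ A, ∀ b ∈ A, a ≠ b →
      Disjoint (Metric.ball a δ) (Metric.ball b δ) := by
    rw [Filter.eventually_all_finset]
    intro a ha
    rw [Filter.eventually_all_finset]
    intro b hb
    by_cases hab : a = b
    · simp [hab]
    · have : 0 < dist a b / 2 := by have := dist_pos.2 hab; positivity
      filter_upwards [Ioo_mem_nhdsGT this] with δ hδ _
      exact Metric.ball_disjoint_ball (by linarith [hδ.2])
  obtain ⟨δ, ⟨h1, h2⟩, hδ⟩ := ((e1.and e2).and self_mem_nhdsWithin).exists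
  have hδ : 0 < δ := hδ
  have key : ∀ a ∈ A, ∃ z : ℂ, rd γ ε w z = 0 ∧ 0 < z.im ∧ ∃ k, (rr γ c ε w)^[k] z ∈ Metric.ball a δ ∨
      starRingEnd ℂ ((rr γ c ε w)^[k] z) ∈ Metric.ball a δ := fun a ha =>
    basin_crit hN γ c hγ ε w hε hw a δ hδ (hA a ha).2.1 (hA a ha).2.2 (h1 a ha).1 (h1 a ha).2
  choose! f hf1 hf2 hf3 using key
  have hinv : ∀ a ∈ A, ∀ z, (z ∈ Metric.ball a δ ∨ starRingEnd ℂ z ∈ Metric.ball a δ) → ∀ m,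
      ((rr γ c ε w)^[m] z ∈ Metric.ball a δ ∨ starRingEnd ℂ ((rr γ c ε w)^[m] z) ∈ Metric.ball a δ) := by
    intro a ha z hz m
    induction m with
    | zero => simpa using hz
    | succ m ih =>
      rw [Function.iterate_succ_apply']
      rcases ih with h | h
      · exact Or.inr ((h1 a ha).2 _ h)
      · have := (h1 a ha).2 _ h
        rw [rr_conj, Complex.conj_conj] at this
        exact Or.inl this
  have hinj : Set.InjOn f A := by
    intro a ha b hb hab
    by_contra hne
    obtain ⟨k, hk⟩ := hf3 a ha
    obtain ⟨l, hl⟩ := hf3 b hb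
    have g1 := hinv a ha _ hk l
    have g2 := hinv b hb _ hl k
    rw [← Function.iterate_add_apply] at g1 g2
    rw [hab, add_comm] at g1
    set z := (rr γ c ε w)^[k + l] (f b)
    have hdis := Set.disjoint_left.1 (h2 a ha b hb hne)
    have i1 : ∀ u, u ∈ Metric.ball a δ → starRingEnd ℂ u ∉ Metric.ball b δ := by
      intro u hu hv
      have := (h1 a ha).1 _ hu
      have := (h1 b hb).1 _ hv
      simp at this; linarith
    rcases g1 with g1 | g1 <;> rcases g2 with g2 | g2
    · exact hdis g1 g2
    · exact i1 _ g1 g2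
    · exact i1 _ g1 (by simpa using g2)
    · exact hdis g1 g2
  rw [← Finset.card_image_of_injOn hinj]
  refine crit_card hN γ hγ ε w hε hw _ ?_
  intro z hz
  obtain ⟨a, ha, rfl⟩ := Finset.mem_image.1 hz
  exact ⟨hf1 a ha, hf2 a ha⟩
end

section
open Filter Topology

lemma sard_1d (φ D : ℝ → ℝ) (s : Set ℝ) (h : ∀ x ∈ s, HasDerivAt φ (D x) x)
    (h0 : ∀ x ∈ s, D x = 0) : MeasureTheory.volume (φ '' s) = 0 := by
  refine MeasureTheory.addHaar_image_eq_zero_of_det_fderivWithin_eq_zero MeasureTheory.volume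
    (f' := fun _ => 0) (fun x hx => ?_) (fun x _ => ?_)
  · have := (h x hx).hasFDerivAt.hasFDerivWithinAt (s := s)
    rw [h0 x hx] at this
    simpa using this
  · simp [ContinuousLinearMap.det]

lemma right_pts (φ D : ℝ → ℝ) (hφ : Continuous φ) (O : Set ℝ) (hO : IsOpen O)
    (hD : ∀ x ∈ O, HasDerivAt φ (D x) x) (T : Finset ℝ) (hT : ∀ x ∈ T, x ∈ O ∧ φ x = 0 ∧
      ∃ δ > 0, ∀ y ∈ Set.Ioo x (x + δ), φ y < 0) :
    ∃ (s : ℝ) (T' : Finset ℝ), T'.card = T.card ∧ ∀ t ∈ T', t ∈ O ∧ φ t = s ∧ D t < 0 := by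
  classical
  have e1 : ∀ᶠ η in 𝓝[>] (0:ℝ), ∀ x ∈ T, ∀ y ∈ Set.Ioo x (x + η), y ∈ O ∧ φ y < 0 := by
    rw [Filter.eventually_all_finset]
    intro x hx
    obtain ⟨hxO, hx0, δ, hδ, hneg⟩ := hT x hx
    obtain ⟨δ', hδ', hb⟩ := Metric.isOpen_iff.1 hO x hxO
    filter_upwards [Ioo_mem_nhdsGT (lt_min hδ hδ')] with η hη y hy
    have h1 := hη.2.trans_le (min_le_left _ _)
    have h2 := hη.2.trans_le (min_le_right _ _)
    refine ⟨hb ?_, hneg y ⟨hy.1, by linarith [hy.2]⟩⟩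
    rw [Metric.mem_ball, Real.dist_eq, abs_lt]
    constructor <;> linarith [hy.1, hy.2]
  obtain ⟨η, h1, hη⟩ := (e1.and self_mem_nhdsWithin).exists
  have hη : 0 < η := hη
  have e2 : ∀ᶠ s in 𝓝[<] (0:ℝ), ∀ x ∈ T, φ (x + η / 2) < s := by
    rw [Filter.eventually_all_finset]
    intro x hx
    have := (h1 x hx (x + η / 2) ⟨by linarith, by linarith⟩).2
    exact (lt_mem_nhds this).filter_mono nhdsWithin_le_nhds
  have hnull := sard_1d φ D {x | x ∈ O ∧ D x = 0} (fun x hx => hD x hx.1) (fun x hx => hx.2)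
  obtain ⟨s, hs0, hsT, hsn⟩ : ∃ s : ℝ, s < 0 ∧ (∀ x ∈ T, φ (x + η / 2) < s) ∧
      s ∉ φ '' {x | x ∈ O ∧ D x = 0} := by
    obtain ⟨l, hl, hsub⟩ := (mem_nhdsLT_iff_exists_Ioo_subset (α := ℝ)).1 e2
    have hl : l < 0 := hl
    by_contra hno
    push Not at hno
    have hsub2 : Set.Ioo l 0 ⊆ φ '' {x | x ∈ O ∧ D x = 0} := fun s hs =>
      hno s hs.2 (hsub hs)
    have := MeasureTheory.measure_mono_null hsub2 hnull
    rw [Real.volume_Ioo] at this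
    simp at this
    linarith
  have key : ∀ x ∈ T, ∃ t, x < t ∧ t ≤ x + η / 2 ∧ φ t = s ∧ D t < 0 := by
    intro x hx
    set B := Set.Icc x (x + η / 2) ∩ {t | φ t ≤ s}
    have hBc : IsCompact B := isCompact_Icc.inter_right (isClosed_le hφ continuous_const)
    have hBn : B.Nonempty := ⟨x + η / 2, ⟨by linarith, le_rfl⟩, (hsT x hx).le⟩
    obtain ⟨t, htB, ht⟩ := hBc.exists_isLeast hBn
    have hx0 := (hT x hx).2.1
    have hxt : x < t := by
      rcases htB.1.1.lt_or_eq with h | h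
      · exact h
      · exfalso
        have : φ t ≤ s := htB.2
        rw [← h, hx0] at this; linarith
    have hbef : ∀ y ∈ Set.Ico x t, s < φ y := by
      intro y hy
      by_contra hle
      push Not at hle
      have := ht (show y ∈ B from ⟨⟨hy.1, by linarith [hy.2, htB.1.2]⟩, hle⟩)
      linarith [hy.2]
    have hts : φ t = s := by
      refine le_antisymm htB.2 ?_
      have hlim : Tendsto φ (𝓝[<] t) (𝓝 (φ t)) := hφ.continuousAt.tendsto.mono_left nhdsWithin_le_nhds
      refine ge_of_tendsto hlim ?_
      filter_upwards [Ico_mem_nhdsLT hxt] with y hy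
      exact (hbef y hy).le
    have htO : t ∈ O := (h1 x hx t ⟨hxt, by linarith [htB.1.2]⟩).1
    have hDne : D t ≠ 0 := fun h => hsn ⟨t, ⟨htO, h⟩, hts⟩
    have hDle : D t ≤ 0 := by
      have := (hasDerivAt_iff_tendsto_slope.1 (hD t htO)).mono_left
        (nhdsWithin_mono t (s := Set.Iio t) (fun y hy => ne_of_lt hy))
      refine le_of_tendsto this ?_
      filter_upwards [Ico_mem_nhdsLT hxt] with y hy
      rw [slope_def_field]
      refine div_nonpos_of_nonneg_of_nonpos ?_ ?_
      · have := hbef y hy; linarith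
      · linarith [hy.2]
    exact ⟨t, hxt, htB.1.2, hts, lt_of_le_of_ne hDle hDne⟩
  choose! f g1 g2 g3 g4 using key
  refine ⟨s, T.image f, ?_, ?_⟩
  · refine Finset.card_image_of_injOn ?_
    have aux : ∀ x ∈ T, ∀ y ∈ T, x < y → f x < f y := by
      intro x hx y hy hxy
      have : x + η ≤ y := by
        by_contra hlt
        push Not at hlt
        have := (h1 x hx y ⟨hxy, hlt⟩).2
        rw [(hT y hy).2.1] at this
        exact lt_irrefl _ this
      linarith [g2 x hx, g1 y hy]
    intro x hx y hy hxy
    rcases lt_trichotomy x y with h | h | h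
    · exact absurd hxy (aux x hx y hy h).ne
    · exact h
    · exact absurd hxy (aux y hy x hx h).ne'
  · intro t ht
    obtain ⟨x, hx, rfl⟩ := Finset.mem_image.1 ht
    exact ⟨(h1 x hx _ ⟨g1 x hx, by linarith [g2 x hx]⟩).1, g3 x hx, g4 x hx⟩

lemma left_pts (φ D : ℝ → ℝ) (hφ : Continuous φ) (O : Set ℝ) (hO : IsOpen O)
    (hD : ∀ x ∈ O, HasDerivAt φ (D x) x) (T : Finset ℝ) (hT : ∀ x ∈ T, x ∈ O ∧ φ x = 0 ∧
      ∃ δ > 0, ∀ y ∈ Set.Ioo (x - δ) x, 0 < φ y) :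
    ∃ (s : ℝ) (T' : Finset ℝ), T'.card = T.card ∧ ∀ t ∈ T', t ∈ O ∧ φ t = s ∧ D t < 0 := by
  classical
  obtain ⟨s, T', h1, h2⟩ := right_pts (fun x => -φ (-x)) (fun x => D (-x)) (by fun_prop)
    (-O) hO.neg (by
      intro x hx
      have h := ((hD (-x) hx).comp x (hasDerivAt_neg x)).fun_neg
      refine h.congr_deriv ?_
      ring) (T.image fun x => -x) (by
      intro x hx
      obtain ⟨y, hy, rfl⟩ := Finset.mem_image.1 hx
      obtain ⟨a, b, δ, hδ, h⟩ := hT y hy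
      refine ⟨by simpa using a, by simpa using b, δ, hδ, fun u hu => ?_⟩
      have := h (-u) ⟨by linarith [hu.2], by linarith [hu.1]⟩
      simpa using this)
  refine ⟨-s, T'.image fun x => -x, ?_, ?_⟩
  · rw [Finset.card_image_of_injective _ neg_injective, h1,
      Finset.card_image_of_injective _ neg_injective]
  · intro t ht
    obtain ⟨y, hy, rfl⟩ := Finset.mem_image.1 ht
    obtain ⟨a, b, d⟩ := h2 y hy
    exact ⟨a, by have b' : -φ (-y) = s := b; linarith, d⟩
end

section
open Filter Topology

lemma pos_of_no_zero (φ : ℝ → ℝ) (hφ : Continuous φ) (a b : ℝ)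
    (h : ∀ u ∈ Set.uIcc a b, φ u ≠ 0) (ha : 0 < φ a) : 0 < φ b := by
  by_contra hb
  push Not at hb
  have := intermediate_value_uIcc (hφ.continuousOn (s := Set.uIcc a b))
  obtain ⟨u, hu, hu0⟩ := this (show (0:ℝ) ∈ Set.uIcc (φ a) (φ b) from
    Set.mem_uIcc.2 (Or.inr ⟨hb, ha.le⟩))
  exact h u hu hu0

lemma comb (φ : ℝ → ℝ) (hφ : Continuous φ) (x0 x1 : ℝ) (h0 : ∀ x ≤ x0, 0 < φ x)
    (h1 : ∀ x ≥ x1, φ x < 0) (Z : Finset ℝ) (hZ : ∀ x, φ x = 0 ↔ x ∈ Z)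
    (R L : Finset ℝ)
    (hR : ∀ x ∈ Z, (∃ δ > 0, ∀ y ∈ Set.Ioo x (x + δ), φ y < 0) → x ∈ R)
    (hL : ∀ x ∈ Z, (∃ δ > 0, ∀ y ∈ Set.Ioo (x - δ) x, 0 < φ y) → x ∈ L) :
    Z.card + 1 ≤ R.card + L.card := by
  classical
  have hx01 : x0 < x1 := by
    by_contra h
    push Not at h
    have := h0 x0 le_rfl
    have := h1 x0 h
    linarith
  have hne : Z.Nonempty := by
    have := intermediate_value_Icc' hx01.le hφ.continuousOn
    obtain ⟨u, -, hu⟩ := this ⟨(h1 x1 le_rfl).le, (h0 x0 le_rfl).le⟩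
    exact ⟨u, (hZ u).1 hu⟩
  set m := Z.min' hne
  have hm : m ∈ Z := Z.min'_mem hne
  have hmL : m ∈ L := by
    refine hL m hm ⟨1, one_pos, fun y hy => ?_⟩
    refine pos_of_no_zero φ hφ (min x0 y) y ?_ (h0 _ (min_le_left _ _))
    intro u hu hu0
    rw [Set.uIcc_of_le (min_le_right _ _)] at hu
    have := Z.min'_le u ((hZ u).1 hu0)
    linarith [hu.2, hy.2]
  -- successor
  have key : ∀ z ∈ Z \ R, ∃ z' ∈ L, z < z' ∧ ∀ u ∈ Z, z < u → z' ≤ u := by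
    intro z hz
    rw [Finset.mem_sdiff] at hz
    set W := Z.filter (fun u => z < u)
    by_cases hW : W.Nonempty
    · set z' := W.min' hW
      have hz' := W.min'_mem hW
      rw [Finset.mem_filter] at hz'
      have hmin : ∀ u ∈ Z, z < u → z' ≤ u := fun u hu h =>
        W.min'_le u (Finset.mem_filter.2 ⟨hu, h⟩)
      have hnz : ∀ u, z < u → u < z' → φ u ≠ 0 := by
        intro u h1 h2 h3
        have := hmin u ((hZ u).1 h3) h1
        linarith
      refine ⟨z', hL z' hz'.1 ⟨z' - z, sub_pos.2 hz'.2, fun y hy => ?_⟩, hz'.2, hmin⟩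
      by_contra hneg
      have hy1 : z < y := by linarith [hy.1]
      push Not at hneg
      have hyn : 0 < -φ y := by
        have := hnz y hy1 hy.2
        have := lt_of_le_of_ne hneg this
        linarith
      refine hz.2 (hR z hz.1 ⟨z' - z, sub_pos.2 hz'.2, fun v hv => ?_⟩)
      have := pos_of_no_zero (fun x => -φ x) hφ.neg y v (fun u hu => by
        have : φ u ≠ 0 := hnz u (lt_of_lt_of_le (lt_min hy1 hv.1) hu.1)
          (lt_of_le_of_lt hu.2 (max_lt hy.2 (by linarith [hv.2])))
        simpa using this) hyn
      linarith
    · exfalso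
      refine hz.2 (hR z hz.1 ⟨1, one_pos, fun v hv => ?_⟩)
      have := pos_of_no_zero (fun x => -φ x) hφ.neg (max x1 v) v (fun u hu => by
        rw [Set.uIcc_of_ge (le_max_right _ _)] at hu
        intro h
        have h' : φ u = 0 := by simpa using h
        exact hW ⟨u, Finset.mem_filter.2 ⟨(hZ u).1 h', by linarith [hu.1, hv.1]⟩⟩)
        (by have := h1 (max x1 v) (le_max_left _ _); simpa using this)
      linarith
  choose! f hf1 hf2 hf3 using key
  have hcard : (Z \ R).card ≤ (L.erase m).card := by
    refine Finset.card_le_card_of_injOn f (fun z hz => ?_) ?_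
    · refine Finset.mem_erase.2 ⟨?_, hf1 z hz⟩
      have := Z.min'_le z (Finset.mem_sdiff.1 hz).1
      exact (this.trans_lt (hf2 z hz)).ne'
    · have aux : ∀ x ∈ Z \ R, ∀ y ∈ Z \ R, x < y → f x < f y := fun x hx y hy h =>
        (hf3 x hx y (Finset.mem_sdiff.1 hy).1 h).trans_lt (hf2 y hy)
      intro x hx y hy hxy
      rcases lt_trichotomy x y with h | h | h
      · exact absurd hxy (aux x hx y hy h).ne
      · exact h
      · exact absurd hxy (aux y hy x hx h).ne'
  rw [Finset.card_erase_of_mem hmL] at hcard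
  have hLpos : 0 < L.card := Finset.card_pos.2 ⟨m, hmL⟩
  have := Finset.le_card_sdiff R Z
  omega
end

section
open Filter Topology

noncomputable def SS {N : ℕ} (ε w : Fin N → ℝ) (x v : ℝ) : ℝ := ∑ j, ε j / ((x - w j) ^ 2 + v)

def Oset {N : ℕ} (γ : ℝ) (ε w : Fin N → ℝ) : Set ℝ := {x | ∃ v > 0, SS ε w x v = 1 + γ}

open Classical in
noncomputable def VV {N : ℕ} (γ : ℝ) (ε w : Fin N → ℝ) (x : ℝ) : ℝ :=
  if h : ∃ v > 0, SS ε w x v = 1 + γ then Classical.choose h else 0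

noncomputable def ph {N : ℕ} (γ c : ℝ) (ε w : Fin N → ℝ) (x : ℝ) : ℝ :=
  -(1 - γ) * x + c + ∑ j, ε j * (x - w j) / ((x - w j) ^ 2 + VV γ ε w x)

section
variable {N : ℕ} (hN : 0 < N) (γ c : ℝ) (hγ : 0 < γ) (hγ1 : γ < 1) (ε w : Fin N → ℝ)
  (hε : ∀ j, 0 < ε j)

lemma VV_of_mem (x : ℝ) (hx : x ∈ Oset γ ε w) : 0 < VV γ ε w x ∧ SS ε w x (VV γ ε w x) = 1 + γ := by
  have hx' : ∃ v > 0, SS ε w x v = 1 + γ := hx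
  unfold VV
  rw [dif_pos hx']
  exact Classical.choose_spec hx'

lemma VV_of_not_mem (x : ℝ) (hx : x ∉ Oset γ ε w) : VV γ ε w x = 0 := by
  have hx' : ¬ ∃ v > 0, SS ε w x v = 1 + γ := hx
  unfold VV
  rw [dif_neg hx']

lemma VV_nonneg (x : ℝ) : 0 ≤ VV γ ε w x := by
  by_cases hx : x ∈ Oset γ ε w
  · exact (VV_of_mem γ ε w x hx).1.le
  · exact (VV_of_not_mem γ ε w x hx).ge

lemma mem_O_iff (x : ℝ) : x ∈ Oset γ ε w ↔ 0 < VV γ ε w x := by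
  by_cases hx : x ∈ Oset γ ε w
  · simp [hx, (VV_of_mem γ ε w x hx).1]
  · simp [hx, VV_of_not_mem γ ε w x hx]

include hN hε in
lemma SS_anti (x : ℝ) {v v' : ℝ} (hv : 0 < v) (h : v < v') : SS ε w x v' < SS ε w x v := by
  unfold SS
  refine Finset.sum_lt_sum_of_nonempty ⟨⟨0, hN⟩, Finset.mem_univ _⟩ fun j _ => ?_
  have := hε j
  have h2 := sq_nonneg (x - w j)
  exact div_lt_div_of_pos_left this (by linarith) (by linarith)

lemma SS_cont_x {v : ℝ} (hv : 0 < v) : Continuous fun x => SS ε w x v := by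
  unfold SS
  refine continuous_finset_sum _ fun j _ => ?_
  refine Continuous.div (by fun_prop) (by fun_prop) fun x => ?_
  have := sq_nonneg (x - w j)
  linarith

lemma SS_cont_v (x : ℝ) : ContinuousOn (fun v => SS ε w x v) (Set.Ioi 0) := by
  unfold SS
  refine continuousOn_finset_sum _ fun j _ => ?_
  refine ContinuousOn.div (by fun_prop) (by fun_prop) fun v hv => ?_
  have := sq_nonneg (x - w j)
  have : 0 < v := hv
  linarith

include hγ hε in
lemma SS_large (x v : ℝ) (hv : 0 < v) : ∃ v' > v, SS ε w x v' < 1 + γ := by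
  refine ⟨v + ∑ j, ε j + 1, ?_, ?_⟩
  · have : 0 ≤ ∑ j, ε j := Finset.sum_nonneg fun j _ => (hε j).le
    linarith
  · have h0 : 0 ≤ ∑ j, ε j := Finset.sum_nonneg fun j _ => (hε j).le
    have : SS ε w x (v + ∑ j, ε j + 1) ≤ ∑ j, ε j / (v + ∑ j, ε j + 1) := by
      refine Finset.sum_le_sum fun j _ => ?_
      have := sq_nonneg (x - w j)
      exact div_le_div_of_nonneg_left (hε j).le (by linarith) (by linarith)
    rw [← Finset.sum_div] at this
    have h2 : (∑ j, ε j) / (v + ∑ j, ε j + 1) < 1 := by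
      rw [div_lt_one (by linarith)]; linarith
    linarith

include hγ hε in
lemma SS_lt_of_not_mem (x : ℝ) (hx : x ∉ Oset γ ε w) (v : ℝ) (hv : 0 < v) :
    SS ε w x v < 1 + γ := by
  by_contra h
  push Not at h
  obtain ⟨v', h1, h2⟩ := SS_large γ hγ ε w hε x v hv
  have := intermediate_value_Icc' h1.le ((SS_cont_v ε w x).mono
    (fun u hu => hv.trans_le hu.1))
  obtain ⟨u, hu, hu'⟩ := this ⟨h2.le, h⟩
  exact hx ⟨u, hv.trans_le hu.1, hu'⟩

include hN hγ hε in
lemma lt_VV_iff (x v : ℝ) (hv : 0 < v) : v < VV γ ε w x ↔ 1 + γ < SS ε w x v := by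
  by_cases hx : x ∈ Oset γ ε w
  · obtain ⟨h1, h2⟩ := VV_of_mem γ ε w x hx
    rw [← h2]
    constructor
    · exact SS_anti hN ε w hε x hv
    · intro h
      by_contra hle
      push Not at hle
      rcases hle.lt_or_eq with h3 | h3
      · have := SS_anti hN ε w hε x h1 h3; linarith
      · rw [h3] at h; exact lt_irrefl _ h
  · rw [VV_of_not_mem γ ε w x hx]
    have := SS_lt_of_not_mem γ hγ ε w hε x hx v hv
    constructor <;> intro <;> linarith

include hN hγ hε in
lemma VV_lt_iff (x v : ℝ) (hv : 0 < v) : VV γ ε w x < v ↔ SS ε w x v < 1 + γ := by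
  by_cases hx : x ∈ Oset γ ε w
  · obtain ⟨h1, h2⟩ := VV_of_mem γ ε w x hx
    rw [← h2]
    constructor
    · exact SS_anti hN ε w hε x h1
    · intro h
      by_contra hle
      push Not at hle
      rcases hle.lt_or_eq with h3 | h3
      · have := SS_anti hN ε w hε x hv h3; linarith
      · rw [h3] at h; exact lt_irrefl _ h
  · rw [VV_of_not_mem γ ε w x hx]
    have := SS_lt_of_not_mem γ hγ ε w hε x hx v hv
    constructor <;> intro <;> linarith

include hN hγ hε in
lemma VV_eq_iff (x v : ℝ) (hv : 0 < v) : VV γ ε w x = v ↔ SS ε w x v = 1 + γ := by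
  have h1 := lt_VV_iff hN γ hγ ε w hε x v hv
  have h2 := VV_lt_iff hN γ hγ ε w hε x v hv
  constructor
  · intro h
    refine le_antisymm ?_ ?_
    · by_contra h3; push Not at h3; have := h1.2 h3; linarith
    · by_contra h3; push Not at h3; have := h2.2 h3; linarith
  · intro h
    refine le_antisymm ?_ ?_
    · by_contra h3; push Not at h3; have := h1.1 h3; linarith
    · by_contra h3; push Not at h3; have := h2.1 h3; linarith

include hN hγ hε in
lemma VV_cont : Continuous (VV γ ε w) := by
  rw [continuous_iff_continuousAt]
  intro x
  refine tendsto_order.2 ⟨fun a ha => ?_, fun a ha => ?_⟩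
  · rcases lt_or_ge a 0 with h | h
    · exact Eventually.of_forall fun y => h.trans_le (VV_nonneg γ ε w y)
    · have hv : 0 < (a + VV γ ε w x) / 2 := by linarith
      have h1 : (a + VV γ ε w x) / 2 < VV γ ε w x := by linarith
      rw [lt_VV_iff hN γ hγ ε w hε x _ hv] at h1
      filter_upwards [(SS_cont_x ε w hv).continuousAt.eventually (lt_mem_nhds h1)] with y hy
      rw [← lt_VV_iff hN γ hγ ε w hε y _ hv] at hy
      linarith
  · have hv : 0 < a := (VV_nonneg γ ε w x).trans_lt ha
    have h1 : VV γ ε w x < a := ha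
    rw [VV_lt_iff hN γ hγ ε w hε x _ hv] at h1
    filter_upwards [(SS_cont_x ε w hv).continuousAt.eventually (gt_mem_nhds h1)] with y hy
    rwa [← VV_lt_iff hN γ hγ ε w hε y _ hv] at hy

include hN hγ hε in
lemma O_open : IsOpen (Oset γ ε w) := by
  have : Oset γ ε w = {x | 0 < VV γ ε w x} := by ext x; exact mem_O_iff γ ε w x
  rw [this]
  exact isOpen_lt continuous_const (VV_cont hN γ hγ ε w hε)

include hN hγ hε in
lemma node_mem_O (j : Fin N) : w j ∈ Oset γ ε w := by
  have hj := hε j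
  have hv : 0 < ε j / (2 * (1 + γ)) := by positivity
  rw [mem_O_iff]
  refine hv.trans ((lt_VV_iff hN γ hγ ε w hε _ _ hv).2 ?_)
  have h1 : ε j / ((w j - w j) ^ 2 + ε j / (2 * (1 + γ))) ≤ SS ε w (w j) (ε j / (2 * (1 + γ))) := by
    unfold SS
    refine Finset.single_le_sum (f := fun i => ε i / ((w j - w i) ^ 2 + ε j / (2 * (1 + γ))))
      (fun i _ => ?_) (Finset.mem_univ j)
    have := hε i
    positivity
  have h2 : ε j / ((w j - w j) ^ 2 + ε j / (2 * (1 + γ))) = 2 * (1 + γ) := by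
    have : 1 + γ ≠ 0 := by positivity
    simp only [sub_self]
    field_simp
    simp
  linarith

include hN hγ hε in
lemma den_pos (x : ℝ) (j : Fin N) : 0 < (x - w j) ^ 2 + VV γ ε w x := by
  have h0 := VV_nonneg γ ε w x
  rcases eq_or_ne x (w j) with h | h
  · have := (mem_O_iff γ ε w x).1 (h ▸ node_mem_O hN γ hγ ε w hε j)
    have := sq_nonneg (x - w j)
    linarith
  · have := sq_pos_of_ne_zero (sub_ne_zero.2 h)
    linarith

include hN hγ hε in
lemma ph_cont : Continuous (ph γ c ε w) := by
  unfold ph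
  have := VV_cont hN γ hγ ε w hε
  refine Continuous.add (by fun_prop) (continuous_finset_sum _ fun j _ => ?_)
  exact Continuous.div (by fun_prop) (by fun_prop) fun x => (den_pos hN γ hγ ε w hε x j).ne'

include hε in
lemma sum_bound : ∃ M : ℝ, ∀ x v : ℝ, 0 ≤ v → M ≤ |x| → |∑ j, ε j * (x - w j) / ((x - w j) ^ 2 + v)| ≤ 1 := by
  have hE : 0 ≤ ∑ j, ε j := Finset.sum_nonneg fun j _ => (hε j).le
  refine ⟨∑ j, |w j| + (∑ j, ε j + 1), fun x v hv hx => ?_⟩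
  set B := ∑ j, ε j + 1
  have hB : 0 < B := by positivity
  have h1 : ∀ j, |ε j * (x - w j) / ((x - w j) ^ 2 + v)| ≤ ε j / B := by
    intro j
    have hj : |w j| ≤ ∑ j, |w j| := Finset.single_le_sum (f := fun i => |w i|)
      (fun i _ => abs_nonneg _) (Finset.mem_univ j)
    have h2 : B ≤ |x - w j| := by
      have := abs_sub_abs_le_abs_sub x (w j)
      linarith
    have h3 : 0 < (x - w j) ^ 2 + v := by
      have : 0 < |x - w j| := by linarith
      have := sq_pos_of_pos this
      rw [sq_abs] at this
      linarith
    rw [abs_div, abs_mul, abs_of_pos (hε j), abs_of_pos h3, div_le_div_iff₀ h3 hB, mul_assoc]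
    refine mul_le_mul_of_nonneg_left ?_ (hε j).le
    rw [← sq_abs (x - w j)]
    nlinarith
  refine (Finset.abs_sum_le_sum_abs _ _).trans ((Finset.sum_le_sum fun j _ => h1 j).trans ?_)
  rw [← Finset.sum_div, div_le_one hB]
  linarith

include hε hγ1 in
lemma ph_limits : ∃ x0 x1 : ℝ, (∀ x ≤ x0, 0 < ph γ c ε w x) ∧ (∀ x ≥ x1, ph γ c ε w x < 0) := by
  obtain ⟨M, hM⟩ := sum_bound ε w hε
  set T := max M ((|c| + 2) / (1 - γ))
  have hT1 : M ≤ T := le_max_left _ _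
  have hg : 0 < 1 - γ := by linarith
  have hT2 : (|c| + 2) ≤ (1 - γ) * T := by
    have : (|c| + 2) / (1 - γ) ≤ T := le_max_right _ _
    rw [div_le_iff₀ hg] at this; linarith
  have hc := abs_le.1 (le_refl |c|)
  refine ⟨-T, T, fun x hx => ?_, fun x hx => ?_⟩
  · have h1 := abs_le.1 (hM x (VV γ ε w x) (VV_nonneg γ ε w x) (by
      have := neg_abs_le x; linarith))
    unfold ph
    nlinarith [h1.1, hc.1]
  · have h1 := abs_le.1 (hM x (VV γ ε w x) (VV_nonneg γ ε w x) (by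
      have := le_abs_self x; linarith [hx]))
    unfold ph
    nlinarith [h1.2, hc.2]
end
end

section
open Filter Topology

noncomputable def aa {N : ℕ} (γ : ℝ) (ε w : Fin N → ℝ) (x : ℝ) : ℝ :=
  ∑ j, ε j * (VV γ ε w x - (x - w j) ^ 2) / ((x - w j) ^ 2 + VV γ ε w x) ^ 2
noncomputable def bb {N : ℕ} (γ : ℝ) (ε w : Fin N → ℝ) (x : ℝ) : ℝ :=
  ∑ j, ε j * (x - w j) / ((x - w j) ^ 2 + VV γ ε w x) ^ 2
noncomputable def ee {N : ℕ} (γ : ℝ) (ε w : Fin N → ℝ) (x : ℝ) : ℝ :=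
  ∑ j, ε j / ((x - w j) ^ 2 + VV γ ε w x) ^ 2
noncomputable def DD {N : ℕ} (γ : ℝ) (ε w : Fin N → ℝ) (x : ℝ) : ℝ :=
  -(1 - γ) + aa γ ε w x + 2 * bb γ ε w x ^ 2 / ee γ ε w x

section
variable {N : ℕ} (hN : 0 < N) (γ c : ℝ) (hγ : 0 < γ) (hγ1 : γ < 1) (ε w : Fin N → ℝ)
  (hε : ∀ j, 0 < ε j)

include hN hγ hε in
lemma ee_pos (x : ℝ) : 0 < ee γ ε w x := by
  unfold ee
  refine Finset.sum_pos (fun j _ => ?_) ⟨⟨0, hN⟩, Finset.mem_univ _⟩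
  have := den_pos hN γ hγ ε w hε x j
  have := hε j
  positivity

include hN hγ hε in
lemma VV_deriv (x : ℝ) (hx : x ∈ Oset γ ε w) :
    HasDerivAt (VV γ ε w) (-(2 * bb γ ε w x) / ee γ ε w x) x := by
  rw [hasDerivAt_iff_tendsto_slope]
  have hV := VV_cont hN γ hγ ε w hε
  have hd := den_pos hN γ hγ ε w hε
  set d : ℝ → Fin N → ℝ := fun y j => (y - w j) ^ 2 + VV γ ε w y with hdd
  have hdc : ∀ j, Continuous fun y => d y j := fun j => by simp only [hdd]; fun_prop
  have hpos : ∀ y j, 0 < d y j := fun y j => hd y j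
  have hlim : Tendsto (fun y => -(∑ j, ε j * (x + y - 2 * w j) / (d x j * d y j)) /
      (∑ j, ε j / (d x j * d y j))) (𝓝[≠] x) (𝓝 (-(2 * bb γ ε w x) / ee γ ε w x)) := by
    have hc : Continuous (fun y => -(∑ j, ε j * (x + y - 2 * w j) / (d x j * d y j)) /
      (∑ j, ε j / (d x j * d y j))) := by
      refine Continuous.div (Continuous.neg (continuous_finsetSum _ fun j _ => ?_))
        (continuous_finsetSum _ fun j _ => ?_) fun y => ?_
      · have := hdc j
        exact Continuous.div (by fun_prop) (by fun_prop) fun y => (mul_pos (hpos x j) (hpos y j)).ne'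
      · have := hdc j
        exact Continuous.div (by fun_prop) (by fun_prop) fun y => (mul_pos (hpos x j) (hpos y j)).ne'
      · refine (Finset.sum_pos (fun j _ => ?_) ⟨⟨0, hN⟩, Finset.mem_univ _⟩).ne'
        exact div_pos (hε j) (mul_pos (hpos x j) (hpos y j))
    have := (hc.tendsto x).mono_left (nhdsWithin_le_nhds (s := {x}ᶜ))
    convert this using 3
    · rw [bb, Finset.mul_sum, ← Finset.sum_neg_distrib, ← Finset.sum_neg_distrib]
      refine Finset.sum_congr rfl fun j _ => ?_
      simp only [hdd]
      ring
    · unfold ee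
      refine Finset.sum_congr rfl fun j _ => ?_
      simp only [hdd]
      ring
  refine hlim.congr' ?_
  filter_upwards [self_mem_nhdsWithin, mem_nhdsWithin_of_mem_nhds
    ((O_open hN γ hγ ε w hε).mem_nhds hx)] with y hyx hy
  have hyx' : y - x ≠ 0 := sub_ne_zero.2 hyx
  have h1 := (VV_of_mem γ ε w x hx).2
  have h2 := (VV_of_mem γ ε w y hy).2
  have h3 : ∑ j, (ε j / d y j - ε j / d x j) = 0 := by
    rw [Finset.sum_sub_distrib]
    simp only [SS] at h1 h2
    simp only [hdd]
    linarith
  have h4 : ∀ j, ε j / d y j - ε j / d x j = -(y - x) * (ε j * (x + y - 2 * w j) / (d x j * d y j))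
      - (VV γ ε w y - VV γ ε w x) * (ε j / (d x j * d y j)) := by
    intro j
    have a1 := (hpos x j).ne'
    have a2 := (hpos y j).ne'
    field_simp
    simp only [hdd]
    ring
  simp only [h4] at h3
  rw [Finset.sum_sub_distrib, ← Finset.mul_sum, ← Finset.mul_sum] at h3
  have h5 : 0 < ∑ j, ε j / (d x j * d y j) := by
    refine Finset.sum_pos (fun j _ => ?_) ⟨⟨0, hN⟩, Finset.mem_univ _⟩
    exact div_pos (hε j) (mul_pos (hpos x j) (hpos y j))
  rw [slope_def_field, div_eq_div_iff h5.ne' hyx']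
  linarith

include hN hγ hε in
lemma ph_deriv (x : ℝ) (hx : x ∈ Oset γ ε w) :
    HasDerivAt (ph γ c ε w) (DD γ ε w x) x := by
  have hV := VV_deriv hN γ hγ ε w hε x hx
  set V' := -(2 * bb γ ε w x) / ee γ ε w x with hV'
  have h1 : ∀ j, HasDerivAt (fun x => ε j * (x - w j) / ((x - w j) ^ 2 + VV γ ε w x))
      ((ε j * ((x - w j) ^ 2 + VV γ ε w x) - ε j * (x - w j) * (2 * (x - w j) + V')) /
        ((x - w j) ^ 2 + VV γ ε w x) ^ 2) x := by
    intro j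
    have a1 : HasDerivAt (fun x : ℝ => ε j * (x - w j)) (ε j) x := by
      simpa using ((hasDerivAt_id x).sub_const (w j)).const_mul (ε j)
    have a2 : HasDerivAt (fun x : ℝ => (x - w j) ^ 2 + VV γ ε w x) (2 * (x - w j) + V') x := by
      exact ((((hasDerivAt_id x).sub_const (w j)).fun_pow 2).fun_add hV).congr_deriv (by simp)
    exact a1.div a2 (den_pos hN γ hγ ε w hε x j).ne'
  have h2 := HasDerivAt.fun_sum (u := Finset.univ) fun j _ => h1 j
  have h3 : HasDerivAt (fun x : ℝ => -(1 - γ) * x + c) (-(1 - γ)) x := by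
    simpa using ((hasDerivAt_id x).const_mul (-(1 - γ))).add_const c
  refine (h3.add h2).congr_deriv ?_
  have h4 : ∀ j, (ε j * ((x - w j) ^ 2 + VV γ ε w x) - ε j * (x - w j) * (2 * (x - w j) + V')) /
        ((x - w j) ^ 2 + VV γ ε w x) ^ 2 =
      ε j * (VV γ ε w x - (x - w j) ^ 2) / ((x - w j) ^ 2 + VV γ ε w x) ^ 2 -
       V' * (ε j * (x - w j) / ((x - w j) ^ 2 + VV γ ε w x) ^ 2) := by
    intro j; ring
  simp only [h4]
  rw [Finset.sum_sub_distrib, ← Finset.mul_sum]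
  unfold DD
  rw [hV']
  change _ + (aa γ ε w x - _ * bb γ ε w x) = _
  ring

/-- The point of the graph above `x`. -/
noncomputable def gp (γ : ℝ) (ε w : Fin N → ℝ) (x : ℝ) : ℂ := ⟨x, Real.sqrt (VV γ ε w x)⟩

lemma inv_re_im (u y e : ℝ) : (e : ℂ) / ⟨u, y⟩ = ⟨e * u / (u ^ 2 + y ^ 2), -(e * y / (u ^ 2 + y ^ 2))⟩ := by
  apply Complex.ext
  · rw [Complex.div_re]; simp [Complex.normSq_mk]; ring
  · rw [Complex.div_im]; simp [Complex.normSq_mk]; ring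

lemma rr_re (z : ℂ) : (rr γ c ε w z).re = γ * z.re + c +
    ∑ j, ε j * (z.re - w j) / ((z.re - w j) ^ 2 + z.im ^ 2) := by
  simp only [rr, Complex.add_re, Complex.re_sum]
  congr 1
  · simp
  · refine Finset.sum_congr rfl fun j _ => ?_
    have : z - (w j : ℂ) = ⟨z.re - w j, z.im⟩ := by apply Complex.ext <;> simp
    rw [this, inv_re_im]

lemma rr_im (z : ℂ) : (rr γ c ε w z).im = z.im * (γ - SS ε w z.re (z.im ^ 2)) := by
  simp only [rr, Complex.add_im, Complex.im_sum]
  rw [SS, mul_sub, Finset.mul_sum, sub_eq_add_neg, ← Finset.sum_neg_distrib]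
  congr 1
  · simp; ring
  · refine Finset.sum_congr rfl fun j _ => ?_
    have : z - (w j : ℂ) = ⟨z.re - w j, z.im⟩ := by apply Complex.ext <;> simp
    rw [this, inv_re_im]
    simp; ring

include hN hγ hε in
lemma bridge (z : ℂ) (hz : 0 < z.im) : rr γ c ε w z = starRingEnd ℂ z ↔
    VV γ ε w z.re = z.im ^ 2 ∧ ph γ c ε w z.re = 0 := by
  rw [Complex.ext_iff, rr_re, rr_im, Complex.conj_re, Complex.conj_im,
    VV_eq_iff hN γ hγ ε w hε _ _ (by positivity)]
  have h1 : z.im * (γ - SS ε w z.re (z.im ^ 2)) = -z.im ↔ SS ε w z.re (z.im ^ 2) = 1 + γ := by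
    constructor
    · intro h
      have : z.im * (γ - SS ε w z.re (z.im ^ 2) + 1) = 0 := by linarith
      rcases mul_eq_zero.1 this with h | h <;> linarith
    · intro h; rw [h]; ring
  rw [h1, and_comm]
  refine and_congr_right fun h => ?_
  rw [← VV_eq_iff hN γ hγ ε w hε _ _ (by positivity)] at h
  rw [ph, h]
  constructor <;> intro h <;> linarith

lemma ph_shift (s x : ℝ) : ph γ (c - s) ε w x = ph γ c ε w x - s := by
  unfold ph; ring

include hN hγ hε in
lemma DD_rd (x : ℝ) (hx : x ∈ Oset γ ε w) (h : DD γ ε w x < 0) : ‖rd γ ε w (gp γ ε w x)‖ < 1 := by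
  obtain ⟨hV, hS⟩ := VV_of_mem γ ε w x hx
  have he := ee_pos hN γ hγ ε w hε x
  have hd := den_pos hN γ hγ ε w hε x
  set V := VV γ ε w x with hVd
  have hs : Real.sqrt V ^ 2 = V := Real.sq_sqrt hV.le
  have h1 : rd γ ε w (gp γ ε w x) = ⟨γ + aa γ ε w x, 2 * Real.sqrt V * bb γ ε w x⟩ := by
    have h2 : ∀ j, (ε j : ℂ) / (gp γ ε w x - w j) ^ 2 =
      ⟨-(ε j * (V - (x - w j) ^ 2) / ((x - w j) ^ 2 + V) ^ 2),
        -(2 * Real.sqrt V * (ε j * (x - w j) / ((x - w j) ^ 2 + V) ^ 2))⟩ := by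
      intro j
      have hdj := (hd j).ne'
      have e1 : (gp γ ε w x - w j) ^ 2 = ⟨(x - w j) ^ 2 - V, 2 * (x - w j) * Real.sqrt V⟩ := by
        apply Complex.ext
        · simp [gp, sq]; rw [← hVd]; nlinarith [hs]
        · simp [gp, sq]; ring
      have e2 : ((x - w j) ^ 2 - V) ^ 2 + (2 * (x - w j) * Real.sqrt V) ^ 2 = ((x - w j) ^ 2 + V) ^ 2 := by
        rw [mul_pow, hs]; ring
      rw [e1, inv_re_im, e2]
      apply Complex.ext
      · simp; ring
      · simp; ring
    unfold rd
    simp only [h2]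
    apply Complex.ext
    · simp only [Complex.sub_re, Complex.re_sum, Complex.ofReal_re, Finset.sum_neg_distrib]
      simp [aa, hVd]
    · simp only [Complex.sub_im, Complex.im_sum, Complex.ofReal_im, Finset.sum_neg_distrib, ← Finset.mul_sum]
      simp [bb, hVd]
  have h3 : 1 + γ + aa γ ε w x = 2 * V * ee γ ε w x := by
    rw [← hS]
    unfold SS aa ee
    rw [← Finset.sum_add_distrib, Finset.mul_sum]
    refine Finset.sum_congr rfl fun j _ => ?_
    have hdj := (hd j).ne'
    rw [← hVd]
    field_simp
    ring
  have h4 : DD γ ε w x * (2 * V * ee γ ε w x) = Complex.normSq (rd γ ε w (gp γ ε w x)) - 1 := by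
    rw [h1, Complex.normSq_mk]
    unfold DD
    have : (-(1 - γ) + aa γ ε w x + 2 * bb γ ε w x ^ 2 / ee γ ε w x) * (2 * V * ee γ ε w x) =
      (-(1 - γ) + aa γ ε w x) * (2 * V * ee γ ε w x) + 4 * V * bb γ ε w x ^ 2 := by
      field_simp; ring
    rw [this, ← h3]
    have : 2 * √V * bb γ ε w x * (2 * √V * bb γ ε w x) = 4 * (√V ^ 2) * bb γ ε w x ^ 2 := by ring
    rw [this, hs]; ring
  have h5 : DD γ ε w x * (2 * V * ee γ ε w x) < 0 := mul_neg_of_neg_of_pos h (by positivity)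
  rw [h4, Complex.normSq_eq_norm_sq] at h5
  nlinarith [norm_nonneg (rd γ ε w (gp γ ε w x))]
end
end

section
open Filter Topology

noncomputable def Ps {N : ℕ} (γ c : ℝ) (ε w : Fin N → ℝ) (x : ℝ) : ℝ :=
  -(1 - γ) * x + c + ∑ j, ε j / (x - w j)

open Classical in
noncomputable def nidx {N : ℕ} (w : Fin N → ℝ) (x : ℝ) : ℕ := (Finset.univ.filter fun j => w j < x).card

section
variable {N : ℕ} (hN : 0 < N) (γ c : ℝ) (hγ : 0 < γ) (hγ1 : γ < 1) (ε w : Fin N → ℝ)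
  (hε : ∀ j, 0 < ε j)

include hN hγ hε in
lemma ph_gap (x : ℝ) (hx : x ∉ Oset γ ε w) : (∀ j, x ≠ w j) ∧ ph γ c ε w x = Ps γ c ε w x := by
  have h1 : ∀ j, x ≠ w j := by
    rintro j rfl
    exact hx (node_mem_O hN γ hγ ε w hε j)
  refine ⟨h1, ?_⟩
  unfold ph Ps
  rw [VV_of_not_mem γ ε w x hx]
  congr 1
  refine Finset.sum_congr rfl fun j _ => ?_
  have := sub_ne_zero.2 (h1 j)
  field_simp
  simp

include hγ1 hε in
lemma Ps_inj_aux (x y : ℝ) (hxy : x < y) (hx : ∀ j, x ≠ w j) (hy : ∀ j, y ≠ w j)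
    (h : ∀ j, w j < x ↔ w j < y) : Ps γ c ε w y < Ps γ c ε w x := by
  unfold Ps
  have : ∑ j, ε j / (y - w j) ≤ ∑ j, ε j / (x - w j) := by
    refine Finset.sum_le_sum fun j _ => ?_
    rcases lt_or_gt_of_ne (hx j) with h1 | h1
    · have h2 : y < w j := by
        by_contra h3
        push Not at h3
        rcases h3.lt_or_eq with h3 | h3
        · have := (h j).2 h3; linarith
        · exact hy j h3.symm
      have e1 : ε j / (y - w j) = -(ε j / (w j - y)) := by rw [← div_neg]; ring
      have e2 : ε j / (x - w j) = -(ε j / (w j - x)) := by rw [← div_neg]; ring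
      rw [e1, e2]
      have := div_le_div_of_nonneg_left (hε j).le (show 0 < w j - y by linarith) (show w j - y ≤ w j - x by linarith)
      linarith
    · exact div_le_div_of_nonneg_left (hε j).le (by linarith) (by linarith)
  nlinarith

lemma nidx_iff (x y : ℝ) (hxy : x ≤ y) (h : nidx w x = nidx w y) (j : Fin N) : w j < x ↔ w j < y := by
  classical
  have hsub : (Finset.univ.filter fun j => w j < x) ⊆ (Finset.univ.filter fun j => w j < y) := by
    intro i hi
    simp at hi ⊢; linarith
  have := Finset.eq_of_subset_of_card_le hsub (by unfold nidx at h; convert h.ge)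
  have h2 := Finset.ext_iff.1 this j
  simpa using h2

include hγ1 hε in
lemma Ps_inj (x y : ℝ) (hx : ∀ j, x ≠ w j) (hy : ∀ j, y ≠ w j)
    (hx0 : Ps γ c ε w x = 0) (hy0 : Ps γ c ε w y = 0)
    (h : nidx w x = nidx w y) : x = y := by
  rcases lt_trichotomy x y with h1 | h1 | h1
  · have := Ps_inj_aux γ c hγ1 ε w hε x y h1 hx hy (nidx_iff w x y h1.le h)
    linarith
  · exact h1
  · have := Ps_inj_aux γ c hγ1 ε w hε y x h1 hy hx (nidx_iff w y x h1.le h.symm)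
    linarith

lemma Ps_contAt (x : ℝ) (hx : ∀ j, x ≠ w j) : ContinuousAt (Ps γ c ε w) x := by
  unfold Ps
  refine ContinuousAt.add (by fun_prop) (tendsto_finsetSum _ fun j _ => ?_)
  exact ContinuousAt.div (by fun_prop) (by fun_prop) (sub_ne_zero.2 (hx j))

include hε in
lemma Ps_near (hw : StrictMono w) (j : Fin N) : ∀ᶠ δ in 𝓝[>] (0:ℝ), 0 < Ps γ c ε w (w j + δ) ∧ Ps γ c ε w (w j - δ) < 0 := by
  classical
  set g : ℝ → ℝ := fun x => -(1 - γ) * x + c + ∑ i ∈ Finset.univ.erase j, ε i / (x - w i) with hg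
  have hgc : ContinuousAt g (w j) := by
    refine ContinuousAt.add (by fun_prop) (tendsto_finsetSum _ fun i hi => ?_)
    refine ContinuousAt.div (by fun_prop) (by fun_prop) (sub_ne_zero.2 ?_)
    intro h
    exact (Finset.ne_of_mem_erase hi) (hw.injective h).symm
  have hP : ∀ x, Ps γ c ε w x = ε j / (x - w j) + g x := by
    intro x
    simp only [hg, Ps]
    rw [← Finset.add_sum_erase _ _ (Finset.mem_univ j)]
    ring
  have hinv : Tendsto (fun δ : ℝ => ε j / δ) (𝓝[>] 0) atTop := by
    simpa [div_eq_mul_inv] using tendsto_inv_nhdsGT_zero.const_mul_atTop (hε j)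
  have l1 : Tendsto (fun δ : ℝ => w j + δ) (𝓝[>] 0) (𝓝 (w j)) := by
    have : Tendsto (fun δ : ℝ => w j + δ) (𝓝 0) (𝓝 (w j + 0)) := Continuous.tendsto (by fun_prop) 0
    rw [add_zero] at this
    exact this.mono_left nhdsWithin_le_nhds
  have l2 : Tendsto (fun δ : ℝ => w j - δ) (𝓝[>] 0) (𝓝 (w j)) := by
    have : Tendsto (fun δ : ℝ => w j - δ) (𝓝 0) (𝓝 (w j - 0)) := Continuous.tendsto (by fun_prop) 0
    rw [sub_zero] at this
    exact this.mono_left nhdsWithin_le_nhds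
  have t1 := hinv.atTop_add (hgc.tendsto.comp l1)
  have t2 := hinv.atTop_add (hgc.tendsto.comp l2).neg
  filter_upwards [t1.eventually_gt_atTop 0, t2.eventually_gt_atTop 0] with δ h1 h2
  rw [hP, hP]
  simp only [Function.comp] at h1 h2
  constructor
  · simpa using h1
  · have : ε j / (w j - δ - w j) = -(ε j / δ) := by
      rw [← div_neg]; congr 1; ring
    rw [this]; linarith

include hε hγ1 in
lemma Ps_limits : ∃ x0 x1 : ℝ, (∀ x ≤ x0, 0 < Ps γ c ε w x) ∧ (∀ x ≥ x1, Ps γ c ε w x < 0) := by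
  obtain ⟨M, hM⟩ := sum_bound ε w hε
  have hg : 0 < 1 - γ := by linarith
  set T := max M ((|c| + 2) / (1 - γ))
  have hT1 : M ≤ T := le_max_left _ _
  have hT2 : (|c| + 2) ≤ (1 - γ) * T := by
    have : (|c| + 2) / (1 - γ) ≤ T := le_max_right _ _
    rw [div_le_iff₀ hg] at this; linarith
  have hc := abs_le.1 (le_refl |c|)
  have hs : ∀ x, ∑ j, ε j * (x - w j) / ((x - w j) ^ 2 + 0) = ∑ j, ε j / (x - w j) := by
    intro x
    refine Finset.sum_congr rfl fun j _ => ?_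
    rcases eq_or_ne (x - w j) 0 with h | h
    · simp [h]
    · rw [add_zero]; field_simp
  refine ⟨-T, T, fun x hx => ?_, fun x hx => ?_⟩
  · have h1 := abs_le.1 (hM x 0 le_rfl (by have := neg_abs_le x; linarith))
    rw [hs] at h1
    unfold Ps
    nlinarith [h1.1, hc.1]
  · have h1 := abs_le.1 (hM x 0 le_rfl (by have := le_abs_self x; linarith [hx]))
    rw [hs] at h1
    unfold Ps
    nlinarith [h1.2, hc.2]

lemma nidx_le (x : ℝ) : nidx w x ≤ N := by
  classical
  unfold nidx
  exact (Finset.card_le_univ _).trans (by simp)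

lemma nidx_eq (hw : StrictMono w) (k : ℕ) (hk : k ≤ N) (x : ℝ) (h1 : ∀ j : Fin N, j.1 < k → w j < x)
    (h2 : ∀ j : Fin N, k ≤ j.1 → x < w j) : nidx w x = k := by
  classical
  unfold nidx
  have : (Finset.univ.filter fun j => w j < x) = Finset.univ.filter fun j : Fin N => j.1 < k := by
    ext j
    simp only [Finset.mem_filter, Finset.mem_univ, true_and]
    constructor
    · intro h; by_contra h3; have := h2 j (by omega); linarith
    · exact h1 j
  have h3 : (Finset.univ.filter fun j : Fin N => j.1 < k).card = k := by
    rw [Fin.card_filter_val_lt]; omega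
  convert h3

include hN hγ1 hε in
/-- there is a zero in every interval -/
lemma Ps_exists (hw : StrictMono w) (k : ℕ) (hk : k ≤ N) :
    ∃ x, (∀ j, x ≠ w j) ∧ Ps γ c ε w x = 0 ∧ nidx w x = k := by
  obtain ⟨x0, x1, hx0, hx1⟩ := Ps_limits γ c hγ1 ε w hε
  have ex : ∃ a b, a ≤ b ∧ 0 < Ps γ c ε w a ∧ Ps γ c ε w b < 0 ∧ (∀ j : Fin N, j.1 < k → w j < a) ∧
      (∀ j : Fin N, k ≤ j.1 → b < w j) := by
    have hmin : ∀ j : Fin N, w ⟨0, hN⟩ ≤ w j := fun j => hw.monotone (Fin.mk_le_of_le_val (Nat.zero_le _))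
    have hmax : ∀ j : Fin N, w j ≤ w ⟨N - 1, by omega⟩ := fun j => hw.monotone (by
      rw [Fin.le_def]; simp; omega)
    rcases Nat.eq_zero_or_pos k with rfl | hk0
    · obtain ⟨δ, ⟨-, h2⟩, hδ⟩ := ((Ps_near γ c ε w hε hw ⟨0, hN⟩).and self_mem_nhdsWithin).exists
      have hδ : 0 < δ := hδ
      refine ⟨min x0 (w ⟨0, hN⟩ - δ), _, min_le_right _ _, hx0 _ (min_le_left _ _), h2, ?_, ?_⟩
      · intro j hj; omega
      · intro j _; linarith [hmin j]
    · rcases hk.lt_or_eq with hkN | rfl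
      · set j0 : Fin N := ⟨k - 1, by omega⟩
        set j1 : Fin N := ⟨k, hkN⟩
        have hlt : w j0 < w j1 := hw (by rw [Fin.lt_def]; simp [j0, j1]; omega)
        obtain ⟨δ, ⟨h1, h2⟩, hδ⟩ := (((Ps_near γ c ε w hε hw j0).and
          (Ps_near γ c ε w hε hw j1)).and (Ioo_mem_nhdsGT (show 0 < (w j1 - w j0) / 2 by linarith))).exists
        refine ⟨w j0 + δ, w j1 - δ, by linarith [hδ.2], h1.1, h2.2, ?_, ?_⟩
        · intro j hj
          have : w j ≤ w j0 := hw.monotone (by rw [Fin.le_def]; simp [j0]; omega)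
          linarith [hδ.1]
        · intro j hj
          have : w j1 ≤ w j := hw.monotone (by rw [Fin.le_def]; simp [j1]; omega)
          linarith [hδ.1]
      · obtain ⟨δ, ⟨h1, -⟩, hδ⟩ := ((Ps_near γ c ε w hε hw ⟨k - 1, by omega⟩).and self_mem_nhdsWithin).exists
        have hδ : 0 < δ := hδ
        refine ⟨w ⟨k-1, by omega⟩ + δ, max x1 (w ⟨k-1, by omega⟩ + δ), le_max_right _ _, h1, hx1 _ (le_max_left _ _), ?_, ?_⟩
        · intro j _; linarith [hmax j]
        · intro j hj; omega
  obtain ⟨a, b, hab, ha, hb, h1, h2⟩ := ex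
  have hne : ∀ x ∈ Set.Icc a b, (∀ j : Fin N, j.1 < k → w j < x) ∧ (∀ j : Fin N, k ≤ j.1 → x < w j) :=
    fun x hx => ⟨fun j hj => (h1 j hj).trans_le hx.1, fun j hj => hx.2.trans_lt (h2 j hj)⟩
  have hne' : ∀ x ∈ Set.Icc a b, ∀ j, x ≠ w j := by
    intro x hx j
    rcases lt_or_ge j.1 k with h | h
    · exact ((hne x hx).1 j h).ne'
    · exact ((hne x hx).2 j h).ne
  have hc : ContinuousOn (Ps γ c ε w) (Set.Icc a b) := fun x hx =>
    (Ps_contAt γ c ε w x (hne' x hx)).continuousWithinAt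
  obtain ⟨x, hx, hx0⟩ := intermediate_value_Icc' hab hc ⟨hb.le, ha.le⟩
  exact ⟨x, hne' x hx, hx0, nidx_eq w hw k hk x (hne x hx).1 (hne x hx).2⟩

include hN hγ1 hε in
lemma real_count (hw : StrictMono w) : {x : ℝ | (∀ j, x ≠ w j) ∧ Ps γ c ε w x = 0}.Finite ∧
    {x : ℝ | (∀ j, x ≠ w j) ∧ Ps γ c ε w x = 0}.ncard = N + 1 := by
  have himg : nidx w '' {x : ℝ | (∀ j, x ≠ w j) ∧ Ps γ c ε w x = 0} = (Finset.range (N + 1) : Set ℕ) := by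
    ext k
    simp only [Set.mem_image, Finset.coe_range, Set.mem_Iio]
    constructor
    · rintro ⟨x, -, rfl⟩
      have := nidx_le w x
      omega
    · intro hk
      obtain ⟨x, h1, h2, h3⟩ := Ps_exists hN γ c hγ1 ε w hε hw k (by omega)
      exact ⟨x, ⟨h1, h2⟩, h3⟩
  have hinj : Set.InjOn (nidx w) {x : ℝ | (∀ j, x ≠ w j) ∧ Ps γ c ε w x = 0} := by
    intro x hx y hy h
    exact Ps_inj γ c hγ1 ε w hε x y hx.1 hy.1 hx.2 hy.2 h
  constructor
  · refine Set.Finite.of_finite_image ?_ hinj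
    rw [himg]; exact Finset.finite_toSet _
  · rw [← Set.ncard_image_of_injOn hinj, himg, Set.ncard_coe_finset, Finset.card_range]
end
end

section
open Filter Topology

section
variable {N : ℕ} (hN : 0 < N) (γ c : ℝ) (hγ : 0 < γ) (hγ1 : γ < 1) (ε w : Fin N → ℝ)
  (hε : ∀ j, 0 < ε j) (hw : StrictMono w)

lemma alt_zeros (φ : ℝ → ℝ) (hφ : Continuous φ) (m : ℕ) (xs : ℕ → ℝ)
    (hxs : ∀ k l, k < l → l ≤ m → xs k < xs l) (halt : ∀ k < m, φ (xs k) * φ (xs (k+1)) < 0) :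
    ∃ T : Finset ℝ, T.card = m ∧ ∀ t ∈ T, φ t = 0 ∧ xs 0 ≤ t ∧ t ≤ xs m := by
  classical
  have h1 : ∀ k : Fin m, ∃ t, φ t = 0 ∧ xs k < t ∧ t < xs (k + 1) := by
    intro k
    have ha := halt k k.2
    have hlt := hxs k (k+1) (by omega) (by omega)
    have h0 : (0:ℝ) ∈ Set.uIcc (φ (xs k)) (φ (xs (k+1))) := by
      rw [Set.mem_uIcc]
      rcases mul_neg_iff.1 ha with h | h
      · right; exact ⟨h.2.le, h.1.le⟩
      · left; exact ⟨h.1.le, h.2.le⟩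
    obtain ⟨t, ht, ht0⟩ := intermediate_value_uIcc (hφ.continuousOn (s := Set.uIcc (xs k) (xs (k+1)))) h0
    rw [Set.uIcc_of_le hlt.le] at ht
    refine ⟨t, ht0, lt_of_le_of_ne ht.1 ?_, lt_of_le_of_ne ht.2 ?_⟩
    · rintro rfl; rw [ht0] at ha; simp at ha
    · rintro rfl; rw [ht0] at ha; simp at ha
  choose t ht using h1
  have hmono : ∀ k l : Fin m, k < l → t k < t l := by
    intro k l hkl
    have h2 : xs (k + 1) ≤ xs l := by
      rcases Nat.lt_or_ge (k.1 + 1) l.1 with h | h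
      · exact (hxs _ _ h (by omega)).le
      · have : k.1 + 1 = l.1 := by have : k.1 < l.1 := hkl; omega
        rw [this]
    linarith [(ht k).2.2, (ht l).2.1]
  have hinj : Function.Injective t := (show StrictMono t from hmono).injective
  refine ⟨Finset.univ.image t, ?_, ?_⟩
  · rw [Finset.card_image_of_injective _ hinj]; simp
  · intro x hx
    obtain ⟨k, -, rfl⟩ := Finset.mem_image.1 hx
    have hmon : ∀ k l, k ≤ l → l ≤ m → xs k ≤ xs l := by
      intro k l h1 h2
      rcases h1.lt_or_eq with h | rfl
      · exact (hxs _ _ h h2).le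
      · exact le_rfl
    refine ⟨(ht k).1, ?_, ?_⟩
    · have := hmon 0 k (by omega) (by omega); linarith [(ht k).2.1]
    · have := hmon (k+1) m (by omega) (by omega); linarith [(ht k).2.2]

include hN hγ hε in
lemma gp_spec (x : ℝ) (hx : x ∈ Oset γ ε w) (h : ph γ c ε w x = 0) :
    0 < (gp γ ε w x).im ∧ rr γ c ε w (gp γ ε w x) = starRingEnd ℂ (gp γ ε w x) := by
  have hV := (VV_of_mem γ ε w x hx).1
  have h1 : 0 < (gp γ ε w x).im := Real.sqrt_pos.2 hV
  refine ⟨h1, (bridge hN γ c hγ ε w hε _ h1).2 ⟨?_, h⟩⟩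
  simp only [gp]
  rw [Real.sq_sqrt hV.le]

lemma gp_inj : Function.Injective (gp γ ε w) := by
  intro x y h
  exact congrArg Complex.re h

include hN hγ hε in
lemma upper_eq : {z : ℂ | 0 < z.im ∧ rr γ c ε w z = starRingEnd ℂ z} =
    gp γ ε w '' {x | x ∈ Oset γ ε w ∧ ph γ c ε w x = 0} := by
  ext z
  constructor
  · rintro ⟨h1, h2⟩
    obtain ⟨h3, h4⟩ := (bridge hN γ c hγ ε w hε z h1).1 h2
    refine ⟨z.re, ⟨?_, h4⟩, ?_⟩
    · rw [mem_O_iff, h3]; positivity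
    · apply Complex.ext
      · rfl
      · simp only [gp]; rw [h3, Real.sqrt_sq h1.le]
  · rintro ⟨x, ⟨h1, h2⟩, rfl⟩
    exact gp_spec hN γ c hγ ε w hε x h1 h2

include hN hγ hε hw in
lemma desc_bound (s : ℝ) (T : Finset ℝ) (hT : ∀ t ∈ T, t ∈ Oset γ ε w ∧ ph γ c ε w t = s ∧ DD γ ε w t < 0) :
    T.card ≤ N - 1 := by
  classical
  rw [← Finset.card_image_of_injective T (gp_inj γ ε w)]
  refine fatou_bound hN γ (c - s) hγ ε w hε hw.injective _ fun a ha => ?_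
  obtain ⟨t, ht, rfl⟩ := Finset.mem_image.1 ha
  obtain ⟨h1, h2, h3⟩ := hT t ht
  obtain ⟨h4, h5⟩ := gp_spec hN γ (c - s) hγ ε w hε t h1 (by rw [ph_shift, h2]; ring)
  exact ⟨h4, h5, DD_rd hN γ hγ ε w hε t h1 h3⟩

include hN hγ hγ1 hε hw in
theorem upper_count
    (C1 : ∀ x, x ∉ Oset γ ε w → ph γ c ε w x = 0 → (∀ j, x < w j) ∨ (∀ j, w j < x))
    (xs : ℕ → ℝ) (hxs : ∀ k l, k < l → l ≤ 2 * N - 1 → xs k < xs l)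
    (halt : ∀ k < 2 * N - 1, ph γ c ε w (xs k) * ph γ c ε w (xs (k+1)) < 0)
    (C2 : ∀ x, x ∉ Oset γ ε w → ph γ c ε w x = 0 → x < xs 0 ∨ xs (2 * N - 1) < x) :
    {z : ℂ | 0 < z.im ∧ rr γ c ε w z = starRingEnd ℂ z}.Finite ∧
    {z : ℂ | 0 < z.im ∧ rr γ c ε w z = starRingEnd ℂ z}.ncard = 2 * N - 1 := by
  classical
  have hfin : {z : ℂ | 0 < z.im ∧ rr γ c ε w z = starRingEnd ℂ z}.Finite := by
    refine (cycle_finite hN γ c hγ ε w hε hw.injective).subset fun z hz => ?_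
    exact ⟨hz.1.ne', hz.2⟩
  refine ⟨hfin, ?_⟩
  rw [upper_eq hN γ c hγ ε w hε] at hfin ⊢
  rw [(gp_inj γ ε w).injOn.ncard_image]
  have hOf := hfin.of_finite_image (gp_inj γ ε w).injOn
  have hφ := ph_cont hN γ c hγ ε w hε
  set ZO := hOf.toFinset with hZO
  have mZO : ∀ x, x ∈ ZO ↔ x ∈ Oset γ ε w ∧ ph γ c ε w x = 0 := fun x => by simp [hZO]
  rw [Set.ncard_eq_toFinset_card _ hOf]
  change ZO.card = _
  -- gap zeros
  have hgi : Set.InjOn (nidx w) {x | x ∉ Oset γ ε w ∧ ph γ c ε w x = 0} := by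
    intro x hx y hy h
    obtain ⟨a1, a2⟩ := ph_gap hN γ c hγ ε w hε x hx.1
    obtain ⟨b1, b2⟩ := ph_gap hN γ c hγ ε w hε y hy.1
    exact Ps_inj γ c hγ1 ε w hε x y a1 b1 (a2 ▸ hx.2) (b2 ▸ hy.2) h
  have hgs : nidx w '' {x | x ∉ Oset γ ε w ∧ ph γ c ε w x = 0} ⊆ (({0, N} : Finset ℕ) : Set ℕ) := by
    rintro _ ⟨x, hx, rfl⟩
    simp only [Finset.coe_insert, Finset.coe_singleton, Set.mem_insert_iff, Set.mem_singleton_iff]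
    rcases C1 x hx.1 hx.2 with h | h
    · left
      exact nidx_eq w hw 0 (by omega) x (fun j hj => by omega) (fun j _ => h j)
    · right
      exact nidx_eq w hw N le_rfl x (fun j _ => h j) (fun j hj => by omega)
  have hgf : {x | x ∉ Oset γ ε w ∧ ph γ c ε w x = 0}.Finite :=
    ((Finset.finite_toSet _).subset hgs).of_finite_image hgi
  set Zg := hgf.toFinset with hZg
  have mZg : ∀ x, x ∈ Zg ↔ x ∉ Oset γ ε w ∧ ph γ c ε w x = 0 := fun x => by simp [hZg]
  have hZgc : Zg.card ≤ 2 := by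
    rw [← Set.ncard_eq_toFinset_card _ hgf, ← hgi.ncard_image]
    refine (Set.ncard_le_ncard hgs (Finset.finite_toSet _)).trans ?_
    rw [Set.ncard_coe_finset]
    exact Finset.card_le_two
  have hdisj : Disjoint ZO Zg := by
    rw [Finset.disjoint_left]
    intro x h1 h2
    exact ((mZg x).1 h2).1 ((mZO x).1 h1).1
  apply le_antisymm
  · obtain ⟨x0, x1, h0, h1⟩ := ph_limits γ c hγ1 ε w hε
    set RO := ZO.filter fun x => ∃ δ > 0, ∀ y ∈ Set.Ioo x (x + δ), ph γ c ε w y < 0 with hRO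
    set LO := ZO.filter fun x => ∃ δ > 0, ∀ y ∈ Set.Ioo (x - δ) x, 0 < ph γ c ε w y with hLO
    have hR : RO.card ≤ N - 1 := by
      obtain ⟨s, T', h2, h3⟩ := right_pts (ph γ c ε w) (DD γ ε w) hφ (Oset γ ε w) (O_open hN γ hγ ε w hε)
        (fun x hx => ph_deriv hN γ c hγ ε w hε x hx) RO (fun x hx => by
          obtain ⟨a, b⟩ := Finset.mem_filter.1 hx
          exact ⟨((mZO x).1 a).1, ((mZO x).1 a).2, b⟩)
      rw [← h2]
      exact desc_bound hN γ c hγ ε w hε hw s T' h3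
    have hL : LO.card ≤ N - 1 := by
      obtain ⟨s, T', h2, h3⟩ := left_pts (ph γ c ε w) (DD γ ε w) hφ (Oset γ ε w) (O_open hN γ hγ ε w hε)
        (fun x hx => ph_deriv hN γ c hγ ε w hε x hx) LO (fun x hx => by
          obtain ⟨a, b⟩ := Finset.mem_filter.1 hx
          exact ⟨((mZO x).1 a).1, ((mZO x).1 a).2, b⟩)
      rw [← h2]
      exact desc_bound hN γ c hγ ε w hε hw s T' h3
    have hcomb := comb (ph γ c ε w) hφ x0 x1 h0 h1 (ZO ∪ Zg) (fun x => by
      rw [Finset.mem_union, mZO, mZg]; tauto) (RO ∪ Zg) (LO ∪ Zg)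
      (fun x hx h => by
        rw [Finset.mem_union] at hx ⊢
        rcases hx with hx | hx
        · left; exact Finset.mem_filter.2 ⟨hx, h⟩
        · right; exact hx)
      (fun x hx h => by
        rw [Finset.mem_union] at hx ⊢
        rcases hx with hx | hx
        · left; exact Finset.mem_filter.2 ⟨hx, h⟩
        · right; exact hx)
    rw [Finset.card_union_of_disjoint hdisj] at hcomb
    have := Finset.card_union_le RO Zg
    have := Finset.card_union_le LO Zg
    omega
  · obtain ⟨T, hTc, hT⟩ := alt_zeros (ph γ c ε w) hφ (2 * N - 1) xs hxs halt
    rw [← hTc]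
    refine Finset.card_le_card fun t ht => ?_
    obtain ⟨h1, h2, h3⟩ := hT t ht
    rw [mZO]
    refine ⟨?_, h1⟩
    by_contra h
    rcases C2 t h h1 with h4 | h4 <;> linarith
end
end

section
open Filter Topology

section
variable {N : ℕ} (hN : 0 < N) (γ c : ℝ) (hγ : 0 < γ) (hγ1 : γ < 1) (ε w : Fin N → ℝ)
  (hε : ∀ j, 0 < ε j) (hw : StrictMono w)

lemma rr_ofReal (x : ℝ) : rr γ c ε w x = (x:ℂ) ↔ Ps γ c ε w x = 0 := by
  have : rr γ c ε w x = ((Ps γ c ε w x + x : ℝ) : ℂ) := by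
    simp only [rr, Ps]
    push_cast
    ring
  rw [this]
  norm_cast
  constructor <;> intro h <;> linarith

include hN hγ hγ1 hε hw in
theorem final_count
    (hU : {z : ℂ | 0 < z.im ∧ rr γ c ε w z = starRingEnd ℂ z}.Finite ∧
    {z : ℂ | 0 < z.im ∧ rr γ c ε w z = starRingEnd ℂ z}.ncard = 2 * N - 1) :
    ∃ (ε : Fin N → ℝ) (z : Fin N → ℂ),
      (∀ j, 0 < ε j) ∧ Function.Injective z ∧
      (lensSolutions N γ ε z).Finite ∧
      (lensSolutions N γ ε z).ncard = 5 * N - 1 := by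
  set t : ℝ := -c / (1 - γ) with ht
  have hinj : Function.Injective (fun v : ℂ => Complex.I * (v + (t:ℝ))) := by
    intro a b h
    have := mul_left_cancel₀ Complex.I_ne_zero h
    exact add_right_cancel this
  refine ⟨ε, fun j => Complex.I * (w j + (t : ℝ)), hε, ?_, ?_⟩
  · intro a b h
    have := hinj h
    exact hw.injective (by exact_mod_cast this)
  have hg : (1 - γ) ≠ 0 := by linarith
  have key : lensSolutions N γ ε (fun j => Complex.I * (w j + (t : ℝ))) =
      (fun v : ℂ => Complex.I * (v + (t : ℝ))) ''
        {v : ℂ | (∀ j, v ≠ w j) ∧ rr γ c ε w v = starRingEnd ℂ v} := by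
    have hc : (c : ℂ) = -(1 - γ) * t := by
      rw [ht]; push_cast
      have : (1 - γ : ℂ) ≠ 0 := by exact_mod_cast hg
      field_simp
    ext u
    obtain ⟨v, rfl⟩ : ∃ v : ℂ, Complex.I * (v + (t:ℝ)) = u := by
      refine ⟨-Complex.I * u - t, ?_⟩
      have := Complex.I_mul_I
      linear_combination (-u) * this
    rw [hinj.mem_set_image]
    simp only [lensSolutions, Set.mem_ofPred_eq]
    refine and_congr ?_ ?_
    · refine forall_congr' fun j => ?_
      rw [Ne, Ne, not_iff_not]
      exact ⟨fun h => hinj h, fun h => by rw [h]⟩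
    · have h1 : ∀ j, (ε j : ℂ) / (Complex.I * (v + (t:ℝ)) - Complex.I * (w j + (t : ℝ))) =
          -Complex.I * ((ε j : ℂ) / (v - w j)) := by
        intro j
        have : Complex.I * (v + (t:ℝ)) - Complex.I * (w j + (t : ℝ)) = Complex.I * (v - w j) := by ring
        rw [this, div_mul_eq_div_div, div_eq_mul_inv _ Complex.I, Complex.inv_I]
        ring
      simp only [h1]
      rw [← Finset.mul_sum, rr, hc]
      simp only [map_mul, map_add, Complex.conj_I, Complex.conj_ofReal]
      constructor
      · intro h
        have := mul_left_cancel₀ (neg_ne_zero.2 Complex.I_ne_zero) (h.trans (show _ = -Complex.I *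
          (γ * (v + t) + ∑ j, (ε j : ℂ) / (v - w j)) by ring))
        linear_combination -this
      · intro h
        linear_combination (Complex.I) * h
  rw [key, hinj.injOn.ncard_image]
  set U := {z : ℂ | 0 < z.im ∧ rr γ c ε w z = starRingEnd ℂ z} with hUd
  set R := {x : ℝ | (∀ j, x ≠ w j) ∧ Ps γ c ε w x = 0} with hRd
  have hR := real_count hN γ c hγ1 ε w hε hw
  have hS : {v : ℂ | (∀ j, v ≠ w j) ∧ rr γ c ε w v = starRingEnd ℂ v} =
      (U ∪ (starRingEnd ℂ) '' U) ∪ Complex.ofReal '' R := by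
    ext v
    simp only [Set.mem_union]
    constructor
    · rintro ⟨h1, h2⟩
      rcases lt_trichotomy v.im 0 with h | h | h
      · left; right
        refine ⟨starRingEnd ℂ v, ⟨by simpa using h, ?_⟩, by simp⟩
        rw [rr_conj, h2]
      · right
        have hv : (v.re : ℂ) = v := by apply Complex.ext <;> simp [h]
        refine ⟨v.re, ⟨fun j hj => h1 j (by rw [← hv, hj]), ?_⟩, hv⟩
        rw [← rr_ofReal, hv, h2]
        exact Complex.conj_eq_iff_im.2 h
      · left; left; exact ⟨h, h2⟩
    · rintro ((⟨h1, h2⟩ | ⟨u, ⟨h1, h2⟩, rfl⟩) | ⟨x, ⟨h1, h2⟩, rfl⟩)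
      · exact ⟨ne_node_of_im w v h1.ne', h2⟩
      · exact ⟨ne_node_of_im w _ (by simpa using h1.ne'), by rw [rr_conj, h2]⟩
      · refine ⟨fun j hj => h1 j (by exact_mod_cast hj), ?_⟩
        rw [Complex.conj_ofReal]
        exact (rr_ofReal γ c ε w x).2 h2
  have hci : Function.Injective (starRingEnd ℂ) := (starRingEnd ℂ).injective
  have d1 : Disjoint U ((starRingEnd ℂ) '' U) := by
    rw [Set.disjoint_left]
    rintro z h1 ⟨u, h2, rfl⟩
    have a := h1.1
    have b := h2.1
    simp at a; linarith
  have d2 : Disjoint (U ∪ (starRingEnd ℂ) '' U) (Complex.ofReal '' R) := by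
    rw [Set.disjoint_left]
    rintro z h1 ⟨u, h2, rfl⟩
    rcases h1 with h1 | ⟨v, h1, h3⟩
    · have := h1.1; simp at this
    · have := h1.1
      have h4 := congrArg Complex.im h3
      simp at h4; linarith
  have hf1 : ((starRingEnd ℂ) '' U).Finite := hU.1.image _
  have hf2 : (Complex.ofReal '' R).Finite := hR.1.image _
  rw [hS]
  refine ⟨((hU.1.union hf1).union hf2).image _, ?_⟩
  rw [Set.ncard_union_eq d2 (hU.1.union hf1) hf2, Set.ncard_union_eq d1 hU.1 hf1,
    hci.injOn.ncard_image, Complex.ofReal_injective.injOn.ncard_image, hU.2, hR.2]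
  omega
end
end

section
open Filter Topology

noncomputable def FF {m : ℕ} (β : ℝ) (ξ : Fin m → ℝ) : ℝ :=
  (∏ i, ∏ j, if i = j then 1 else |ξ i - ξ j|) * ∏ i, |1 - ξ i ^ 2| ^ β

lemma FF_cont {m : ℕ} (β : ℝ) (hβ : 0 < β) : Continuous (FF (m := m) β) := by
  unfold FF
  refine Continuous.mul (continuous_finsetProd _ fun i _ => continuous_finsetProd _ fun j _ => ?_)
    (continuous_finsetProd _ fun i _ => ?_)
  · split_ifs <;> fun_prop
  · exact Continuous.rpow_const (by fun_prop) fun x => Or.inr hβ.le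

lemma FF_nonneg {m : ℕ} (β : ℝ) (ξ : Fin m → ℝ) : 0 ≤ FF β ξ := by
  unfold FF
  refine mul_nonneg (Finset.prod_nonneg fun i _ => Finset.prod_nonneg fun j _ => ?_)
    (Finset.prod_nonneg fun i _ => ?_)
  · split_ifs <;> positivity
  · positivity

lemma FF_ne {m : ℕ} (β : ℝ) (hβ : 0 < β) (ξ : Fin m → ℝ) (h : FF β ξ ≠ 0) :
    Function.Injective ξ ∧ ∀ i, 1 - ξ i ^ 2 ≠ 0 := by
  unfold FF at h
  have h1 := left_ne_zero_of_mul h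
  have h2 := right_ne_zero_of_mul h
  rw [Finset.prod_ne_zero_iff] at h1 h2
  constructor
  · intro i j hij
    by_contra hne
    have := Finset.prod_ne_zero_iff.1 (h1 i (Finset.mem_univ _)) j (Finset.mem_univ _)
    rw [if_neg hne, hij] at this
    simp at this
  · intro i hi
    have := h2 i (Finset.mem_univ _)
    rw [hi, abs_zero, Real.zero_rpow hβ.ne'] at this
    exact this rfl

lemma FF_log {m : ℕ} (β : ℝ) (hβ : 0 < β) (ξ : Fin m → ℝ) (h : FF β ξ ≠ 0) :
    Real.log (FF β ξ) = (∑ i, ∑ j, Real.log (ξ i - ξ j)) + ∑ i, β * Real.log (1 - ξ i ^ 2) := by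
  obtain ⟨hi, h1⟩ := FF_ne β hβ ξ h
  unfold FF at h ⊢
  have a1 := left_ne_zero_of_mul h
  have a2 := right_ne_zero_of_mul h
  rw [Real.log_mul a1 a2]
  rw [Finset.prod_ne_zero_iff] at a1 a2
  rw [Real.log_prod (fun i hi => a1 i hi), Real.log_prod (fun i hi => a2 i hi)]
  congr 1
  · refine Finset.sum_congr rfl fun i hi => ?_
    rw [Real.log_prod (fun j hj => Finset.prod_ne_zero_iff.1 (a1 i hi) j hj)]
    refine Finset.sum_congr rfl fun j _ => ?_
    split_ifs with hij
    · simp [hij]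
    · exact Real.log_abs _
  · refine Finset.sum_congr rfl fun i hi => ?_
    rw [Real.log_rpow (abs_pos.2 (h1 i)), Real.log_abs]

theorem stieltjes (m : ℕ) (β : ℝ) (hβ : 0 < β) : ∃ ξ : Fin m → ℝ, Function.Injective ξ ∧
    (∀ i, -1 < ξ i ∧ ξ i < 1) ∧ ∀ k, ∑ j, 1 / (ξ k - ξ j) - β * ξ k / (1 - ξ k ^ 2) = 0 := by
  classical
  have hK : IsCompact (Set.Icc (fun _ => -1 : Fin m → ℝ) (fun _ => 1)) := isCompact_Icc
  obtain ⟨ξ, hξK, hmax⟩ := hK.exists_isMaxOn ⟨fun _ => 0, by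
    constructor <;> intro i <;> simp⟩ (FF_cont β hβ).continuousOn
  -- a point with positive value
  have hpos : 0 < FF β ξ := by
    have hx0 : (fun i : Fin m => (i.1 : ℝ) / (m + 1)) ∈ Set.Icc (fun _ => -1 : Fin m → ℝ) (fun _ => 1) := by
      constructor
      · intro i
        have : (0:ℝ) ≤ (i.1 : ℝ) / (m + 1) := by positivity
        simp only; linarith
      · intro i
        simp only
        rw [div_le_one (by positivity)]
        have : (i.1 : ℝ) < m := by exact_mod_cast i.2
        linarith
    refine lt_of_lt_of_le ?_ (hmax hx0)
    unfold FF
    refine mul_pos (Finset.prod_pos fun i _ => Finset.prod_pos fun j _ => ?_)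
      (Finset.prod_pos fun i _ => ?_)
    · split_ifs with h
      · exact one_pos
      · refine abs_pos.2 (sub_ne_zero.2 fun h2 => h ?_)
        have h3 : (m:ℝ) + 1 ≠ 0 := by positivity
        field_simp at h2
        exact Fin.ext (by exact_mod_cast h2)
    · refine Real.rpow_pos_of_pos (abs_pos.2 ?_) _
      have h1 : (i.1 : ℝ) / (m + 1) < 1 := by
        rw [div_lt_one (by positivity)]
        have : (i.1 : ℝ) < m := by exact_mod_cast i.2
        linarith
      have h0 : (0:ℝ) ≤ (i.1 : ℝ) / (m + 1) := by positivity
      nlinarith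
  obtain ⟨hinj, hne⟩ := FF_ne β hβ ξ hpos.ne'
  have hlt : ∀ i, -1 < ξ i ∧ ξ i < 1 := by
    intro i
    have h1 := hξK.1 i
    have h2 := hξK.2 i
    simp only at h1 h2
    constructor
    · refine lt_of_le_of_ne h1 fun h => hne i ?_
      rw [← h]; norm_num
    · refine lt_of_le_of_ne h2 fun h => hne i ?_
      rw [h]; norm_num
  refine ⟨ξ, hinj, hlt, fun k => ?_⟩
  have hself : Function.update ξ k (ξ k) = ξ := Function.update_eq_self k ξ
  have hcu : Continuous fun t : ℝ => Function.update ξ k t := continuous_const.update k continuous_id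
  have hloc : IsLocalMax (fun t => Real.log (FF β (Function.update ξ k t))) (ξ k) := by
    have e1 : ∀ᶠ t in 𝓝 (ξ k), 0 < FF β (Function.update ξ k t) := by
      refine ((FF_cont β hβ).comp hcu).continuousAt.eventually (lt_mem_nhds ?_)
      simpa [hself] using hpos
    filter_upwards [e1, Ioo_mem_nhds (hlt k).1 (hlt k).2] with t h1 h2
    rw [hself]
    refine Real.log_le_log h1 (hmax ?_)
    constructor
    · intro i
      by_cases hi : i = k
      · subst hi; simpa using h2.1.le
      · simpa [hi] using hξK.1 i
    · intro i
      by_cases hi : i = k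
      · subst hi; simpa using h2.2.le
      · simpa [hi] using hξK.2 i
  have hder : HasDerivAt (fun t => Real.log (FF β (Function.update ξ k t)))
      ((∑ i, ∑ j, (((if i = k then 1 else 0) - (if j = k then 1 else 0)) / (ξ i - ξ j))) +
        ∑ i, β * ((if i = k then -(2 * ξ k) else 0) / (1 - ξ i ^ 2))) (ξ k) := by
    have hu : ∀ i, HasDerivAt (fun t => Function.update ξ k t i) (if i = k then 1 else 0) (ξ k) := by
      intro i
      by_cases hi : i = k
      · subst hi; simpa using hasDerivAt_id' (ξ i)
      · simpa [hi] using hasDerivAt_const (ξ k) (ξ i)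
    have hE : HasDerivAt (fun t => (∑ i, ∑ j, Real.log (Function.update ξ k t i - Function.update ξ k t j))
        + ∑ i, β * Real.log (1 - Function.update ξ k t i ^ 2))
      ((∑ i, ∑ j, (((if i = k then 1 else 0) - (if j = k then 1 else 0)) / (ξ i - ξ j))) +
        ∑ i, β * ((if i = k then -(2 * ξ k) else 0) / (1 - ξ i ^ 2))) (ξ k) := by
      refine HasDerivAt.fun_add (HasDerivAt.fun_sum fun i _ => HasDerivAt.fun_sum fun j _ => ?_)
        (HasDerivAt.fun_sum fun i _ => HasDerivAt.const_mul β ?_)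
      · by_cases hij : i = j
        · subst hij
          simpa using hasDerivAt_const (ξ k) (0:ℝ)
        · have := ((hu i).fun_sub (hu j)).log (by
            rw [hself]; exact sub_ne_zero.2 fun h => hij (hinj h))
          rwa [hself] at this
      · have := (((hu i).fun_pow 2).const_sub 1).log (by rw [hself]; exact hne i)
        rw [hself] at this
        refine this.congr_deriv ?_
        by_cases hi : i = k
        · subst hi; simp
        · simp [hi]
    refine hE.congr_of_eventuallyEq ?_
    have e1 : ∀ᶠ t in 𝓝 (ξ k), FF β (Function.update ξ k t) ≠ 0 := by
      refine ((FF_cont β hβ).comp hcu).continuousAt.eventually_ne ?_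
      simpa [hself] using hpos.ne'
    filter_upwards [e1] with t ht
    exact FF_log β hβ _ ht
  have h0 := hloc.hasDerivAt_eq_zero hder
  have s1 : (∑ i, ∑ j, (((if i = k then (1:ℝ) else 0) - (if j = k then 1 else 0)) / (ξ i - ξ j))) =
      2 * ∑ j, 1 / (ξ k - ξ j) := by
    simp only [sub_div, Finset.sum_sub_distrib]
    have a1 : ∑ i, ∑ j, (if i = k then (1:ℝ) else 0) / (ξ i - ξ j) = ∑ j, 1 / (ξ k - ξ j) := by
      rw [Finset.sum_eq_single k]
      · simp
      · intro b _ hb; simp [hb]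
      · simp
    have a2 : ∑ i, ∑ j, (if j = k then (1:ℝ) else 0) / (ξ i - ξ j) = -∑ j, 1 / (ξ k - ξ j) := by
      rw [← Finset.sum_neg_distrib]
      refine Finset.sum_congr rfl fun i _ => ?_
      rw [Finset.sum_eq_single k]
      · simp; rw [← inv_neg]; ring
      · intro b _ hb; simp [hb]
      · simp
    rw [a1, a2]; ring
  have s2 : ∑ i, β * ((if i = k then -(2 * ξ k) else 0) / (1 - ξ i ^ 2)) = -(2 * (β * ξ k / (1 - ξ k ^ 2))) := by
    rw [Finset.sum_eq_single k]
    · simp; ring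
    · intro b _ hb; simp [hb]
    · simp
  rw [s1, s2] at h0
  linarith
end

section
open Filter Topology Polynomial

lemma Pn_monic {N : ℕ} (w : Fin N → ℝ) : (Pn w).Monic ∧ (Pn w).natDegree = N := by
  unfold Pn
  refine ⟨monic_prod_of_monic _ _ fun j _ => monic_X_sub_C _, ?_⟩
  rw [natDegree_prod_of_monic _ _ fun j _ => monic_X_sub_C _]
  simp

lemma Rn_coeff {N : ℕ} (ρ ξ : Fin (N+1) → ℝ) : (Rn ρ ξ).natDegree ≤ N ∧
    (Rn ρ ξ).coeff N = ((∑ k, ρ k : ℝ) : ℂ) := by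
  have hm : ∀ k : Fin (N+1), (∏ i ∈ Finset.univ.erase k, (X - C (ξ i : ℂ))).Monic :=
    fun k => monic_prod_of_monic _ _ fun j _ => monic_X_sub_C _
  have hd : ∀ k : Fin (N+1), (∏ i ∈ Finset.univ.erase k, (X - C (ξ i : ℂ))).natDegree = N := by
    intro k
    rw [natDegree_prod_of_monic _ _ fun j _ => monic_X_sub_C _]
    simp
  constructor
  · unfold Rn
    refine natDegree_sum_le_of_forall_le _ _ fun k _ => ?_
    refine (natDegree_C_mul_le _ _).trans (hd k).le
  · unfold Rn
    rw [finsetSum_coeff]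
    push_cast
    refine Finset.sum_congr rfl fun k _ => ?_
    rw [coeff_C_mul]
    have := (hm k).coeff_natDegree
    rw [hd k] at this
    rw [this, mul_one]

lemma Rn_deg {N : ℕ} (ε w : Fin N → ℝ) : (Rn ε w).natDegree ≤ N := by
  unfold Rn
  refine natDegree_sum_le_of_forall_le _ _ fun k _ => ?_
  refine (natDegree_C_mul_le _ _).trans ?_
  rw [natDegree_prod_of_monic _ _ fun j _ => monic_X_sub_C _]
  simp

lemma Rn_eval' {N : ℕ} (ε w : Fin N → ℝ) (z : ℂ) (hz : ∀ j, z ≠ w j) :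
    (Rn ε w).eval z = (∑ j, (ε j : ℂ) / (z - w j)) * (Pn w).eval z := by
  have := sum_mul_prod (fun j => (ε j : ℂ)) (fun j => z - w j) (fun j => sub_ne_zero.2 (hz j))
  rw [Rn_eval, Pn_eval, this]

section
variable {N : ℕ} (γ : ℝ) (hγ1 : γ < 1) (ξ ρ : Fin (N+1) → ℝ) (hξ : StrictMono ξ)
  (hρ : ∀ k, 0 < ρ k) (hs : ∑ k, ρ k = 1 / (1 - γ))

include hξ hρ in
lemma lam_zero (j : Fin N) : ∃ x, ξ j.castSucc < x ∧ x < ξ j.succ ∧ ∑ k, ρ k / (x - ξ k) = 0 := by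
  have hlt : ξ j.castSucc < ξ j.succ := hξ Fin.castSucc_lt_succ
  obtain ⟨δ, ⟨h1, h2⟩, hδ⟩ := (((Ps_near 1 0 ρ ξ hρ hξ j.castSucc).and
    (Ps_near 1 0 ρ ξ hρ hξ j.succ)).and (Ioo_mem_nhdsGT (show 0 < (ξ j.succ - ξ j.castSucc) / 2 by linarith))).exists
  have hc : ContinuousOn (Ps 1 0 ρ ξ) (Set.Icc (ξ j.castSucc + δ) (ξ j.succ - δ)) := by
    intro x hx
    refine (Ps_contAt 1 0 ρ ξ x fun k => ?_).continuousWithinAt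
    rcases le_or_gt k j.castSucc with h | h
    · have := hξ.monotone h
      have := hx.1; have := hδ.1
      intro h; linarith
    · have : j.succ ≤ k := by
        rw [Fin.le_def]; rw [Fin.lt_def] at h; simp at h ⊢; omega
      have := hξ.monotone this
      have := hx.2; have := hδ.1
      intro h; linarith
  obtain ⟨x, hx, hx0⟩ := intermediate_value_Icc' (by linarith [hδ.2]) hc ⟨h2.2.le, h1.1.le⟩
  refine ⟨x, by linarith [hx.1, hδ.1], by linarith [hx.2, hδ.1], ?_⟩
  simpa [Ps] using hx0

include hξ in
lemma mid_ne (j : Fin N) (x : ℝ) (h1 : ξ j.castSucc < x) (h2 : x < ξ j.succ) (k : Fin (N+1)) : x ≠ ξ k := by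
  rcases le_or_gt k j.castSucc with h | h
  · have := hξ.monotone h
    intro h; linarith
  · have : j.succ ≤ k := by
      rw [Fin.le_def]; rw [Fin.lt_def] at h; simp at h ⊢; omega
    have := hξ.monotone this
    intro h; linarith

include hξ hρ hs hγ1 in
theorem pick : ∃ (ε w : Fin N → ℝ) (c : ℝ), (∀ j, 0 < ε j) ∧
    (∀ j : Fin N, ξ j.castSucc < w j ∧ w j < ξ j.succ) ∧
    ∀ z : ℂ, (∀ j, z ≠ w j) → (∀ k, z ≠ ξ k) →
      (∑ k, (ρ k : ℂ) / (z - ξ k)) * (-(1 - γ) * z + c + ∑ j, (ε j : ℂ) / (z - w j)) = -1 := by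
  classical
  choose w hw1 hw2 hw0 using lam_zero ξ ρ hξ hρ
  have hwn : ∀ j k, w j ≠ ξ k := fun j k => mid_ne ξ hξ j (w j) (hw1 j) (hw2 j) k
  have hwm : StrictMono w := by
    intro i j hij
    have : ξ i.succ ≤ ξ j.castSucc := hξ.monotone (by
      rw [Fin.le_def]; rw [Fin.lt_def] at hij; simp; omega)
    linarith [hw2 i, hw1 j]
  have hwi : Function.Injective (fun j => (w j : ℂ)) := fun i j h =>
    hwm.injective (Complex.ofReal_injective h)
  set L : Fin N → ℝ := fun j => ∑ k, ρ k / (w j - ξ k) ^ 2 with hL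
  have hLpos : ∀ j, 0 < L j := fun j => by
    refine Finset.sum_pos (fun k _ => ?_) ⟨0, Finset.mem_univ _⟩
    exact div_pos (hρ k) (sq_pos_of_ne_zero (sub_ne_zero.2 (hwn j k)))
  set ε : Fin N → ℝ := fun j => 1 / L j with hεd
  have hε : ∀ j, 0 < ε j := fun j => one_div_pos.2 (hLpos j)
  set c : ℝ := (1 - γ) * ξ 0 - ∑ j, ε j / (ξ 0 - w j) with hc
  set a : ℝ := 1 / (1 - γ) with ha
  have hg : 0 < 1 - γ := by linarith
  have hapos : 0 < a := by positivity
  have hR := Rn_coeff ρ ξ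
  rw [hs] at hR
  have hP := Pn_monic w
  -- factorization
  have hfac : Rn ρ ξ = C (a : ℂ) * Pn w := by
    rw [← sub_eq_zero]
    refine Polynomial.eq_zero_of_degree_lt_of_eval_index_eq_zero (s := Finset.univ) (v := fun j => (w j : ℂ))
      hwi.injOn ?_ ?_
    · rw [Finset.card_univ, Fintype.card_fin, degree_lt_iff_coeff_zero]
      intro m hm
      rcases hm.lt_or_eq with h | rfl
      · rw [coeff_sub, coeff_eq_zero_of_natDegree_lt (by omega), coeff_C_mul,
          coeff_eq_zero_of_natDegree_lt (by omega)]; simp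
      · rw [coeff_sub, hR.2, coeff_C_mul]
        have := hP.1.coeff_natDegree
        rw [hP.2] at this
        rw [this]; simp
    · intro j _
      rw [eval_sub, Rn_eval' _ _ _ (fun k => by exact_mod_cast hwn j k), eval_mul, Pn_node]
      have : ∑ k, (ρ k : ℂ) / ((w j : ℂ) - ξ k) = 0 := by exact_mod_cast hw0 j
      rw [this]; simp
  -- derivative at nodes
  have hder : ∀ j, (a : ℂ) * ∏ i ∈ Finset.univ.erase j, ((w j : ℂ) - w i) =
      (Pn ξ).eval (w j : ℂ) * (-(L j : ℂ)) := by
    intro j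
    have hco1 : ContinuousAt (fun z : ℂ => (a : ℂ) * ∏ i ∈ Finset.univ.erase j, (z - w i)) (w j) := by
      fun_prop
    have hco2 : ContinuousAt (fun z : ℂ => (Pn ξ).eval z * (-∑ k, (ρ k : ℂ) / ((z - ξ k) * (w j - ξ k)))) (w j) := by
      refine ContinuousAt.mul (Polynomial.continuous _).continuousAt (ContinuousAt.neg (tendsto_finsetSum _ fun k _ => ?_))
      refine ContinuousAt.div (by fun_prop) (by fun_prop) ?_
      have : ((w j : ℂ) - ξ k) ≠ 0 := sub_ne_zero.2 (by exact_mod_cast hwn j k)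
      exact mul_ne_zero this this
    have hev : ∀ᶠ z : ℂ in 𝓝[≠] (w j : ℂ), (a : ℂ) * ∏ i ∈ Finset.univ.erase j, (z - w i) =
        (Pn ξ).eval z * (-∑ k, (ρ k : ℂ) / ((z - ξ k) * (w j - ξ k))) := by
      have hnb : ∀ᶠ z : ℂ in 𝓝[≠] (w j : ℂ), ∀ k, z ≠ ξ k := by
        rw [eventually_all]
        intro k
        refine eventually_nhdsWithin_of_eventually_nhds (isOpen_ne.mem_nhds ?_)
        have := hwn j k
        change (w j : ℂ) ≠ ξ k
        exact_mod_cast this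
      filter_upwards [hnb, self_mem_nhdsWithin] with z hz hzw
      have hzw' : z - w j ≠ 0 := sub_ne_zero.2 hzw
      apply mul_left_cancel₀ hzw'
      have e1 := congrArg (fun p => eval z p) hfac
      simp only [eval_mul, eval_C] at e1
      rw [Rn_eval' _ _ _ hz, Pn_eval w, ← Finset.mul_prod_erase Finset.univ _ (Finset.mem_univ j)] at e1
      have e2 : ∑ k, (ρ k : ℂ) / (z - ξ k) = (z - w j) * (-∑ k, (ρ k : ℂ) / ((z - ξ k) * (w j - ξ k))) := by
        have e3 : ∑ k, (ρ k : ℂ) / ((w j : ℂ) - ξ k) = 0 := by exact_mod_cast hw0 j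
        rw [← sub_zero (∑ k, (ρ k : ℂ) / (z - ξ k)), ← e3, ← Finset.sum_sub_distrib,
          ← Finset.sum_neg_distrib, Finset.mul_sum]
        refine Finset.sum_congr rfl fun k _ => ?_
        have f1 : z - ξ k ≠ 0 := sub_ne_zero.2 (hz k)
        have f2 : ((w j : ℂ) - ξ k) ≠ 0 := sub_ne_zero.2 (by exact_mod_cast hwn j k)
        field_simp
        ring
      rw [e2] at e1
      linear_combination -e1
    have t1 := (hco1.tendsto.mono_left nhdsWithin_le_nhds : Tendsto _ (𝓝[≠] (w j : ℂ)) _)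
    have t2 := (hco2.tendsto.mono_left nhdsWithin_le_nhds : Tendsto _ (𝓝[≠] (w j : ℂ)) _)
    have := tendsto_nhds_unique (t1.congr' hev) t2
    rw [this, hL]
    push_cast
    congr 2
    refine Finset.sum_congr rfl fun k _ => ?_
    rw [sq]
  -- main polynomial identity
  have h0w : ∀ j, (ξ 0 : ℂ) ≠ w j := fun j h => hwn j 0 (by exact_mod_cast h.symm)
  have hG : Pn ξ + (C (-(1 - γ) : ℂ) * X + C (c : ℂ)) * Rn ρ ξ + C (a : ℂ) * Rn ε w = 0 := by
    refine Polynomial.eq_zero_of_degree_lt_of_eval_index_eq_zero (s := Finset.univ)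
      (v := (Fin.cons (ξ 0 : ℂ) (fun j => (w j : ℂ)) : Fin (N+1) → ℂ)) ?_ ?_ ?_
    · refine Function.Injective.injOn ?_
      rw [Fin.cons_injective_iff]
      refine ⟨?_, hwi⟩
      rintro ⟨j, hj⟩
      exact h0w j hj.symm
    · rw [Finset.card_univ, Fintype.card_fin, degree_lt_iff_coeff_zero]
      have hPξ := Pn_monic ξ
      intro m hm
      obtain ⟨l, rfl⟩ : ∃ l, m = l + 1 := ⟨m - 1, by omega⟩
      have hRw := Rn_deg ε w
      rw [add_mul, mul_assoc, coeff_add, coeff_add, coeff_add, coeff_C_mul, coeff_X_mul, coeff_C_mul, coeff_C_mul,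
        coeff_eq_zero_of_natDegree_lt (p := Rn ε w) (by omega),
        coeff_eq_zero_of_natDegree_lt (p := Rn ρ ξ) (n := l + 1) (by omega)]
      rcases (show N ≤ l by omega).lt_or_eq with h | rfl
      · rw [coeff_eq_zero_of_natDegree_lt (by omega), coeff_eq_zero_of_natDegree_lt (by omega)]; simp
      · have := hPξ.1.coeff_natDegree
        rw [hPξ.2] at this
        rw [this, hR.2]
        have hg' : (1 - γ : ℂ) ≠ 0 := by exact_mod_cast hg.ne'
        have ha' : (1 - γ : ℂ) * a = 1 := by
          rw [ha]; push_cast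
          field_simp
        linear_combination -ha'
    · intro i _
      refine Fin.cases ?_ (fun j => ?_) i
      · simp only [Fin.cons_zero, eval_add, eval_mul, eval_C, eval_X, Pn_node]
        rw [hfac, eval_mul, eval_C, Rn_eval' ε w _ h0w]
        have : (c : ℂ) = (1 - γ) * ξ 0 - ∑ j, (ε j : ℂ) / (ξ 0 - w j) := by
          rw [hc]; push_cast; ring
        rw [this]; ring
      · simp only [Fin.cons_succ, eval_add, eval_mul, eval_C, eval_X]
        rw [hfac, eval_mul, Pn_node, Rn_eval, Finset.sum_eq_single j]
        · have e1 := hder j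
          have e2 : (ε j : ℂ) * L j = 1 := by
            rw [hεd]; push_cast
            have : (L j : ℂ) ≠ 0 := by exact_mod_cast (hLpos j).ne'
            field_simp
          linear_combination (ε j : ℂ) * e1 - (Pn ξ).eval (w j : ℂ) * e2
        · intro b _ hb
          rw [Finset.prod_eq_zero (i := j) (by simp [hb.symm]) (by simp), mul_zero]
        · simp
  refine ⟨ε, w, c, hε, fun j => ⟨hw1 j, hw2 j⟩, fun z hzw hzξ => ?_⟩
  have e1 := congrArg (fun p => eval z p) hG
  simp only [eval_add, eval_mul, eval_C, eval_X, eval_zero] at e1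
  have e2 := congrArg (fun p => eval z p) hfac
  simp only [eval_mul, eval_C] at e2
  rw [Rn_eval' ε w z hzw] at e1
  have e3 := Rn_eval' ρ ξ z hzξ
  have hPz := Pn_ne ξ z hzξ
  apply mul_right_cancel₀ hPz
  linear_combination e1 - (-(1 - γ) * z + c + ∑ j, (ε j : ℂ) / (z - w j)) * e3 +
    (∑ j, (ε j : ℂ) / (z - w j)) * e2
end
end

section
open Filter Topology

lemma fin_cases2 {M : ℕ} {P : Fin (M+2) → Prop} (h0 : P 0) (hl : P (Fin.last (M+1)))
    (hm : ∀ i : Fin M, P i.castSucc.succ) (k : Fin (M+2)) : P k := by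
  refine Fin.cases h0 (fun i => ?_) k
  refine Fin.lastCases ?_ (fun i => ?_) i
  · exact hl
  · exact hm i

def bd {M : ℕ} (k : Fin (M+2)) : Prop := k = 0 ∨ k = Fin.last (M+1)

instance {M : ℕ} (k : Fin (M+2)) : Decidable (bd k) := by unfold bd; infer_instance

lemma bd_zero {M : ℕ} : bd (0 : Fin (M+2)) := Or.inl rfl
lemma bd_last {M : ℕ} : bd (Fin.last (M+1)) := Or.inr rfl
lemma bd_last' {M : ℕ} : bd (Fin.last M).succ := Or.inr rfl
lemma bd_mid {M : ℕ} (i : Fin M) : ¬ bd i.castSucc.succ := by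
  rintro (h | h)
  · exact absurd h (Fin.succ_ne_zero _)
  · have := congrArg Fin.val h
    simp at this
    omega

lemma sum_mid {M : ℕ} (f : Fin (M+2) → ℝ) : ∑ k, f k = f 0 + f (Fin.last (M+1)) + ∑ i : Fin M, f i.castSucc.succ := by
  rw [Fin.sum_univ_succ, Fin.sum_univ_castSucc]
  rw [show (Fin.last M).succ = Fin.last (M+1) from rfl]
  ring

theorem equil (M : ℕ) (α : ℝ) (hα : 0 < α) : ∃ ξ : Fin (M+2) → ℝ, StrictMono ξ ∧ ξ 0 = -1 ∧
    ξ (Fin.last (M+1)) = 1 ∧ ∀ k, ¬ bd k → ∑ j, (if bd j then α else 1/2) / (ξ k - ξ j) = 0 := by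
  obtain ⟨η0, hi, hb, he⟩ := stieltjes M (4 * α) (by linarith)
  set σ := Tuple.sort η0
  set η : Fin M → ℝ := η0 ∘ σ with hη
  have hmono : StrictMono η := (Tuple.monotone_sort η0).strictMono_of_injective (hi.comp σ.injective)
  have hb' : ∀ i, -1 < η i ∧ η i < 1 := fun i => hb _
  set ξ : Fin (M+2) → ℝ := Fin.cons (-1) (Fin.snoc η 1 : Fin (M+1) → ℝ) with hξ
  have e0 : ξ 0 = -1 := rfl
  have el : ξ (Fin.last (M+1)) = 1 := by
    rw [hξ, ← Fin.succ_last, Fin.cons_succ, Fin.snoc_last]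
  have em : ∀ i : Fin M, ξ i.castSucc.succ = η i := by
    intro i
    rw [hξ, Fin.cons_succ, Fin.snoc_castSucc]
  refine ⟨ξ, ?_, e0, el, ?_⟩
  · intro i j
    refine fin_cases2 (P := fun i => i < j → ξ i < ξ j) ?_ ?_ ?_ i
    · refine fin_cases2 (P := fun j => 0 < j → ξ 0 < ξ j) ?_ ?_ ?_ j
      · intro h; exact absurd h (lt_irrefl _)
      · intro; rw [e0, el]; norm_num
      · intro k _; rw [e0, em]; exact (hb' k).1
    · intro h; exact absurd h (not_lt.2 (Fin.le_last _))
    · intro k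
      refine fin_cases2 (P := fun j => k.castSucc.succ < j → ξ k.castSucc.succ < ξ j) ?_ ?_ ?_ j
      · intro h; exact absurd h (by simp)
      · intro; rw [em, el]; exact (hb' k).2
      · intro l h
        rw [em, em]
        refine hmono ?_
        simpa using h
  · refine fin_cases2 ?_ ?_ ?_
    · intro h; exact absurd bd_zero h
    · intro h; exact absurd bd_last h
    · intro k _
      rw [sum_mid, e0, el, em, if_pos bd_zero, if_pos bd_last]
      have h1 : ∑ i : Fin M, (if bd i.castSucc.succ then α else 1/2) / (η k - ξ i.castSucc.succ) =
          1 / 2 * ∑ i, 1 / (η0 (σ k) - η0 i) := by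
        rw [← Equiv.sum_comp σ (fun i => 1 / (η0 (σ k) - η0 i)), Finset.mul_sum]
        refine Finset.sum_congr rfl fun i _ => ?_
        rw [if_neg (bd_mid i), em, hη]
        simp only [Function.comp]
        ring
      rw [h1]
      have h2 := he (σ k)
      have h3 := hb (σ k)
      have h4 : η k = η0 (σ k) := rfl
      rw [h4]
      have a1 : η0 (σ k) - -1 ≠ 0 := by linarith [h3.1]
      have a2 : η0 (σ k) - 1 ≠ 0 := by linarith [h3.2]
      have a3 : 1 - η0 (σ k) ^ 2 ≠ 0 := by nlinarith
      have h5 : α / (η0 (σ k) - -1) + α / (η0 (σ k) - 1) = - (1/2) * (4 * α * η0 (σ k) / (1 - η0 (σ k) ^ 2)) := by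
        have : 1 - η0 (σ k) ^ 2 = -(η0 (σ k) - -1) * (η0 (σ k) - 1) := by ring
        rw [this]
        field_simp
        ring
      rw [h5]
      linarith
end

section
open Filter Topology

lemma csum {m : ℕ} (e a : Fin m → ℝ) (x Y : ℝ) :
    ∑ j, (e j : ℂ) / ((⟨x, Y⟩ : ℂ) - a j) =
      ⟨∑ j, e j * (x - a j) / ((x - a j) ^ 2 + Y ^ 2), -(Y * ∑ j, e j / ((x - a j) ^ 2 + Y ^ 2))⟩ := by
  have h : ∀ j, (e j : ℂ) / ((⟨x, Y⟩ : ℂ) - a j) = ⟨e j * (x - a j) / ((x - a j) ^ 2 + Y ^ 2),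
      -(e j * Y / ((x - a j) ^ 2 + Y ^ 2))⟩ := by
    intro j
    rw [← inv_re_im]
    congr 1
    apply Complex.ext <;> simp
  simp only [h]
  apply Complex.ext
  · simp
  · simp only [Complex.im_sum]
    rw [Finset.mul_sum, ← Finset.sum_neg_distrib]
    refine Finset.sum_congr rfl fun j _ => ?_
    ring

section
variable {N : ℕ} (hN : 0 < N) (γ c : ℝ) (hγ : 0 < γ) (hγ1 : γ < 1) (ε w : Fin N → ℝ)
  (hε : ∀ j, 0 < ε j) (ξ ρ : Fin (N+1) → ℝ)
  (hp : ∀ z : ℂ, (∀ j, z ≠ w j) → (∀ k, z ≠ ξ k) →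
    (∑ k, (ρ k:ℂ)/(z-ξ k)) * (-(1-γ)*z + c + ∑ j, (ε j:ℂ)/(z-w j)) = -1)

include hN hγ hε hp in
lemma lam_sign (x : ℝ) (hx : ∀ k, x ≠ ξ k) (hρ : ∀ k, 0 < ρ k) :
    2 * VV γ ε w x * (∑ k, ρ k / ((x - ξ k) ^ 2 + VV γ ε w x)) ≤ 1 ∧
    (0 < ∑ k, ρ k * (x - ξ k) / ((x - ξ k) ^ 2 + VV γ ε w x) → ph γ c ε w x < 0) ∧
    (∑ k, ρ k * (x - ξ k) / ((x - ξ k) ^ 2 + VV γ ε w x) < 0 → 0 < ph γ c ε w x) := by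
  have hV := VV_nonneg γ ε w x
  set V := VV γ ε w x with hVd
  set Y := √V with hY
  have hY2 : Y ^ 2 = V := Real.sq_sqrt hV
  have hY0 : 0 ≤ Y := Real.sqrt_nonneg V
  set h := ∑ k, ρ k * (x - ξ k) / ((x - ξ k) ^ 2 + V) with hh
  set g := ∑ k, ρ k / ((x - ξ k) ^ 2 + V) with hg
  have hg0 : 0 < g := by
    refine Finset.sum_pos (fun k _ => ?_) ⟨0, Finset.mem_univ _⟩
    have : 0 < (x - ξ k) ^ 2 := by have := sub_ne_zero.2 (hx k); positivity
    have := hρ k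
    positivity
  have h1 := hp ⟨x, Y⟩ (fun j hj => by
      have a1 : x = w j := by simpa using congrArg Complex.re hj
      have a2 : Y = 0 := by simpa using congrArg Complex.im hj
      have a3 := (mem_O_iff γ ε w x).1 (a1 ▸ node_mem_O hN γ hγ ε w hε j)
      rw [← hVd] at a3
      rw [a2] at hY2
      nlinarith) (fun k hk => hx k (by simpa using congrArg Complex.re hk))
  rw [csum, csum, hY2, ← hh, ← hg] at h1
  have hS : Y * (∑ j, ε j / ((x - w j) ^ 2 + V)) = Y * (1 + γ) := by
    by_cases hxO : x ∈ Oset γ ε w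
    · have := (VV_of_mem γ ε w x hxO).2
      unfold SS at this
      rw [← hVd] at this
      rw [this]
    · have : V = 0 := VV_of_not_mem γ ε w x hxO
      rw [hY, this]; simp
  rw [hS] at h1
  have hph : ph γ c ε w x = -(1 - γ) * x + c + ∑ j, ε j * (x - w j) / ((x - w j) ^ 2 + V) := by
    unfold ph; rw [← hVd]
  have h2 : -(1 - (γ:ℂ)) * (⟨x, Y⟩ : ℂ) + c + (⟨∑ j, ε j * (x - w j) / ((x - w j) ^ 2 + V), -(Y * (1 + γ))⟩ : ℂ)
      = ⟨ph γ c ε w x, -(2 * Y)⟩ := by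
    rw [hph]
    apply Complex.ext
    · simp
    · simp; ring
  rw [h2] at h1
  have h3 := congrArg Complex.re h1
  have h4 := congrArg Complex.im h1
  simp at h3 h4
  have h5 : h * ph γ c ε w x = 2 * V * g - 1 := by rw [← hY2]; linarith
  have h6 : Y * (2 * h + g * ph γ c ε w x) = 0 := by linarith
  rcases hY0.eq_or_lt with h0 | h0
  · have hV0 : V = 0 := by rw [← hY2, ← h0]; ring
    rw [hV0] at h5 ⊢
    refine ⟨by simp, fun a => ?_, fun a => ?_⟩ <;> nlinarith
  · have h7 : 2 * h + g * ph γ c ε w x = 0 := by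
      rcases mul_eq_zero.1 h6 with h | h
      · linarith
      · exact h
    have h8 : h = - (g * ph γ c ε w x) / 2 := by linarith
    refine ⟨?_, fun a => ?_, fun a => ?_⟩
    · rw [h8] at h5
      nlinarith [mul_nonneg hg0.le (sq_nonneg (ph γ c ε w x))]
    · by_contra hc
      push Not at hc
      nlinarith [mul_nonneg hg0.le hc]
    · by_contra hc
      push Not at hc
      nlinarith [mul_nonneg hg0.le (neg_nonneg.2 hc)]

include hp in
lemma Ps_zero (x : ℝ) (hx : ∀ j, x ≠ w j) (hx' : ∀ k, x ≠ ξ k) :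
    (∑ k, ρ k / (x - ξ k)) * Ps γ c ε w x = -1 := by
  have h1 := hp x (fun j hj => hx j (Complex.ofReal_injective hj)) (fun j hj => hx' j (Complex.ofReal_injective hj))
  unfold Ps
  apply Complex.ofReal_injective
  push_cast
  rw [← h1]

include hp in
lemma Ps_slope (k : Fin (N+1)) (hw : ∀ j, ξ k ≠ w j) (hi : Function.Injective ξ) (hρ : 0 < ρ k) :
    Ps γ c ε w (ξ k) = 0 ∧ (1 - γ) + SS ε w (ξ k) 0 = 1 / ρ k := by
  set L : ℝ → ℝ := fun x => ρ k + (x - ξ k) * ∑ i ∈ Finset.univ.erase k, ρ i / (x - ξ i) with hL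
  have hLc : ContinuousAt L (ξ k) := by
    refine ContinuousAt.add continuousAt_const (ContinuousAt.mul (by fun_prop) ?_)
    refine tendsto_finsetSum _ fun i hi' => ?_
    refine ContinuousAt.div continuousAt_const (by fun_prop) ?_
    exact sub_ne_zero.2 fun h => (Finset.ne_of_mem_erase hi') (hi h).symm
  have hL0 : L (ξ k) = ρ k := by simp [hL]
  have hev : ∀ᶠ x in 𝓝[≠] (ξ k), (∀ j, x ≠ w j) ∧ (∀ i, x ≠ ξ i) := by
    have e1 : ∀ᶠ x in 𝓝[≠] (ξ k), ∀ j, x ≠ w j := by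
      refine eventually_all.2 fun j => ?_
      exact mem_nhdsWithin_of_mem_nhds (isOpen_ne.mem_nhds (hw j))
    have e2 : ∀ᶠ x in 𝓝[≠] (ξ k), ∀ j, x ≠ ξ j := by
      refine eventually_all.2 fun j => ?_
      rcases eq_or_ne j k with h | h
      · rw [h]; exact self_mem_nhdsWithin
      · exact mem_nhdsWithin_of_mem_nhds (isOpen_ne.mem_nhds (hi.ne h.symm))
    exact e1.and e2
  have hmul : ∀ᶠ x in 𝓝[≠] (ξ k), L x * Ps γ c ε w x = -(x - ξ k) := by
    filter_upwards [hev] with x hx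
    have h1 := Ps_zero γ c ε w ξ ρ hp x hx.1 hx.2
    rw [← Finset.add_sum_erase _ _ (Finset.mem_univ k)] at h1
    have h2 : x - ξ k ≠ 0 := sub_ne_zero.2 (hx.2 k)
    have h3 : L x = (x - ξ k) * (ρ k / (x - ξ k) + ∑ i ∈ Finset.univ.erase k, ρ i / (x - ξ i)) := by
      rw [hL]; field_simp
    rw [h3, mul_assoc, h1]; ring
  have hPc := Ps_contAt γ c ε w (ξ k) hw
  have hP0 : Ps γ c ε w (ξ k) = 0 := by
    have t1 : Tendsto (fun x => L x * Ps γ c ε w x) (𝓝[≠] (ξ k)) (𝓝 (L (ξ k) * Ps γ c ε w (ξ k))) :=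
      (hLc.mul hPc).tendsto.mono_left nhdsWithin_le_nhds
    have t2 : Tendsto (fun x => -(x - ξ k)) (𝓝[≠] (ξ k)) (𝓝 (-(ξ k - ξ k))) :=
      (Continuous.tendsto (by fun_prop) _).mono_left nhdsWithin_le_nhds
    have := tendsto_nhds_unique (t1.congr' hmul) t2
    rw [hL0] at this
    simp at this
    rcases this with h | h
    · linarith
    · exact h
  refine ⟨hP0, ?_⟩
  have hd : HasDerivAt (Ps γ c ε w) (-(1 - γ) + ∑ j, -(ε j / (ξ k - w j) ^ 2)) (ξ k) := by
    unfold Ps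
    have h1 : HasDerivAt (fun x : ℝ => -(1 - γ) * x + c) (-(1 - γ)) (ξ k) :=
      (((hasDerivAt_id' (ξ k)).const_mul (-(1 - γ))).add_const c).congr_deriv (by ring)
    refine h1.fun_add (HasDerivAt.fun_sum fun j _ => ?_)
    have h2 : ξ k - w j ≠ 0 := sub_ne_zero.2 (hw j)
    have h3 := ((((hasDerivAt_id' (ξ k)).sub_const (w j)).fun_inv h2).const_mul (ε j))
    simp only [div_eq_mul_inv]
    exact h3.congr_deriv (by field_simp)
  have hs := hasDerivAt_iff_tendsto_slope.1 hd
  have t1 : Tendsto (fun x => L x * slope (Ps γ c ε w) (ξ k) x) (𝓝[≠] (ξ k))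
      (𝓝 (L (ξ k) * (-(1 - γ) + ∑ j, -(ε j / (ξ k - w j) ^ 2)))) :=
    (hLc.tendsto.mono_left nhdsWithin_le_nhds).mul hs
  have t2 : Tendsto (fun _ : ℝ => (-1 : ℝ)) (𝓝[≠] (ξ k)) (𝓝 (-1)) := tendsto_const_nhds
  have hc : (fun x => L x * slope (Ps γ c ε w) (ξ k) x) =ᶠ[𝓝[≠] (ξ k)] fun _ => (-1 : ℝ) := by
    filter_upwards [hmul, hev] with x h1 h2
    have h3 : x - ξ k ≠ 0 := sub_ne_zero.2 (h2.2 k)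
    rw [slope_def_field, hP0, sub_zero, ← mul_div_assoc, h1]
    field_simp
  have := tendsto_nhds_unique (t1.congr' hc) t2
  rw [hL0] at this
  unfold SS
  simp only [add_zero]
  rw [Finset.sum_neg_distrib] at this
  field_simp
  linarith

include hN hγ hε in
lemma mem_O_of_SS0 (x : ℝ) (hx : ∀ j, x ≠ w j) (h : 1 + γ < SS ε w x 0) : x ∈ Oset γ ε w := by
  have hc : ContinuousAt (fun v => SS ε w x v) 0 := by
    unfold SS
    refine tendsto_finsetSum _ fun j _ => ?_
    refine ContinuousAt.div continuousAt_const (by fun_prop) ?_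
    have := sub_ne_zero.2 (hx j)
    simpa using this
  have h1 : ∀ᶠ v in 𝓝[>] (0:ℝ), 1 + γ < SS ε w x v :=
    (hc.eventually (lt_mem_nhds h)).filter_mono nhdsWithin_le_nhds
  obtain ⟨v, h2, h3⟩ := (h1.and self_mem_nhdsWithin).exists
  rw [mem_O_iff]
  exact lt_trans h3 ((lt_VV_iff hN γ hγ ε w hε x v h3).2 h2)
end
end

section
open Filter Topology

noncomputable def Rw {M : ℕ} (α δ : ℝ) (j : Fin (M+2)) : ℝ := if bd j then α + M * δ ^ 2 / 2 else 1 / 2 - δ ^ 2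

lemma Rw_cont {M : ℕ} (α : ℝ) (j : Fin (M+2)) : Continuous fun δ => Rw α δ j := by
  unfold Rw
  split_ifs <;> fun_prop

noncomputable def rest {M : ℕ} (α : ℝ) (ξ : Fin (M+2) → ℝ) (k : Fin (M+2)) (p : ℝ × ℝ) : ℝ :=
  ∑ j ∈ Finset.univ.erase k, Rw α p.1 j * (ξ k + p.1 - ξ j) / ((ξ k + p.1 - ξ j) ^ 2 + p.2)

lemma rest_cont {M : ℕ} (α : ℝ) (ξ : Fin (M+2) → ℝ) (hξ : Function.Injective ξ) (k : Fin (M+2)) :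
    ContinuousAt (rest α ξ k) (0, 0) := by
  unfold rest
  refine tendsto_finsetSum _ fun j hj => ?_
  have hc := (Rw_cont α j).comp (continuous_fst (X := ℝ) (Y := ℝ))
  have hc' : Continuous fun p : ℝ × ℝ => Rw α p.1 j := hc
  refine ContinuousAt.div (ContinuousAt.mul hc'.continuousAt (by fun_prop)) (by fun_prop) ?_
  have : ξ k - ξ j ≠ 0 := sub_ne_zero.2 fun h => (Finset.ne_of_mem_erase hj) (hξ h).symm
  simpa using this

lemma rest_near {M : ℕ} (α : ℝ) (ξ : Fin (M+2) → ℝ) (hξ : Function.Injective ξ) (k : Fin (M+2))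
    (e : ℝ) (he : 0 < e) : ∃ η > 0, ∀ δ T : ℝ, |δ| < η → |T| < η → |rest α ξ k (δ, T) - rest α ξ k (0, 0)| < e := by
  obtain ⟨η, h1, h2⟩ := Metric.continuousAt_iff.1 (rest_cont α ξ hξ k) e he
  refine ⟨η, h1, fun δ T hd hT => ?_⟩
  have := h2 (x := (δ, T)) (by
    rw [Prod.dist_eq]
    simp [hd, hT])
  rwa [Real.dist_eq] at this

lemma own_split {M : ℕ} (α : ℝ) (ξ : Fin (M+2) → ℝ) (k : Fin (M+2)) (δ T : ℝ) :
    ∑ j, Rw α δ j * (ξ k + δ - ξ j) / ((ξ k + δ - ξ j) ^ 2 + T) =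
      Rw α δ k * δ / (δ ^ 2 + T) + rest α ξ k (δ, T) := by
  rw [← Finset.add_sum_erase _ _ (Finset.mem_univ k)]
  unfold rest
  rw [show ξ k + δ - ξ k = δ by ring]

lemma Rw_pos {M : ℕ} (α δ : ℝ) (hα : 1/2 < α) (hδ : |δ| < 1/8) (j : Fin (M+2)) : 0 < Rw α δ j := by
  have : δ ^ 2 < 1/64 := by rw [← sq_abs]; nlinarith [abs_nonneg δ]
  unfold Rw
  split_ifs
  · positivity
  · linarith

lemma sign_outer {M : ℕ} (α : ℝ) (hα : 1/2 < α) (ξ : Fin (M+2) → ℝ) (hξ : Function.Injective ξ)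
    (k : Fin (M+2)) (hk : bd k) : ∀ᶠ δ in 𝓝[≠] (0:ℝ), ∀ T ≥ 0,
      2 * T * (∑ j, Rw α δ j / ((ξ k + δ - ξ j) ^ 2 + T)) ≤ 1 →
      0 < δ * ∑ j, Rw α δ j * (ξ k + δ - ξ j) / ((ξ k + δ - ξ j) ^ 2 + T) := by
  obtain ⟨η, hη, hr⟩ := rest_near α ξ hξ k 1 one_pos
  set κ := 2 * α - 1 with hκd
  have hκ : 0 < κ := by linarith
  set C := α * κ / (κ + 1) with hC
  have hC0 : 0 < C := by positivity
  set B := |rest α ξ k (0, 0)| + 1 with hB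
  have hB0 : 0 < B := by positivity
  have e1 : ∀ᶠ δ in 𝓝[≠] (0:ℝ), |δ| < 1/8 ∧ |δ| < η ∧ δ ^ 2 / κ < η ∧ |δ| * B < C := by
    have c1 : ∀ᶠ δ in 𝓝 (0:ℝ), |δ| < 1/8 := (continuous_abs.tendsto (0:ℝ)).eventually_lt_const (by simp)
    have c2 : ∀ᶠ δ in 𝓝 (0:ℝ), |δ| < η := (continuous_abs.tendsto (0:ℝ)).eventually_lt_const (by simpa)
    have c3 : ∀ᶠ δ in 𝓝 (0:ℝ), δ ^ 2 / κ < η :=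
      (Continuous.tendsto (f := fun δ : ℝ => δ ^ 2 / κ) (by fun_prop) (0:ℝ)).eventually_lt_const (by simpa)
    have c4 : ∀ᶠ δ in 𝓝 (0:ℝ), |δ| * B < C :=
      (Continuous.tendsto (f := fun δ : ℝ => |δ| * B) (by fun_prop) (0:ℝ)).eventually_lt_const (by simpa)
    exact (c1.and (c2.and (c3.and c4))).filter_mono nhdsWithin_le_nhds
  filter_upwards [e1, self_mem_nhdsWithin] with δ hδ hδ0 T hT hle
  obtain ⟨d1, d2, d3, d4⟩ := hδ
  have hs : 0 < δ ^ 2 := by have : δ ≠ 0 := hδ0; positivity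
  have hk1 : α ≤ Rw α δ k := by unfold Rw; rw [if_pos hk]; have : 0 ≤ M * δ ^ 2 / 2 := by positivity
                                linarith
  have hown : Rw α δ k / (δ ^ 2 + T) ≤ ∑ j, Rw α δ j / ((ξ k + δ - ξ j) ^ 2 + T) := by
    have := Finset.single_le_sum (f := fun j => Rw α δ j / ((ξ k + δ - ξ j) ^ 2 + T))
      (fun j _ => by have := Rw_pos α δ hα d1 j; positivity) (Finset.mem_univ k)
    simpa [show ξ k + δ - ξ k = δ by ring] using this
  have hD : 0 < δ ^ 2 + T := by positivity
  have h1 : α / (δ ^ 2 + T) ≤ Rw α δ k / (δ ^ 2 + T) := by gcongr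
  have h2 : 2 * T * (α / (δ ^ 2 + T)) ≤ 1 := by
    refine le_trans ?_ hle
    gcongr
    linarith
  have h3 : T * κ ≤ δ ^ 2 := by
    rw [← mul_div_assoc, div_le_one hD] at h2
    rw [hκd]; linarith
  have h4 : T ≤ δ ^ 2 / κ := by rwa [le_div_iff₀ hκ]
  have h5 := hr δ T d2 (by rw [abs_of_nonneg hT]; linarith)
  have h6 : |rest α ξ k (δ, T)| ≤ B := by
    have := abs_sub_abs_le_abs_sub (rest α ξ k (δ, T)) (rest α ξ k (0, 0))
    linarith
  rw [own_split, mul_add]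
  have h7 : C ≤ δ * (Rw α δ k * δ / (δ ^ 2 + T)) := by
    have : δ * (Rw α δ k * δ / (δ ^ 2 + T)) = Rw α δ k * (δ ^ 2 / (δ ^ 2 + T)) := by ring
    rw [this, hC, mul_div_assoc]
    have : κ / (κ + 1) ≤ δ ^ 2 / (δ ^ 2 + T) := by
      rw [div_le_div_iff₀ (by linarith) hD]
      nlinarith
    gcongr
    linarith
  have h8 : |δ * rest α ξ k (δ, T)| < C := by
    rw [abs_mul]
    exact lt_of_le_of_lt (by gcongr) d4
  have := (abs_lt.1 h8).1
  linarith

lemma sign_inner {M : ℕ} (α : ℝ) (hα : 1/2 < α) (ξ : Fin (M+2) → ℝ) (hξ : StrictMono ξ)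
    (h0 : ξ 0 = -1) (hl : ξ (Fin.last (M+1)) = 1)
    (k : Fin (M+2)) (hk : ¬ bd k) (heq : ∑ j, (if bd j then α else 1/2) / (ξ k - ξ j) = 0) :
    ∀ᶠ δ in 𝓝[≠] (0:ℝ), ∀ T ≥ 0,
      2 * T * (∑ j, Rw α δ j / ((ξ k + δ - ξ j) ^ 2 + T)) ≤ 1 →
      0 < δ * ∑ j, Rw α δ j * (ξ k + δ - ξ j) / ((ξ k + δ - ξ j) ^ 2 + T) := by
  obtain ⟨η, hη, hr⟩ := rest_near α ξ hξ.injective k (1/20) (by norm_num)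
  have hr0 : rest α ξ k (0, 0) = 0 := by
    rw [← Finset.add_sum_erase _ _ (Finset.mem_univ k)] at heq
    simp only [sub_self, div_zero, zero_add] at heq
    refine Eq.trans ?_ heq
    unfold rest
    refine Finset.sum_congr rfl fun j hj => ?_
    have : ξ k - ξ j ≠ 0 := sub_ne_zero.2 fun h => (Finset.ne_of_mem_erase hj) (hξ.injective h).symm
    have e : Rw α 0 j = if bd j then α else 1/2 := by unfold Rw; simp
    simp only [e, add_zero]
    field_simp
  rw [hr0] at hr
  have e1 : ∀ᶠ δ in 𝓝[≠] (0:ℝ), |δ| < 1/8 ∧ |δ| < η / 5 := by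
    have c1 : ∀ᶠ δ in 𝓝 (0:ℝ), |δ| < 1/8 := (continuous_abs.tendsto (0:ℝ)).eventually_lt_const (by simp)
    have c2 : ∀ᶠ δ in 𝓝 (0:ℝ), |δ| < η / 5 := (continuous_abs.tendsto (0:ℝ)).eventually_lt_const (by simpa)
    exact (c1.and c2).filter_mono nhdsWithin_le_nhds
  filter_upwards [e1, self_mem_nhdsWithin] with δ hδ hδ0 T hT hle
  obtain ⟨d1, d2⟩ := hδ
  have hd : 0 < |δ| := abs_pos.2 hδ0
  have hs : δ ^ 2 = |δ| ^ 2 := (sq_abs δ).symm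
  have hRk : Rw α δ k = 1 / 2 - |δ| ^ 2 := by unfold Rw; rw [if_neg hk, hs]
  have hk0 : k ≠ 0 := fun h => hk (Or.inl h)
  have hD : 0 < |δ| ^ 2 + T := by positivity
  have hx1 : -1 ≤ ξ k := by rw [← h0]; exact hξ.monotone (Fin.zero_le _)
  have hx2 : ξ k ≤ 1 := by rw [← hl]; exact hξ.monotone (Fin.le_last _)
  have hs2 : |δ| ^ 2 < 1 / 64 := by nlinarith
  have hT5 : T ≤ 5 * |δ| := by
    rcases hT.lt_or_eq with hTp | hTp
    swap
    · rw [← hTp]; positivity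
    have hown : (1 / 2 - |δ| ^ 2) / (|δ| ^ 2 + T) + (1/2) / (9 + T) ≤ ∑ j, Rw α δ j / ((ξ k + δ - ξ j) ^ 2 + T) := by
      rw [← Finset.add_sum_erase _ _ (Finset.mem_univ k)]
      have := Finset.single_le_sum (f := fun j => Rw α δ j / ((ξ k + δ - ξ j) ^ 2 + T)) (s := Finset.univ.erase k)
        (fun j _ => by have := Rw_pos α δ hα d1 j; positivity) (Finset.mem_erase.2 ⟨hk0.symm, Finset.mem_univ 0⟩)
      rw [show ξ k + δ - ξ k = δ by ring, hRk, hs]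
      refine add_le_add le_rfl (le_trans ?_ this)
      have hR0 : 1/2 ≤ Rw α δ (0 : Fin (M+2)) := by
        unfold Rw; rw [if_pos bd_zero]; have : 0 ≤ M * δ ^ 2 / 2 := by positivity
        linarith
      have := abs_lt.1 d1
      have : (ξ k + δ - ξ 0) ^ 2 ≤ 9 := by rw [h0]; nlinarith
      gcongr
    have h1 : 2 * T * ((1 / 2 - |δ| ^ 2) / (|δ| ^ 2 + T) + (1/2) / (9 + T)) ≤ 1 := by
      refine le_trans ?_ hle
      gcongr
    set d := |δ|
    have h2 : 2 * T * ((1 / 2 - d ^ 2) * (9 + T) + (1/2) * (d ^ 2 + T)) ≤ (d ^ 2 + T) * (9 + T) := by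
      have e : 2 * T * ((1 / 2 - d ^ 2) / (d ^ 2 + T) + (1/2) / (9 + T)) =
        2 * T * ((1 / 2 - d ^ 2) * (9 + T) + (1/2) * (d ^ 2 + T)) / ((d ^ 2 + T) * (9 + T)) := by
        have : 9 + T ≠ 0 := by positivity
        field_simp
      rw [e, div_le_one (by positivity)] at h1
      exact h1
    have h3 : T ^ 2 ≤ 9 * d ^ 2 + 18 * d ^ 2 * T + 2 * d ^ 2 * T ^ 2 := by nlinarith
    have h3' : T ^ 2 ≤ 10 * d ^ 2 + 20 * d ^ 2 * T := by nlinarith [sq_nonneg T, mul_nonneg (sq_nonneg d) hT]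
    by_contra hc
    push Not at hc
    have h4 : 5 * d * T < T ^ 2 := by nlinarith
    have h5 : 20 * d ^ 2 * T ≤ T ^ 2 / 2 := by nlinarith [mul_pos hd hTp]
    nlinarith
  have h5 := hr δ T (by linarith) (by rw [abs_of_nonneg hT]; linarith)
  rw [sub_zero] at h5
  rw [own_split, mul_add]
  have h7 : |δ| / 11 ≤ δ * (Rw α δ k * δ / (δ ^ 2 + T)) := by
    have : δ * (Rw α δ k * δ / (δ ^ 2 + T)) = Rw α δ k * (|δ| ^ 2 / (|δ| ^ 2 + T)) := by rw [← hs]; ring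
    rw [this, hRk]
    have h8 : |δ| / (|δ| + 5) ≤ |δ| ^ 2 / (|δ| ^ 2 + T) := by
      rw [div_le_div_iff₀ (by linarith) hD]
      nlinarith
    have h9 : |δ| / (41/8) ≤ |δ| / (|δ| + 5) := by gcongr; linarith
    have h10 : |δ| / (41/8) ≤ |δ| ^ 2 / (|δ| ^ 2 + T) := h9.trans h8
    have h11 : (31/64) * (|δ| / (41/8)) ≤ (1 / 2 - |δ| ^ 2) * (|δ| ^ 2 / (|δ| ^ 2 + T)) :=
      mul_le_mul (by linarith) h10 (by positivity) (by linarith)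
    linarith
  have h8 : |δ * rest α ξ k (δ, T)| ≤ |δ| * (1/20) := by
    rw [abs_mul]
    gcongr
  have := (abs_le.1 h8).1
  linarith

lemma sign_all {M : ℕ} (α : ℝ) (hα : 1/2 < α) (ξ : Fin (M+2) → ℝ) (hξ : StrictMono ξ)
    (h0 : ξ 0 = -1) (hl : ξ (Fin.last (M+1)) = 1)
    (heq : ∀ k, ¬ bd k → ∑ j, (if bd j then α else 1/2) / (ξ k - ξ j) = 0) (B : ℝ) (hB : 0 < B) :
    ∃ δ > 0, δ < B ∧ δ < 1/8 ∧ ∀ k, (∀ T ≥ 0,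
      2 * T * (∑ j, Rw α δ j / ((ξ k + δ - ξ j) ^ 2 + T)) ≤ 1 →
      0 < ∑ j, Rw α δ j * (ξ k + δ - ξ j) / ((ξ k + δ - ξ j) ^ 2 + T)) ∧ (∀ T ≥ 0,
      2 * T * (∑ j, Rw α δ j / ((ξ k - δ - ξ j) ^ 2 + T)) ≤ 1 →
      ∑ j, Rw α δ j * (ξ k - δ - ξ j) / ((ξ k - δ - ξ j) ^ 2 + T) < 0) := by
  have h1 : ∀ᶠ δ in 𝓝[≠] (0:ℝ), ∀ k, ∀ T ≥ 0,
      2 * T * (∑ j, Rw α δ j / ((ξ k + δ - ξ j) ^ 2 + T)) ≤ 1 →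
      0 < δ * ∑ j, Rw α δ j * (ξ k + δ - ξ j) / ((ξ k + δ - ξ j) ^ 2 + T) := by
    refine eventually_all.2 fun k => ?_
    by_cases hk : bd k
    · exact sign_outer α hα ξ hξ.injective k hk
    · exact sign_inner α hα ξ hξ h0 hl k hk (heq k hk)
  rw [eventually_nhdsWithin_iff] at h1
  obtain ⟨r, hr, h2⟩ := Metric.eventually_nhds_iff.1 h1
  refine ⟨min (min (r/2) (B/2)) (1/16), by positivity, ?_, ?_, fun k => ?_⟩
  · exact lt_of_le_of_lt ((min_le_left _ _).trans (min_le_right _ _)) (by linarith)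
  · exact lt_of_le_of_lt (min_le_right _ _) (by norm_num)
  set δ := min (min (r/2) (B/2)) (1/16) with hδ
  have hδ0 : 0 < δ := by positivity
  have hδr : δ < r := lt_of_le_of_lt ((min_le_left _ _).trans (min_le_left _ _)) (by linarith)
  constructor
  · intro T hT h
    have := h2 (y := δ) (by simpa [abs_of_pos hδ0] using hδr) hδ0.ne' k T hT h
    exact pos_of_mul_pos_right this hδ0.le
  · intro T hT h
    have e : ∀ j : Fin (M+2), Rw α (-δ) j = Rw α δ j := by intro j; unfold Rw; simp
    have := h2 (y := -δ) (by simpa [abs_of_pos hδ0] using hδr) (by simpa using hδ0.ne') k T hT (by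
      simp only [e, ← sub_eq_add_neg]; exact h)
    simp only [e, ← sub_eq_add_neg] at this
    by_contra hc
    push Not at hc
    nlinarith
end

section
open Filter Topology

def gi (M n : ℕ) : Fin (M+2) := ⟨min n (M+1), by omega⟩

theorem regimeA (M : ℕ) (hM : 0 < M) (γ : ℝ) (hγ : 0 < γ) (hγ1 : γ < 1)
    (hreg : ((M:ℝ) + 2) * (1 - γ) < 2) :
    ∃ (ε : Fin (M+1) → ℝ) (z : Fin (M+1) → ℂ),
      (∀ j, 0 < ε j) ∧ Function.Injective z ∧
      (lensSolutions (M+1) γ ε z).Finite ∧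
      (lensSolutions (M+1) γ ε z).ncard = 5 * (M+1) - 1 := by
  have h1γ : 0 < 1 - γ := by linarith
  set α : ℝ := (1 / (1 - γ) - M / 2) / 2 with hαd
  have hα : 1 / 2 < α := by
    have : ((M:ℝ) + 2) / 2 < 1 / (1 - γ) := by
      rw [lt_div_iff₀ h1γ]; linarith
    rw [hαd]; linarith
  obtain ⟨ξ, hξ, h0, hl, heq⟩ := equil M α (by linarith)
  obtain ⟨B, hB, hgap⟩ : ∃ B : ℝ, 0 < B ∧ ∀ i j, i < j → 2 * B < ξ j - ξ i := by
    have : ∀ᶠ B in 𝓝[>] (0:ℝ), ∀ i j, i < j → 2 * B < ξ j - ξ i := by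
      refine eventually_all.2 fun i => eventually_all.2 fun j => ?_
      by_cases hij : i < j
      · have h := hξ hij
        have c : ∀ᶠ B in 𝓝 (0:ℝ), 2 * B < ξ j - ξ i :=
          (Continuous.tendsto (f := fun B : ℝ => 2 * B) (by fun_prop) (0:ℝ)).eventually_lt_const (by simpa using h)
        exact (c.mono fun B h _ => h).filter_mono nhdsWithin_le_nhds
      · exact Eventually.of_forall fun B h => absurd h hij
    obtain ⟨B, h1, h2⟩ := (this.and self_mem_nhdsWithin).exists
    exact ⟨B, h2, h1⟩
  obtain ⟨δ, hδ, hδB, hδ8, hsign⟩ := sign_all α hα ξ hξ h0 hl heq B hB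
  have hgap' : ∀ i j, i < j → 2 * δ < ξ j - ξ i := fun i j h => by linarith [hgap i j h]
  have hRp : ∀ k : Fin (M+2), 0 < Rw α δ k := Rw_pos α δ hα (by rwa [abs_of_pos hδ])
  have hsum : ∑ k : Fin (M+2), Rw α δ k = 1 / (1 - γ) := by
    rw [sum_mid]
    have e : ∀ i : Fin M, Rw α δ i.castSucc.succ = 1 / 2 - δ ^ 2 := fun i => by
      unfold Rw; rw [if_neg (bd_mid i)]
    simp only [e]
    unfold Rw
    rw [if_pos bd_zero, if_pos bd_last, Finset.sum_const, Finset.card_univ, Fintype.card_fin, nsmul_eq_mul, hαd]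
    ring
  obtain ⟨ε, w, c, hε, hint, hp⟩ := pick (N := M+1) γ hγ1 ξ (fun k => Rw α δ k) hξ hRp hsum
  have hw : StrictMono w := by
    intro i j hij
    have h1 := (hint i).2
    have h2 := (hint j).1
    have h3 : ξ i.succ ≤ ξ j.castSucc := hξ.monotone (by
      rw [Fin.le_def]; simp; exact hij)
    linarith
  have hnode : ∀ (k : Fin (M+2)) (j : Fin (M+1)), ξ k ≠ w j := fun k j =>
    (mid_ne ξ hξ j (w j) (hint j).1 (hint j).2 k).symm
  have hN : 0 < M + 1 := Nat.succ_pos _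
  -- gap zeros
  have hgz : ∀ x, x ∉ Oset γ ε w → ph γ c ε w x = 0 → x = -1 ∨ x = 1 := by
    intro x hx hx0
    obtain ⟨n1, n2⟩ := ph_gap hN γ c hγ ε w hε x hx
    rw [n2] at hx0
    have : ∃ k, x = ξ k := by
      by_contra hc
      push Not at hc
      have := Ps_zero γ c ε w ξ _ hp x n1 hc
      rw [hx0] at this
      simp at this
    obtain ⟨k, hk⟩ := this
    by_cases hb : bd k
    · rcases hb with h | h
      · left; rw [hk, h, h0]
      · right; rw [hk, h, hl]
    · exfalso
      have h3 := (Ps_slope γ c ε w ξ _ hp k (hnode k) hξ.injective (hRp k)).2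
      have h4 : Rw α δ k < 1 / 2 := by
        unfold Rw; rw [if_neg hb]; have : 0 < δ ^ 2 := by positivity
        linarith
      have h5 : 2 < 1 / Rw α δ k := by
        rw [lt_div_iff₀ (hRp k)]; linarith
      apply hx
      rw [hk]
      refine mem_O_of_SS0 hN γ hγ ε w hε _ (hnode k) ?_
      linarith
  have hne : ∀ (k i : Fin (M+2)) (s : ℝ), |s| = δ → ξ k + s ≠ ξ i := by
    intro k i s hs h
    have h1 := le_abs_self s
    have h2 := neg_abs_le s
    rcases lt_trichotomy k i with h3 | h3 | h3
    · have := hgap' _ _ h3; linarith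
    · rw [h3] at h
      have : s = 0 := by linarith
      rw [this] at hs; simp at hs; linarith
    · have := hgap' _ _ h3; linarith
  have hneg : ∀ k, ph γ c ε w (ξ k + δ) < 0 := by
    intro k
    obtain ⟨l1, l2, l3⟩ := lam_sign hN γ c hγ ε w hε ξ _ hp (ξ k + δ) (fun i => hne k i δ (abs_of_pos hδ)) hRp
    exact l2 ((hsign k).1 _ (VV_nonneg _ _ _ _) l1)
  have hpos : ∀ k, 0 < ph γ c ε w (ξ k - δ) := by
    intro k
    obtain ⟨l1, l2, l3⟩ := lam_sign hN γ c hγ ε w hε ξ _ hp (ξ k - δ) (fun i => by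
      rw [sub_eq_add_neg]; exact hne k i (-δ) (by rw [abs_neg, abs_of_pos hδ])) hRp
    exact l3 ((hsign k).2 _ (VV_nonneg _ _ _ _) l1)
  set xs : ℕ → ℝ := fun n => if Even n then ξ (gi M ((n+1)/2)) + δ else ξ (gi M ((n+1)/2)) - δ with hxsd
  have x0 : xs 0 = -1 + δ := by
    have : gi M 0 = 0 := by unfold gi; ext; simp
    simp [hxsd, this, h0]
  have xl : xs (2 * (M+1) - 1) = 1 - δ := by
    have e : 2 * (M+1) - 1 = 2 * M + 1 := by omega
    have : gi M ((2 * M + 1 + 1)/2) = Fin.last (M+1) := by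
      unfold gi; ext; simp; omega
    have ho : ¬ Even (2 * M + 1) := by simp
    rw [e, hxsd]; simp only [if_neg ho, this, hl]
  refine final_count hN γ c hγ hγ1 ε w hε hw ?_
  refine upper_count hN γ c hγ hγ1 ε w hε hw ?_ xs ?_ ?_ ?_
  · intro x hx hx0
    rcases hgz x hx hx0 with h | h
    · left; intro j
      have := hξ.monotone (Fin.zero_le j.castSucc)
      have h2 := (hint j).1
      rw [h]; rw [h0] at this; linarith
    · right; intro j
      have := hξ.monotone (Fin.le_last j.succ)
      have h2 := (hint j).2
      rw [h]; rw [hl] at this; linarith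
  · intro k l hkl hl
    have hle : (k+1)/2 ≤ (l+1)/2 := by omega
    rcases hle.lt_or_eq with h | h
    · have : gi M ((k+1)/2) < gi M ((l+1)/2) := by
        unfold gi; rw [Fin.lt_def]; simp; omega
      have := hgap' _ _ this
      simp only [hxsd]
      split_ifs <;> linarith
    · have hk : ¬ Even k := by rw [Nat.even_iff]; omega
      have hl : Even l := by rw [Nat.even_iff]; omega
      simp only [hxsd, if_neg hk, if_pos hl, h]
      linarith
  · intro k hk
    by_cases he : Even k
    · have he' : ¬ Even (k+1) := by rw [Nat.even_add_one]; simpa using he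
      simp only [hxsd, if_pos he, if_neg he']
      exact mul_neg_of_neg_of_pos (hneg _) (hpos _)
    · have he' : Even (k+1) := by rw [Nat.even_add_one]; exact he
      simp only [hxsd, if_neg he, if_pos he']
      exact mul_neg_of_pos_of_neg (hpos _) (hneg _)
  · intro x hx hx0
    rw [x0, xl]
    rcases hgz x hx hx0 with h | h
    · left; linarith
    · right; linarith
end

section
open Filter Topology

lemma root_sum (m : ℕ) (hm : 0 < m) (ω : ℂ) (hω : IsPrimitiveRoot ω m) (ζ : ℂ) (hζ : ζ ^ m ≠ 1) :
    ∑ k ∈ Finset.range m, 1 / (ζ - ω ^ k) = m * ζ ^ (m - 1) / (ζ ^ m - 1) := by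
  have h1 : ζ ^ m - 1 ≠ 0 := sub_ne_zero.2 hζ
  have hk : ∀ k, (ω ^ k) ^ m = 1 := fun k => by rw [← pow_mul, mul_comm, pow_mul, hω.pow_eq_one, one_pow]
  have h2 : ∀ k, ζ - ω ^ k ≠ 0 := by
    intro k h
    apply hζ
    rw [sub_eq_zero.1 h, hk]
  rw [eq_div_iff h1, Finset.sum_mul]
  have h3 : ∀ k ∈ Finset.range m, 1 / (ζ - ω ^ k) * (ζ ^ m - 1) =
      ∑ i ∈ Finset.range m, ζ ^ i * (ω ^ (m - 1 - i)) ^ k := by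
    intro k _
    have := (Commute.all ζ (ω ^ k)).geom_sum₂_mul m
    rw [hk] at this
    rw [← this]
    have e := h2 k
    field_simp
    refine Finset.sum_congr rfl fun i _ => ?_
    rw [← pow_mul, ← pow_mul, mul_comm k]
  rw [Finset.sum_congr rfl h3, Finset.sum_comm, Finset.sum_eq_single (m - 1)]
  · simp [mul_comm]
  · intro i hi hne
    rw [← Finset.mul_sum]
    have hi' := Finset.mem_range.1 hi
    have h4 : ω ^ (m - 1 - i) ≠ 1 := by
      refine hω.pow_ne_one_of_pos_of_lt (by omega) (by omega)
    have h5 := geom_sum_mul (ω ^ (m - 1 - i)) m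
    rw [hk, sub_self] at h5
    rcases mul_eq_zero.1 h5 with h | h
    · rw [h, mul_zero]
    · exact absurd (sub_eq_zero.1 h) h4
  · intro h
    exact absurd (Finset.mem_range.2 (by omega)) h

lemma root_sum2 (m : ℕ) (hm : 1 < m) (ω : ℂ) (hω : IsPrimitiveRoot ω m) (ζ : ℂ) (hζ : ζ ^ m ≠ 1) :
    ∑ k ∈ Finset.range m, ((ω ^ k) ^ 2 - 1) / (ζ - ω ^ k) =
      (ζ ^ 2 - 1) * (m * ζ ^ (m - 1) / (ζ ^ m - 1)) - m * ζ := by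
  have hk : ∀ k, (ω ^ k) ^ m = 1 := fun k => by rw [← pow_mul, mul_comm, pow_mul, hω.pow_eq_one, one_pow]
  have h2 : ∀ k, ζ - ω ^ k ≠ 0 := by
    intro k h
    apply hζ
    rw [sub_eq_zero.1 h, hk]
  rw [← root_sum m (by omega) ω hω ζ hζ, Finset.mul_sum]
  have h3 : ∀ k ∈ Finset.range m, ((ω ^ k) ^ 2 - 1) / (ζ - ω ^ k) = (ζ ^ 2 - 1) * (1 / (ζ - ω ^ k)) - ζ - ω ^ k := by
    intro k _
    have := h2 k
    field_simp
    ring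
  rw [Finset.sum_congr rfl h3, Finset.sum_sub_distrib, Finset.sum_sub_distrib, hω.geom_sum_eq_zero hm]
  simp

lemma half_sum (N : ℕ) (g : ℕ → ℂ) (h0 : g 0 = 0) (hn : g (N+1) = 0) :
    ∑ k ∈ Finset.range (2 * (N+1)), g k = ∑ j ∈ Finset.range N, (g (j+1) + g (2 * (N+1) - (j+1))) := by
  rw [two_mul, Finset.sum_range_add, Finset.sum_range_succ', Finset.sum_range_succ', h0, add_zero, add_zero, hn,
    add_zero, Finset.sum_add_distrib]
  congr 1
  rw [← Finset.sum_range_reflect]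
  refine Finset.sum_congr rfl fun j hj => ?_
  have := Finset.mem_range.1 hj
  congr 1
  omega

noncomputable def an (N : ℕ) (k : ℕ) : ℝ := k * Real.pi / (N + 1)

lemma cheb_range (N : ℕ) (μ : ℝ) (ζ : ℂ) (h0 : ζ ≠ 0) (hζ : ζ ^ (2 * (N+1)) ≠ 1) :
    ∑ j ∈ Finset.range N, ((2 * μ / (N+1) * Real.sin (an N (j+1)) ^ 2 : ℝ) : ℂ) /
      (ζ + ζ⁻¹ - ((2 * Real.cos (an N (j+1)) : ℝ) : ℂ)) =
    μ / ζ - μ * (ζ - ζ⁻¹) / (ζ ^ (2 * (N+1)) - 1) := by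
  set m := 2 * (N+1) with hm
  set ω : ℂ := Complex.exp (2 * Real.pi * Complex.I / (m : ℕ)) with hωd
  have hω : IsPrimitiveRoot ω m := Complex.isPrimitiveRoot_exp m (by omega)
  have hN : ((N:ℂ) + 1) ≠ 0 := by exact_mod_cast Nat.succ_ne_zero N
  have hexp : ∀ k : ℕ, ω ^ k = Complex.exp ((an N k : ℝ) * Complex.I) := by
    intro k
    rw [hωd, ← Complex.exp_nat_mul]
    congr 1
    unfold an
    rw [hm]
    push_cast
    field_simp
  have hcos : ∀ k : ℕ, ((2 * Real.cos (an N k) : ℝ) : ℂ) = ω ^ k + (ω ^ k)⁻¹ := by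
    intro k
    rw [hexp, ← Complex.exp_neg]
    push_cast
    rw [Complex.two_cos, neg_mul]
  have hsin : ∀ k : ℕ, ((Real.sin (an N k) ^ 2 : ℝ) : ℂ) = - (ω ^ k - (ω ^ k)⁻¹) ^ 2 / 4 := by
    intro k
    have h1 : Real.sin (an N k) ^ 2 = 1 - (2 * Real.cos (an N k)) ^ 2 / 4 := by
      have := Real.sin_sq_add_cos_sq (an N k); linarith
    rw [h1]
    have h2 := hcos k
    rw [Complex.ofReal_sub, Complex.ofReal_div, Complex.ofReal_pow, h2]
    have : ω ^ k ≠ 0 := by rw [hexp]; exact Complex.exp_ne_zero _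
    push_cast
    field_simp
    ring
  have hk : ∀ k, (ω ^ k) ^ m = 1 := fun k => by rw [← pow_mul, mul_comm, pow_mul, hω.pow_eq_one, one_pow]
  have h2 : ∀ k, ζ - ω ^ k ≠ 0 := by
    intro k h
    apply hζ
    rw [sub_eq_zero.1 h, hk]
  have hm1 : 1 < m := by omega
  have key := root_sum2 m hm1 ω hω ζ hζ
  rw [hm, half_sum N] at key
  rotate_left
  · simp
  · rw [← pow_mul, mul_comm (N+1) 2, ← hm, hω.pow_eq_one]; simp
  rw [← hm] at key
  have hterm : ∀ j ∈ Finset.range N, ((2 * μ / (N+1) * Real.sin (an N (j+1)) ^ 2 : ℝ) : ℂ) /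
      (ζ + ζ⁻¹ - ((2 * Real.cos (an N (j+1)) : ℝ) : ℂ)) = -(μ / m) * (((ω ^ (j+1)) ^ 2 - 1) / (ζ - ω ^ (j+1)) +
        ((ω ^ (m - (j+1))) ^ 2 - 1) / (ζ - ω ^ (m - (j+1)))) := by
    intro j hj
    have hj' := Finset.mem_range.1 hj
    rw [Complex.ofReal_mul]
    have e1 := hcos (j+1)
    have e2 := hsin (j+1)
    push_cast at e1 e2 ⊢
    rw [e1, e2]
    have e3 : ω ^ (m - (j+1)) = (ω ^ (j+1))⁻¹ := by
      refine eq_inv_of_mul_eq_one_left ?_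
      rw [← pow_add, show m - (j+1) + (j+1) = m by omega, hω.pow_eq_one]
    have f1 := h2 (j+1)
    have f2 := h2 (m - (j+1))
    rw [e3] at f2 ⊢
    have f0 : ω ^ (j+1) ≠ 0 := by rw [hexp]; exact Complex.exp_ne_zero _
    set η := ω ^ (j+1)
    have f3 : ζ + ζ⁻¹ - (η + η⁻¹) = (ζ - η) * (ζ - η⁻¹) / ζ := by
      field_simp; ring
    have f4 : (m : ℂ) = 2 * (N+1) := by rw [hm]; push_cast; ring
    rw [f3, f4]
    have f5 : ζ - η⁻¹ = (ζ * η - 1) / η := by field_simp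
    have f6 : ζ * η - 1 ≠ 0 := by
      intro h; rw [f5, h] at f2; simp at f2
    have f7 : η * ζ - 1 ≠ 0 := by rwa [mul_comm] at f6
    rw [f5]
    field_simp
    ring
  rw [Finset.sum_congr rfl hterm, ← Finset.mul_sum, key]
  have hmm : (m : ℂ) ≠ 0 := by exact_mod_cast (by omega : m ≠ 0)
  have h3 : ζ ^ m - 1 ≠ 0 := sub_ne_zero.2 hζ
  have h4 : ζ ^ m = ζ ^ (m - 1) * ζ := by rw [← pow_succ, Nat.sub_add_cancel (by omega)]
  rw [h4] at h3 ⊢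
  generalize ζ ^ (m - 1) = q at h3 ⊢
  have h5 : ζ * q - 1 ≠ 0 := by rwa [mul_comm] at h3
  field_simp
  ring
end

section
open Filter Topology

noncomputable def wB (N : ℕ) (j : Fin N) : ℝ := 2 * Real.cos (an N (N - (j:ℕ)))
noncomputable def eB (N : ℕ) (μ : ℝ) (j : Fin N) : ℝ := 2 * μ / (N+1) * Real.sin (an N (N - (j:ℕ))) ^ 2

lemma an_mem (N k : ℕ) (h0 : 0 < k) (h1 : k < N + 1) : 0 < an N k ∧ an N k < Real.pi := by
  have hp := Real.pi_pos
  unfold an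
  have : (k:ℝ) < N + 1 := by exact_mod_cast h1
  have h2 : (0:ℝ) < k := by exact_mod_cast h0
  constructor
  · positivity
  · rw [div_lt_iff₀ (by positivity)]
    nlinarith

lemma an_mono (N : ℕ) {k l : ℕ} (h : k < l) : an N k < an N l := by
  have hp := Real.pi_pos
  unfold an
  have : (k:ℝ) < l := by exact_mod_cast h
  gcongr

lemma eB_pos (N : ℕ) (μ : ℝ) (hμ : 0 < μ) (j : Fin N) : 0 < eB N μ j := by
  unfold eB
  have h := an_mem N (N - (j:ℕ)) (by have := j.2; omega) (by omega)
  have := Real.sin_pos_of_pos_of_lt_pi h.1 h.2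
  positivity

lemma wB_mono (N : ℕ) : StrictMono (wB N) := by
  intro i j hij
  unfold wB
  have hi := an_mem N (N - (i:ℕ)) (by have := i.2; omega) (by omega)
  have hj := an_mem N (N - (j:ℕ)) (by have := j.2; omega) (by omega)
  have : an N (N - (j:ℕ)) < an N (N - (i:ℕ)) := an_mono N (by
    have : (i:ℕ) < j := hij
    have := j.2
    omega)
  have := Real.cos_lt_cos_of_nonneg_of_le_pi hj.1.le hi.2.le this
  linarith

lemma cheb (N : ℕ) (μ : ℝ) (ζ : ℂ) (h0 : ζ ≠ 0) (hζ : ζ ^ (2 * (N+1)) ≠ 1) :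
    ∑ j, (eB N μ j : ℂ) / (ζ + ζ⁻¹ - wB N j) = μ / ζ - μ * (ζ - ζ⁻¹) / (ζ ^ (2 * (N+1)) - 1) := by
  rw [← cheb_range N μ ζ h0 hζ, ← Finset.sum_range_reflect, Finset.sum_range]
  refine Finset.sum_congr rfl fun j _ => ?_
  have : N - 1 - (j:ℕ) + 1 = N - j := by have := j.2; omega
  rw [this]
  rfl

lemma node_iff (N : ℕ) (θ : ℝ) (h0 : 0 < θ) (hp : θ < Real.pi) (h : Real.sin ((N+1) * θ) = 0) :
    ∃ j, 2 * Real.cos θ = wB N j := by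
  obtain ⟨k, hk⟩ := Real.sin_eq_zero_iff.1 h
  have hpi := Real.pi_pos
  have hn : (0:ℝ) < N + 1 := by positivity
  have k0 : (0:ℝ) < k := by
    by_contra hc
    push Not at hc
    have : (k:ℝ) * Real.pi ≤ 0 := mul_nonpos_of_nonpos_of_nonneg hc hpi.le
    have : 0 < (N+1) * θ := by positivity
    linarith
  have k1 : (k:ℝ) < N + 1 := by
    by_contra hc
    push Not at hc
    have h1 : ((N:ℝ) + 1) * Real.pi ≤ k * Real.pi := by gcongr
    have h2 : ((N:ℝ) + 1) * θ < (N+1) * Real.pi := by gcongr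
    linarith
  have k0' : 0 < k := by exact_mod_cast k0
  have k1' : k < N + 1 := by exact_mod_cast k1
  lift k to ℕ using k0'.le
  refine ⟨⟨N - k, by omega⟩, ?_⟩
  unfold wB
  have e : N - (N - k) = k := by omega
  simp only [e]
  unfold an
  congr 2
  field_simp
  push_cast at hk
  linarith

lemma cheb_real (N : ℕ) (μ θ : ℝ) (h : Real.sin ((N+1) * θ) ≠ 0) :
    ∑ j, eB N μ j / (2 * Real.cos θ - wB N j) =
      μ * (Real.cos θ - Real.sin θ * (Real.cos ((N+1) * θ) / Real.sin ((N+1) * θ))) := by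
  set ζ : ℂ := Complex.exp (θ * Complex.I) with hζ
  have h0 : ζ ≠ 0 := Complex.exp_ne_zero _
  have hinv : ζ⁻¹ = Complex.exp (-(θ * Complex.I)) := by rw [hζ, Complex.exp_neg]
  have hE : ζ ^ (N+1) = Complex.exp ((((N+1) * θ : ℝ)) * Complex.I) := by
    rw [hζ, ← Complex.exp_nat_mul]
    congr 1
    push_cast
    ring
  have z1 : ζ = Real.cos θ + Real.sin θ * Complex.I := by
    rw [hζ, Complex.exp_mul_I]; push_cast; rfl
  have z2 : ζ⁻¹ = Real.cos θ - Real.sin θ * Complex.I := by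
    rw [hinv, ← neg_mul, Complex.exp_mul_I, Complex.cos_neg, Complex.sin_neg]; push_cast; ring
  set φ : ℝ := (N+1) * θ
  have z3 : ζ ^ (N+1) = Real.cos φ + Real.sin φ * Complex.I := by
    rw [hE, Complex.exp_mul_I]; push_cast; rfl
  have sc : ((Real.cos φ : ℝ) : ℂ) ^ 2 + ((Real.sin φ : ℝ) : ℂ) ^ 2 = 1 := by
    exact_mod_cast (by have := Real.sin_sq_add_cos_sq φ; linarith : Real.cos φ ^ 2 + Real.sin φ ^ 2 = 1)
  have hS : ((Real.sin φ : ℝ) : ℂ) ≠ 0 := by exact_mod_cast h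
  have hI := Complex.I_sq
  set C : ℂ := ((Real.cos φ : ℝ) : ℂ)
  set S : ℂ := ((Real.sin φ : ℝ) : ℂ)
  have hCS : C + S * Complex.I ≠ 0 := by rw [← z3]; exact pow_ne_zero _ h0
  have z4 : ζ ^ (2 * (N+1)) - 1 = 2 * Complex.I * S * (C + S * Complex.I) := by
    rw [mul_comm, pow_mul, z3]
    linear_combination (1:ℂ) * sc - S ^ 2 * hI
  have hne : ζ ^ (2 * (N+1)) ≠ 1 := by
    rw [← sub_ne_zero, z4]
    exact mul_ne_zero (mul_ne_zero (mul_ne_zero two_ne_zero Complex.I_ne_zero) hS) hCS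
  have key := cheb N μ ζ h0 hne
  rw [z4, div_eq_mul_inv (μ:ℂ) ζ] at key
  rw [z2] at key
  rw [z1] at key
  apply Complex.ofReal_injective
  push_cast
  have e1 : ∀ j, (2 * Complex.cos θ - wB N j : ℂ) =
      (Real.cos θ + Real.sin θ * Complex.I + (Real.cos θ - Real.sin θ * Complex.I) - wB N j : ℂ) := by
    intro j; push_cast; ring
  simp only [e1]
  rw [key]
  have e2 : (C + S * Complex.I) * (C - S * Complex.I) = 1 := by linear_combination sc - S ^ 2 * hI
  have e3 : (μ:ℂ) * (Real.cos θ + Real.sin θ * Complex.I - (Real.cos θ - Real.sin θ * Complex.I)) / (2 * Complex.I * S * (C + S * Complex.I))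
    = μ * Real.sin θ * (C - S * Complex.I) / S := by
    have hI0 := Complex.I_ne_zero
    rw [div_eq_div_iff (by exact mul_ne_zero (mul_ne_zero (mul_ne_zero two_ne_zero Complex.I_ne_zero) hS) hCS) hS]
    linear_combination (-2 * (μ:ℂ) * Real.sin θ * Complex.I * S) * e2
  rw [e3]
  have : Complex.cos φ = C := by push_cast [C]; rfl
  have hh : Complex.sin φ = S := by push_cast [S]; rfl
  rw [this, hh]
  push_cast
  field_simp
  ring

lemma SS_real (N : ℕ) (μ θ : ℝ) (h : Real.sin ((N+1) * θ) ≠ 0) (hn : ∀ j, 2 * Real.cos θ ≠ wB N j) :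
    2 * Real.sin θ * SS (eB N μ) (wB N) (2 * Real.cos θ) 0 = μ * (-Real.sin θ
      - Real.cos θ * (Real.cos ((N+1) * θ) / Real.sin ((N+1) * θ)) + (N+1) * Real.sin θ / Real.sin ((N+1) * θ) ^ 2) := by
  have d1 : HasDerivAt (fun t => ∑ j, eB N μ j / (2 * Real.cos t - wB N j))
      (∑ j, 2 * Real.sin θ * (eB N μ j / ((2 * Real.cos θ - wB N j) ^ 2 + 0))) θ := by
    refine HasDerivAt.fun_sum fun j _ => ?_
    have hne : 2 * Real.cos θ - wB N j ≠ 0 := sub_ne_zero.2 (hn j)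
    have := (((((Real.hasDerivAt_cos θ).const_mul 2).sub_const (wB N j)).fun_inv hne).const_mul (eB N μ j))
    simp only [div_eq_mul_inv]
    refine this.congr_deriv ?_
    field_simp
    ring
  have dm : HasDerivAt (fun t : ℝ => ((N:ℝ)+1) * t) (N+1) θ := by
    simpa using (hasDerivAt_id' θ).const_mul ((N:ℝ)+1)
  have dc := dm.cos
  have ds := dm.sin
  have d2 : HasDerivAt (fun t => μ * (Real.cos t - Real.sin t * (Real.cos ((N+1) * t) / Real.sin ((N+1) * t))))
      (μ * (-Real.sin θ
      - Real.cos θ * (Real.cos ((N+1) * θ) / Real.sin ((N+1) * θ)) + (N+1) * Real.sin θ / Real.sin ((N+1) * θ) ^ 2)) θ := by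
    have := ((Real.hasDerivAt_cos θ).fun_sub ((Real.hasDerivAt_sin θ).fun_mul (dc.fun_div ds h))).const_mul μ
    refine this.congr_deriv ?_
    have sc := Real.sin_sq_add_cos_sq ((N+1) * θ)
    field_simp
    linear_combination μ * ((N:ℝ)+1) * Real.sin θ * sc
  have hev : (fun t => ∑ j, eB N μ j / (2 * Real.cos t - wB N j)) =ᶠ[𝓝 θ]
      fun t => μ * (Real.cos t - Real.sin t * (Real.cos ((N+1) * t) / Real.sin ((N+1) * t))) := by
    have : ∀ᶠ t in 𝓝 θ, Real.sin (((N:ℝ)+1) * t) ≠ 0 :=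
      (Continuous.continuousAt (f := fun t : ℝ => Real.sin (((N:ℝ)+1) * t)) (by fun_prop)).eventually_ne h
    filter_upwards [this] with t ht
    exact cheb_real N μ t ht
  have := (d1.congr_of_eventuallyEq hev.symm).unique d2
  rw [← this]
  unfold SS
  rw [Finset.mul_sum]
end

section
open Filter Topology

lemma circ (N : ℕ) (γ R θ : ℝ) (hγ : 0 < γ) (hR : 1 < R) (hR2 : γ * R ^ 2 = 1) :
    ∃ D > 0, rr γ 0 (eB N (1/γ - γ)) (wB N) ⟨(R + 1/R) * Real.cos θ, (R - 1/R) * Real.sin θ⟩ =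
      ⟨(R + 1/R) * Real.cos θ - (1/γ - γ) / D * ((R - 1/R) * Real.cos θ * (R ^ (2*(N+1)) * Real.cos (2 * (N+1) * θ) - 1)
        + (R + 1/R) * R ^ (2*(N+1)) * Real.sin θ * Real.sin (2 * (N+1) * θ)),
       -((R - 1/R) * Real.sin θ) - (1/γ - γ) / D * ((R + 1/R) * Real.sin θ * (R ^ (2*(N+1)) * Real.cos (2 * (N+1) * θ) - 1)
        - (R - 1/R) * R ^ (2*(N+1)) * Real.cos θ * Real.sin (2 * (N+1) * θ))⟩ := by
  have hR0 : 0 < R := by linarith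
  have hL : 1 < R ^ (2*(N+1)) := one_lt_pow₀ hR (by omega)
  set L := R ^ (2*(N+1)) with hLd
  set φ : ℝ := 2 * (N+1) * θ with hφ
  have sc := Real.sin_sq_add_cos_sq φ
  have st := Real.sin_sq_add_cos_sq θ
  set ζ : ℂ := R * Complex.exp (θ * Complex.I) with hζ
  have hRc : (R:ℂ) ≠ 0 := by exact_mod_cast hR0.ne'
  have h0 : ζ ≠ 0 := mul_ne_zero hRc (Complex.exp_ne_zero _)
  have z1 : ζ = ⟨R * Real.cos θ, R * Real.sin θ⟩ := by
    rw [hζ, Complex.exp_mul_I, ← Complex.ofReal_cos, ← Complex.ofReal_sin]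
    apply Complex.ext <;> simp [-Complex.ofReal_cos, -Complex.ofReal_sin]
  have z2 : ζ⁻¹ = ⟨1/R * Real.cos θ, -(1/R * Real.sin θ)⟩ := by
    rw [hζ, mul_inv, ← Complex.exp_neg, ← neg_mul, Complex.exp_mul_I, Complex.cos_neg, Complex.sin_neg,
      ← Complex.ofReal_cos, ← Complex.ofReal_sin, ← Complex.ofReal_inv]
    apply Complex.ext <;> simp [-Complex.ofReal_cos, -Complex.ofReal_sin]
  have z3 : ζ ^ (2 * (N+1)) = ⟨L * Real.cos φ, L * Real.sin φ⟩ := by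
    rw [hζ, mul_pow, ← Complex.exp_nat_mul, ← Complex.ofReal_pow, ← hLd]
    have : ((2 * (N+1) : ℕ) : ℂ) * (θ * Complex.I) = ((φ:ℝ):ℂ) * Complex.I := by
      rw [hφ]; push_cast; ring
    rw [this, Complex.exp_mul_I, ← Complex.ofReal_cos, ← Complex.ofReal_sin]
    apply Complex.ext <;> simp [-Complex.ofReal_cos, -Complex.ofReal_sin]
  have hD : 0 < (L * Real.cos φ - 1) ^ 2 + (L * Real.sin φ) ^ 2 := by
    have := Real.cos_le_one φ
    nlinarith [sq_pos_of_pos (sub_pos.2 hL)]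
  refine ⟨_, hD, ?_⟩
  set D := (L * Real.cos φ - 1) ^ 2 + (L * Real.sin φ) ^ 2 with hDd
  have hne : ζ ^ (2 * (N+1)) ≠ 1 := by
    intro h
    rw [z3] at h
    have a1 : L * Real.cos φ = 1 := by simpa using congrArg Complex.re h
    have a2 : L * Real.sin φ = 0 := by simpa using congrArg Complex.im h
    rw [hDd, a1, a2] at hD
    norm_num at hD
  have hW : (⟨(R + 1/R) * Real.cos θ, (R - 1/R) * Real.sin θ⟩ : ℂ) = ζ + ζ⁻¹ := by
    rw [z2, z1]
    apply Complex.ext <;> simp <;> ring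
  have hq : (ζ - ζ⁻¹) / (ζ ^ (2 * (N+1)) - 1) =
      ⟨((R - 1/R) * Real.cos θ * (L * Real.cos φ - 1) + (R + 1/R) * L * Real.sin θ * Real.sin φ) / D,
      ((R + 1/R) * Real.sin θ * (L * Real.cos φ - 1) - (R - 1/R) * L * Real.cos θ * Real.sin φ) / D⟩ := by
    rw [div_eq_iff (sub_ne_zero.2 hne), z3, z2, z1]
    apply Complex.ext
    · simp
      field_simp
      rw [hDd]
      ring
    · simp
      field_simp
      rw [hDd]
      ring
  have hc := cheb N (1/γ - γ) ζ h0 hne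
  unfold rr
  rw [hW, hc, mul_div_assoc, hq, div_eq_mul_inv _ ζ, z2, z1]
  have hg : γ = 1 / R ^ 2 := by field_simp; linarith
  have hg' : 1 / γ = R ^ 2 := by rw [hg]; simp
  rw [hg']
  generalize (R - 1/R) * Real.cos θ * (L * Real.cos φ - 1) + (R + 1/R) * L * Real.sin θ * Real.sin φ = P
  generalize (R + 1/R) * Real.sin θ * (L * Real.cos φ - 1) - (R - 1/R) * L * Real.cos θ * Real.sin φ = Q
  apply Complex.ext
  · rw [Complex.add_re, Complex.sub_re, Complex.add_re, Complex.re_ofReal_mul, Complex.re_ofReal_mul, Complex.re_ofReal_mul,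
      Complex.add_re, Complex.ofReal_re, hg]
    simp only
    field_simp
    ring
  · rw [Complex.add_im, Complex.sub_im, Complex.add_im, Complex.im_ofReal_mul, Complex.im_ofReal_mul, Complex.im_ofReal_mul,
      Complex.add_im, Complex.ofReal_im, hg]
    simp only
    field_simp
    ring
end

section
open Filter Topology

noncomputable def ang (N k : ℕ) : ℝ := k * Real.pi / (2 * (N + 1))

lemma ang_mul (N k : ℕ) : 2 * ((N:ℝ) + 1) * ang N k = k * Real.pi := by
  unfold ang; field_simp

lemma ang_pos (N k : ℕ) (h : 0 < k) : 0 < ang N k := by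
  have := Real.pi_pos
  have h2 : (0:ℝ) < k := by exact_mod_cast h
  unfold ang; positivity

lemma ang_lt_pi (N k : ℕ) (h : k < 2 * (N + 1)) : ang N k < Real.pi := by
  have := Real.pi_pos
  have h2 : (k:ℝ) < 2 * (N + 1) := by exact_mod_cast h
  unfold ang
  rw [div_lt_iff₀ (by positivity)]
  nlinarith

lemma ang_mono (N : ℕ) {k l : ℕ} (h : k ≤ l) : ang N k ≤ ang N l := by
  have hp := Real.pi_pos
  unfold ang
  have : (k:ℝ) ≤ l := by exact_mod_cast h
  gcongr

lemma sig_cases (k : ℕ) : (-1 : ℝ) ^ k = 1 ∨ (-1 : ℝ) ^ k = -1 := neg_one_pow_eq_or ℝ k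

lemma circ_pt (N : ℕ) (hN : 0 < N) (γ R : ℝ) (hγ : 0 < γ) (hγ1 : γ < 1) (hR : 1 < R) (hR2 : γ * R ^ 2 = 1)
    (k : ℕ) (hk : 0 < k) (hk2 : k ≤ 2 * N) :
    ∃ θ, ang N k < θ ∧ θ < ang N (k+1) ∧
      (R + 1/R) * Real.cos θ ∈ Oset γ (eB N (1/γ - γ)) (wB N) ∧
      (-1) ^ k * ph γ 0 (eB N (1/γ - γ)) (wB N) ((R + 1/R) * Real.cos θ) < 0 := by
  have hR0 : 0 < R := by linarith
  have hL : 1 < R ^ (2*(N+1)) := one_lt_pow₀ hR (by omega)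
  have hA : 0 < R - 1/R := by
    have : 1 / R < 1 := by rw [div_lt_one hR0]; exact hR
    linarith
  have hB : 0 < R + 1/R := by positivity
  have hμ : 0 < 1/γ - γ := by
    have : 1 < 1/γ := by rw [lt_div_iff₀ hγ]; linarith
    linarith
  have hn : (0:ℝ) < 2 * ((N:ℝ)+1) := by positivity
  set g : ℝ → ℝ := fun θ => (R + 1/R) * Real.sin θ * (R ^ (2*(N+1)) * Real.cos (2 * (N+1) * θ) - 1)
        - (R - 1/R) * R ^ (2*(N+1)) * Real.cos θ * Real.sin (2 * (N+1) * θ) with hg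
  have hgc : Continuous g := by rw [hg]; fun_prop
  have hga : ∀ l, 0 < l → l < 2 * (N+1) → 0 < (-1) ^ l * g (ang N l) := by
    intro l h0 h1
    have hs := Real.sin_pos_of_pos_of_lt_pi (ang_pos N l h0) (ang_lt_pi N l h1)
    simp only [hg]
    rw [ang_mul, Real.sin_nat_mul_pi, Real.cos_nat_mul_pi, mul_zero, sub_zero]
    have hBs : 0 < (R + 1/R) * Real.sin (ang N l) := by positivity
    rcases sig_cases l with h | h <;> rw [h]
    · have : 0 < R ^ (2*(N+1)) * 1 - 1 := by linarith
      have := mul_pos hBs this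
      linarith
    · have : 0 < 1 + R ^ (2*(N+1)) := by linarith
      have := mul_pos hBs this
      linarith
  have hab : ang N k ≤ ang N (k+1) := ang_mono N (by omega)
  obtain ⟨θ, ⟨t1, t2⟩, ht⟩ : ∃ θ ∈ Set.Ioo (ang N k) (ang N (k+1)), (-1) ^ k * g θ = 0 := by
    have hc : ContinuousOn (fun θ => (-1) ^ k * g θ) (Set.Icc (ang N k) (ang N (k+1))) := by fun_prop
    have := intermediate_value_Ioo' hab hc
    have hmem : (0:ℝ) ∈ Set.Ioo ((-1) ^ k * g (ang N (k+1))) ((-1) ^ k * g (ang N k)) := by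
      refine ⟨?_, hga k hk (by omega)⟩
      have := hga (k+1) (by omega) (by omega)
      rw [pow_succ] at this
      linarith
    obtain ⟨θ, h1, h2⟩ := this hmem
    exact ⟨θ, h1, h2⟩
  have hgz : g θ = 0 := by
    rcases mul_eq_zero.1 ht with h | h
    · exact absurd h (pow_ne_zero _ (by norm_num))
    · exact h
  have hθ0 : 0 < θ := (ang_pos N k hk).trans t1
  have hθp : θ < Real.pi := t2.trans (ang_lt_pi N _ (by omega))
  have hs := Real.sin_pos_of_pos_of_lt_pi hθ0 hθp
  have hsφ : 0 < (-1) ^ k * Real.sin (2 * (N+1) * θ) := by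
    rw [← Real.sin_sub_nat_mul_pi]
    refine Real.sin_pos_of_pos_of_lt_pi ?_ ?_
    · rw [← ang_mul N k]
      have := mul_lt_mul_of_pos_left t1 hn
      linarith
    · have h1 := mul_lt_mul_of_pos_left t2 hn
      rw [ang_mul N (k+1)] at h1
      push_cast at h1
      linarith
  obtain ⟨D, hD, hrr⟩ := circ N γ R θ hγ hR hR2
  set P := (R - 1/R) * Real.cos θ * (R ^ (2*(N+1)) * Real.cos (2 * (N+1) * θ) - 1)
        + (R + 1/R) * R ^ (2*(N+1)) * Real.sin θ * Real.sin (2 * (N+1) * θ) with hP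
  have hPs : 0 < (-1) ^ k * P := by
    have e : ((R + 1/R) * Real.sin θ) * ((-1) ^ k * P) = R ^ (2*(N+1)) *
        ((R - 1/R) ^ 2 * Real.cos θ ^ 2 + (R + 1/R) ^ 2 * Real.sin θ ^ 2) * ((-1) ^ k * Real.sin (2 * (N+1) * θ)) := by
      simp only [hg] at hgz
      rw [hP]
      linear_combination (-1) ^ k * (R - 1/R) * Real.cos θ * hgz
    have h1 : 0 < ((R + 1/R) * Real.sin θ) * ((-1) ^ k * P) := by rw [e]; positivity
    exact pos_of_mul_pos_right h1 (by positivity)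
  have hre := congrArg Complex.re hrr
  have him := congrArg Complex.im hrr
  rw [rr_re] at hre
  rw [rr_im] at him
  simp only at hre him
  have hgz' : (R + 1/R) * Real.sin θ * (R ^ (2*(N+1)) * Real.cos (2 * (N+1) * θ) - 1)
        - (R - 1/R) * R ^ (2*(N+1)) * Real.cos θ * Real.sin (2 * (N+1) * θ) = 0 := hgz
  rw [hgz', mul_zero, sub_zero] at him
  have hY : 0 < (R - 1/R) * Real.sin θ := by positivity
  set Y := (R - 1/R) * Real.sin θ
  set x := (R + 1/R) * Real.cos θ
  have hSS : SS (eB N (1/γ - γ)) (wB N) x (Y ^ 2) = 1 + γ := by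
    have : Y * (γ - SS (eB N (1/γ - γ)) (wB N) x (Y ^ 2) + 1) = 0 := by linarith
    rcases mul_eq_zero.1 this with h | h <;> linarith
  have hVV := (VV_eq_iff hN γ hγ _ (wB N) (eB_pos N _ hμ) x (Y ^ 2) (by positivity)).2 hSS
  refine ⟨θ, t1, t2, ⟨Y ^ 2, by positivity, hSS⟩, ?_⟩
  have hph : ph γ 0 (eB N (1/γ - γ)) (wB N) x = - ((1/γ - γ) / D * P) := by
    unfold ph
    rw [hVV]
    linarith
  rw [hph]
  have : 0 < (1/γ - γ) / D * ((-1) ^ k * P) := by positivity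
  linarith

lemma gapB (N : ℕ) (hN : 0 < N) (γ : ℝ) (hγ : 0 < γ) (hγ1 : γ < 1) (hreg : 1 + γ < ((N:ℝ) + 1) * (1 - γ))
    (x : ℝ) (hx : x ∉ Oset γ (eB N (1/γ - γ)) (wB N)) (hx0 : ph γ 0 (eB N (1/γ - γ)) (wB N) x = 0) :
    (∀ j, x < wB N j) ∨ (∀ j, wB N j < x) := by
  have hμ : 0 < 1/γ - γ := by
    have : 1 < 1/γ := by rw [lt_div_iff₀ hγ]; linarith
    linarith
  by_contra hc
  push Not at hc
  obtain ⟨⟨j1, h1⟩, j2, h2⟩ := hc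
  have hw : ∀ j, -2 < wB N j ∧ wB N j < 2 := by
    intro j
    have h := an_mem N (N - (j:ℕ)) (by have := j.2; omega) (by omega)
    unfold wB
    have a := Real.cos_lt_cos_of_nonneg_of_le_pi le_rfl h.2.le h.1
    have b := Real.cos_lt_cos_of_nonneg_of_le_pi h.1.le le_rfl h.2
    rw [Real.cos_zero] at a
    rw [Real.cos_pi] at b
    constructor <;> linarith
  obtain ⟨n1, n2⟩ := ph_gap hN γ 0 hγ _ (wB N) (eB_pos N _ hμ) x hx
  rw [n2] at hx0
  set θ := Real.arccos (x/2) with hθ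
  have hb1 : -1 < x / 2 := by linarith [(hw j1).1]
  have hb2 : x / 2 < 1 := by linarith [(hw j2).2]
  have hcos : 2 * Real.cos θ = x := by rw [hθ, Real.cos_arccos hb1.le hb2.le]; ring
  have hθ0 : 0 < θ := Real.arccos_pos.2 hb2
  have hθp : θ < Real.pi := by
    refine lt_of_le_of_ne (Real.arccos_le_pi _) fun h => ?_
    have : Real.cos θ = -1 := by rw [h, Real.cos_pi]
    linarith
  have hs := Real.sin_pos_of_pos_of_lt_pi hθ0 hθp
  have hsn : Real.sin ((N+1) * θ) ≠ 0 := by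
    intro h
    obtain ⟨j, hj⟩ := node_iff N θ hθ0 hθp h
    exact n1 j (by rw [← hj, hcos])
  have hF := cheb_real N (1/γ - γ) θ hsn
  have hS := SS_real N (1/γ - γ) θ hsn (by rw [hcos]; exact n1)
  unfold Ps at hx0
  rw [hcos] at hF hS
  rw [hF, ← hcos] at hx0
  apply hx
  refine mem_O_of_SS0 hN γ hγ _ (wB N) (eB_pos N _ hμ) x n1 ?_
  set C := Real.cos ((N+1) * θ) / Real.sin ((N+1) * θ) with hC
  have hcsc : 1 / Real.sin ((N+1) * θ) ^ 2 = 1 + C ^ 2 := by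
    have := Real.sin_sq_add_cos_sq ((N+1) * θ)
    rw [hC]; field_simp; linarith
  have hS' : 2 * Real.sin θ * SS (eB N (1/γ - γ)) (wB N) x 0 = (1/γ - γ) * (-Real.sin θ
      - Real.cos θ * C + (N+1) * Real.sin θ * (1 + C ^ 2)) := by
    rw [hS, ← hcsc]; ring
  have hz : (1 + γ) * (Real.sin θ * C) = (1 - γ) * Real.cos θ := by
    have e : γ * (1/γ - γ) = (1 - γ) * (1 + γ) := by field_simp; ring
    have e2 : (1 - γ) * ((1 + γ) * (Real.sin θ * C) - (1 - γ) * Real.cos θ) = 0 := by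
      linear_combination (-γ) * hx0 + (Real.cos θ - Real.sin θ * C) * e
    rcases mul_eq_zero.1 e2 with h | h <;> linarith
  have hg : 0 < 1 - γ := by linarith
  have hz2 : Real.cos θ = (1 + γ) * (Real.sin θ * C) / (1 - γ) := by field_simp; linarith
  have hS2 : SS (eB N (1/γ - γ)) (wB N) x 0 = (1/γ - γ) / 2 * (N + C ^ 2 * ((N+1) - (1+γ)/(1-γ))) := by
    have h2s : 2 * Real.sin θ ≠ 0 := by positivity
    apply mul_left_cancel₀ h2s
    rw [hS', hz2]
    field_simp
    ring
  rw [hS2]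
  have k1 : 0 ≤ C ^ 2 * ((N+1) - (1+γ)/(1-γ)) := by
    refine mul_nonneg (sq_nonneg _) ?_
    rw [sub_nonneg, div_le_iff₀ hg]; exact hreg.le
  have k2 : 1 + γ < (1/γ - γ) / 2 * N := by
    have e : 1/γ - γ = (1 - γ) * (1 + γ) / γ := by field_simp; ring
    rw [e]
    have : (1 - γ) * (1 + γ) / γ / 2 * N = (1 + γ) * ((1 - γ) * N / (2 * γ)) := by ring
    rw [this]
    have : 1 < (1 - γ) * N / (2 * γ) := by
      rw [lt_div_iff₀ (by positivity)]; linarith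
    nlinarith
  have k3 : (1/γ - γ) / 2 * N ≤ (1/γ - γ) / 2 * (N + C ^ 2 * ((N+1) - (1+γ)/(1-γ))) := by
    gcongr; linarith
  linarith
end

section
open Filter Topology

lemma mem_O_closer {N : ℕ} (γ : ℝ) (hγ : 0 < γ) (ε w : Fin N → ℝ) (hε : ∀ j, 0 < ε j) (x X : ℝ)
    (hx : x ∉ Oset γ ε w) (hX : X ∈ Oset γ ε w) (h : ∀ j, (x - w j) ^ 2 ≤ (X - w j) ^ 2) : False := by
  obtain ⟨h1, h2⟩ := VV_of_mem γ ε w X hX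
  have h3 := SS_lt_of_not_mem γ hγ ε w hε x hx _ h1
  have h4 : SS ε w X (VV γ ε w X) ≤ SS ε w x (VV γ ε w X) := by
    unfold SS
    refine Finset.sum_le_sum fun j _ => ?_
    have := sq_nonneg (x - w j)
    exact div_le_div_of_nonneg_left (hε j).le (by linarith) (by linarith [h j])
  linarith

theorem regimeB (N : ℕ) (hN : 0 < N) (γ : ℝ) (hγ : 0 < γ) (hγ1 : γ < 1)
    (hreg : 1 + γ < ((N:ℝ) + 1) * (1 - γ)) :
    ∃ (ε : Fin N → ℝ) (z : Fin N → ℂ),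
      (∀ j, 0 < ε j) ∧ Function.Injective z ∧
      (lensSolutions N γ ε z).Finite ∧
      (lensSolutions N γ ε z).ncard = 5 * N - 1 := by
  have hμ : 0 < 1/γ - γ := by
    have : 1 < 1/γ := by rw [lt_div_iff₀ hγ]; linarith
    linarith
  have hs0 : 0 < Real.sqrt γ := Real.sqrt_pos.2 hγ
  have hs2 : Real.sqrt γ ^ 2 = γ := Real.sq_sqrt hγ.le
  have hs1 : Real.sqrt γ < 1 := by nlinarith
  obtain ⟨R, hR, hR2⟩ : ∃ R : ℝ, 1 < R ∧ γ * R ^ 2 = 1 := by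
    refine ⟨(Real.sqrt γ)⁻¹, (one_lt_inv₀ hs0).2 hs1, ?_⟩
    rw [inv_pow, hs2]; exact mul_inv_cancel₀ hγ.ne'
  have hB : 0 < R + 1/R := by positivity
  have hc := circ_pt N hN γ R hγ hγ1 hR hR2
  have hc' : ∀ k, ∃ θ, 0 < k → k ≤ 2 * N → ang N k < θ ∧ θ < ang N (k+1) ∧
      (R + 1/R) * Real.cos θ ∈ Oset γ (eB N (1/γ - γ)) (wB N) ∧
      (-1) ^ k * ph γ 0 (eB N (1/γ - γ)) (wB N) ((R + 1/R) * Real.cos θ) < 0 := by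
    intro k
    by_cases h : 0 < k ∧ k ≤ 2 * N
    · obtain ⟨θ, hθ⟩ := hc k h.1 h.2
      exact ⟨θ, fun _ _ => hθ⟩
    · exact ⟨0, fun h1 h2 => absurd ⟨h1, h2⟩ h⟩
  choose θ hθ using hc'
  have hε := eB_pos N _ hμ
  have hw := wB_mono N
  have C1 := gapB N hN γ hγ hγ1 hreg
  set xs : ℕ → ℝ := fun i => (R + 1/R) * Real.cos (θ (2 * N - i)) with hxs
  have hlt : ∀ k l, k < l → l ≤ 2 * N - 1 → xs k < xs l := by
    intro k l hkl hl
    obtain ⟨a1, a2, -, -⟩ := hθ (2 * N - k) (by omega) (by omega)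
    obtain ⟨b1, b2, -, -⟩ := hθ (2 * N - l) (by omega) (by omega)
    have c1 := ang_mono N (show 2 * N - l + 1 ≤ 2 * N - k by omega)
    have c2 := ang_pos N (2 * N - l) (by omega)
    have c3 := ang_lt_pi N (2 * N - k + 1) (by omega)
    have := Real.cos_lt_cos_of_nonneg_of_le_pi (x := θ (2 * N - l)) (y := θ (2 * N - k))
      (by linarith) (by linarith) (by linarith)
    exact mul_lt_mul_of_pos_left this hB
  refine final_count hN γ 0 hγ hγ1 _ _ hε hw ?_
  refine upper_count hN γ 0 hγ hγ1 _ _ hε hw C1 xs hlt ?_ ?_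
  · intro k hk
    have a := (hθ (2 * N - k) (by omega) (by omega)).2.2.2
    have b := (hθ (2 * N - (k + 1)) (by omega) (by omega)).2.2.2
    have e : 2 * N - k = (2 * N - (k+1)) + 1 := by omega
    have a' : (-1) ^ (2 * N - k) * ph γ 0 (eB N (1/γ - γ)) (wB N) (xs k) < 0 := a
    have b' : (-1) ^ (2 * N - (k+1)) * ph γ 0 (eB N (1/γ - γ)) (wB N) (xs (k+1)) < 0 := b
    rw [e, pow_succ] at a'
    rcases sig_cases (2 * N - (k+1)) with h | h <;> rw [h] at a' b'
    · exact mul_neg_of_pos_of_neg (by linarith) (by linarith)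
    · exact mul_neg_of_neg_of_pos (by linarith) (by linarith)
  · intro x hx hx0
    by_contra hcon
    push Not at hcon
    obtain ⟨h1, h2⟩ := hcon
    rcases C1 x hx hx0 with h | h
    · refine mem_O_closer γ hγ _ _ hε x (xs 0) hx (hθ (2 * N - 0) (by omega) (by omega)).2.2.1 fun j => ?_
      have := h j
      nlinarith
    · refine mem_O_closer γ hγ _ _ hε x (xs (2 * N - 1)) hx
        (hθ (2 * N - (2 * N - 1)) (by omega) (by omega)).2.2.1 fun j => ?_
      have := h j
      nlinarith
end

/-- Gravitational lensing with shear: For every even `N ≥ 2` and every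
shear `γ` with `(2 − √2)/(2 + √2) < γ < 1`, there are positive masses `ε_j` and distinct
positions `z_j` such that the lensing equation has exactly `5N − 1` solutions. -/
theorem stmt_15 (N : ℕ) (hN : 2 ≤ N) (hEven : Even N) (γ : ℝ)
    (hγ0 : (2 - Real.sqrt 2) / (2 + Real.sqrt 2) < γ) (hγ1 : γ < 1) :
    ∃ (ε : Fin N → ℝ) (z : Fin N → ℂ),
      (∀ j, 0 < ε j) ∧ Function.Injective z ∧
      (lensSolutions N γ ε z).Finite ∧
      (lensSolutions N γ ε z).ncard = 5 * N - 1 := by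
  have hs : Real.sqrt 2 < 2 := by
    rw [Real.sqrt_lt' (by norm_num)]; norm_num
  have hs0 : 0 ≤ Real.sqrt 2 := Real.sqrt_nonneg 2
  have hγ : 0 < γ := lt_trans (div_pos (by linarith) (by linarith)) hγ0
  by_cases hreg : ((N:ℝ) + 1) * (1 - γ) < 2
  · obtain ⟨M, rfl⟩ : ∃ M, N = M + 1 := ⟨N - 1, by omega⟩
    refine regimeA M (by omega) γ hγ hγ1 ?_
    push_cast at hreg
    linarith
  · push Not at hreg
    exact regimeB N (by omega) γ hγ hγ1 (by linarith)
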